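/- arXiv:2204.07006 — 5 statements merged into one kernel-verified Lean document; each statement's English description precedes it below -/
import Mathlib

section
/- Let A be a ring, M an A-module, and x = (x_1,...,x_n), u = (u_1,...,u_n) two sequences generating ideals J_x ⊆ J_u. If x is M-independent, then u is M-independent. -/
open TensorProduct

theorem mem_J_iff {A : Type} [CommRing A] {N : Type} [AddCommGroup N] [Module A N]
    {n : ℕ} (x : Fin n → A) (z : N) :
    z ∈ Ideal.span (Set.range x) • (⊤ : Submodule A N) ↔ ∃ w : Fin n → N, z = ∑ i, x i • w i := by
  constructor
  · intro h
    refine Submodule.smul_induction_on h ?_ ?_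
    · intro r hr m _
      obtain ⟨c, rfl⟩ := Ideal.mem_span_range_iff_exists_fun.1 hr
      refine ⟨fun i => c i • m, ?_⟩
      rw [Finset.sum_smul]
      refine Finset.sum_congr rfl fun i _ => ?_
      rw [smul_smul, mul_comm]
    · rintro _ _ ⟨w, rfl⟩ ⟨w', rfl⟩
      exact ⟨w + w', by simp [Finset.sum_add_distrib]⟩
  · rintro ⟨w, rfl⟩
    exact Submodule.sum_mem _ fun i _ =>
      Submodule.smul_mem_smul (Ideal.subset_span ⟨i, rfl⟩) trivial

theorem indep_tensor {A : Type} [CommRing A] {M : Type} [AddCommGroup M] [Module A M]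
    {E : Type} [AddCommGroup E] [Module A E] {κ : Type} (b : Module.Basis κ A E)
    {n : ℕ} (x : Fin n → A)
    (hind : ∀ m : Fin n → M, (∑ i, x i • m i) = 0 →
      ∀ i, m i ∈ Ideal.span (Set.range x) • (⊤ : Submodule A M))
    (z : Fin n → E ⊗[A] M) (hz : (∑ i, x i • z i) = 0) (i : Fin n) :
    z i ∈ Ideal.span (Set.range x) • (⊤ : Submodule A (E ⊗[A] M)) := by
  classical
  let e := TensorProduct.equivFinsuppOfBasisLeft (N := M) b
  have h1 : ∀ s, e (z i) s ∈ Ideal.span (Set.range x) • (⊤ : Submodule A M) := by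
    intro s
    refine hind (fun i => e (z i) s) ?_ i
    have := congrArg (fun t => e t s) hz
    simpa [map_sum, Finsupp.finsetSum_apply] using this
  rw [← e.symm_apply_apply (z i)]
  change (TensorProduct.equivFinsuppOfBasisLeft (N := M) b).symm _ ∈ _
  rw [TensorProduct.equivFinsuppOfBasisLeft_symm_apply]
  refine Submodule.sum_mem _ fun s _ => ?_
  obtain ⟨w, hw⟩ := (mem_J_iff x _).1 (h1 s)
  refine (mem_J_iff x _).2 ⟨fun i => b s ⊗ₜ w i, ?_⟩
  simp only [hw, TensorProduct.tmul_sum, TensorProduct.tmul_smul]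

section
variable {A : Type} [CommRing A] {n : ℕ}

/-- The Koszul differential. -/
noncomputable def kosz (u : Fin n → A) :
    ExteriorAlgebra A (Fin n → A) →ₗ[A] ExteriorAlgebra A (Fin n → A) :=
  CliffordAlgebra.contractLeft (Q := (0 : QuadraticForm A (Fin n → A)))
    (Fintype.linearCombination A u)

theorem kosz_mul (u a : Fin n → A) (b : ExteriorAlgebra A (Fin n → A)) :
    kosz u (ExteriorAlgebra.ι A a * b) =
      (∑ k, a k * u k) • b - ExteriorAlgebra.ι A a * kosz u b := by
  have := CliffordAlgebra.contractLeft_ι_mul (Q := (0 : QuadraticForm A (Fin n → A)))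
    (d := Fintype.linearCombination A u) a b
  simp only [Fintype.linearCombination_apply, smul_eq_mul] at this
  exact this

theorem kosz_kosz (u : Fin n → A) (b : ExteriorAlgebra A (Fin n → A)) :
    kosz u (kosz u b) = 0 :=
  CliffordAlgebra.contractLeft_contractLeft _ _

theorem kosz_one (u : Fin n → A) : kosz u 1 = 0 :=
  CliffordAlgebra.contractLeft_one _ _

theorem aug_kosz (u : Fin n → A) (b : ExteriorAlgebra A (Fin n → A)) :
    ExteriorAlgebra.algebraMapInv (kosz u b) ∈ Ideal.span (Set.range u) := by
  refine CliffordAlgebra.left_induction (Q := (0 : QuadraticForm A (Fin n → A)))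
    (P := fun b => ExteriorAlgebra.algebraMapInv (kosz u b) ∈ Ideal.span (Set.range u))
    ?_ ?_ ?_ b
  · intro r
    have : kosz u (algebraMap A _ r) = 0 := CliffordAlgebra.contractLeft_algebraMap _ _ _
    erw [this]
    simp
  · intro p q hp hq
    rw [map_add, map_add]
    exact add_mem hp hq
  · intro p a _
    have h := kosz_mul u a p
    change ExteriorAlgebra.algebraMapInv (kosz u (ExteriorAlgebra.ι A a * p)) ∈ _
    rw [h, map_sub, map_mul, map_smul]
    have h0 : ExteriorAlgebra.algebraMapInv (ExteriorAlgebra.ι A a) = 0 := by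
      simp [ExteriorAlgebra.algebraMapInv]
    rw [h0, zero_mul, sub_zero, smul_eq_mul]
    refine Ideal.mul_mem_right _ _ (Ideal.sum_mem _ fun k _ => ?_)
    exact Ideal.mul_mem_left _ _ (Ideal.subset_span ⟨k, rfl⟩)

/-- product of the images of basis vectors -/
noncomputable def yl (T : Fin n → Fin n → A) (l : List (Fin n)) :
    ExteriorAlgebra A (Fin n → A) :=
  (l.map fun i => ExteriorAlgebra.ι A (T i)).prod

theorem kosz_yl (x u : Fin n → A) (T : Fin n → Fin n → A) (hT : ∀ i, ∑ k, T i k * u k = x i)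
    (i : Fin n) (l : List (Fin n)) (hl : i ∉ l) :
    ∃ c : Fin n → ExteriorAlgebra A (Fin n → A), c i = 0 ∧
      kosz u (yl T l) = ∑ j, x j • c j := by
  classical
  induction l with
  | nil => exact ⟨0, rfl, by simp [yl, kosz_one]⟩
  | cons k l ih =>
    simp only [List.mem_cons, not_or] at hl
    obtain ⟨c, hc, h⟩ := ih hl.2
    refine ⟨fun j => (Pi.single k (yl T l) : Fin n → ExteriorAlgebra A (Fin n → A)) j
      - ExteriorAlgebra.ι A (T k) * c j, ?_, ?_⟩
    · simp [hc, Pi.single_eq_of_ne hl.1]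
    · have : yl T (k :: l) = ExteriorAlgebra.ι A (T k) * yl T l := by simp [yl]
      rw [this, kosz_mul, hT, h]
      simp only [smul_sub, Finset.sum_sub_distrib, Finset.mul_sum, mul_smul_comm]
      congr 1
      rw [Finset.sum_eq_single k]
      · simp
      · intro j _ hj
        simp [Pi.single_eq_of_ne hj]
      · simp

theorem yl_finRange (T : Fin n → Fin n → A) :
    ∃ e, yl T (List.finRange n) = (Matrix.of T).det • e := by
  refine ⟨ExteriorAlgebra.ιMulti A n (Pi.basisFun A (Fin n)), ?_⟩
  have h : yl T (List.finRange n) = ExteriorAlgebra.ιMulti A n T := by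
    rw [ExteriorAlgebra.ιMulti_apply, List.ofFn_eq_map]
    rfl
  have h2 : ExteriorAlgebra.ιMulti A n (M := Fin n → A) =
      (LinearMap.toSpanSingleton A _
        (ExteriorAlgebra.ιMulti A n (Pi.basisFun A (Fin n)))).compAlternatingMap
        (Pi.basisFun A (Fin n)).det := by
    refine Module.Basis.ext_alternating (Pi.basisFun A (Fin n)) fun v hv => ?_
    obtain ⟨σ, rfl⟩ : ∃ σ : Equiv.Perm (Fin n), v = σ :=
      ⟨Equiv.ofBijective v (Finite.injective_iff_bijective.1 hv), rfl⟩
    have h3 := AlternatingMap.map_perm (ExteriorAlgebra.ιMulti A n (M := Fin n → A))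
      (Pi.basisFun A (Fin n)) σ
    have h4 := AlternatingMap.map_perm (Pi.basisFun A (Fin n)).det
      (Pi.basisFun A (Fin n)) σ
    simp only [Function.comp_def] at h3 h4
    rw [LinearMap.compAlternatingMap_apply, h4, h3, Module.Basis.det_self]
    rw [LinearMap.toSpanSingleton_apply, Units.smul_def, Units.smul_def, smul_assoc, one_smul]
  rw [h, h2, LinearMap.compAlternatingMap_apply, ← h2, LinearMap.toSpanSingleton_apply,
    Pi.basisFun_det]
  rfl

theorem colon_le {M : Type} [AddCommGroup M] [Module A M]
    (x u : Fin n → A) (T : Fin n → Fin n → A) (hT : ∀ i, ∑ k, T i k * u k = x i)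
    (hsub : Ideal.span (Set.range x) ≤ Ideal.span (Set.range u))
    (hind : ∀ m : Fin n → M, (∑ i, x i • m i) = 0 →
      ∀ i, m i ∈ Ideal.span (Set.range x) • (⊤ : Submodule A M))
    (m : M) (hm : (Matrix.of T).det • m ∈ Ideal.span (Set.range x) • (⊤ : Submodule A M)) :
    m ∈ Ideal.span (Set.range u) • (⊤ : Submodule A M) := by
  classical
  let E := ExteriorAlgebra A (Fin n → A)
  let d : E ⊗[A] M →ₗ[A] E ⊗[A] M := (kosz u).rTensor M
  have hdd : ∀ z, d (d z) = 0 := by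
    intro z
    have : (kosz u).rTensor M ∘ₗ (kosz u).rTensor M = 0 := by
      rw [← LinearMap.rTensor_comp]
      have : kosz u ∘ₗ kosz u = 0 := LinearMap.ext (kosz_kosz u)
      rw [this, LinearMap.rTensor_zero]
    exact LinearMap.congr_fun this z
  have step : ∀ l : List (Fin n), l.Nodup →
      (∃ w : Fin n → E ⊗[A] M, ∃ v, (yl T l ⊗ₜ[A] m : E ⊗[A] M) = ∑ j, x j • w j + d v) →
      (∃ w : Fin n → E ⊗[A] M, ∃ v,
        ((1 : E) ⊗ₜ[A] m : E ⊗[A] M) = ∑ j, x j • w j + d v) := by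
    intro l
    induction l with
    | nil => intro _ h; simpa [yl] using h
    | cons i l ih =>
      rintro hl ⟨w, v, h⟩
      obtain ⟨hil, hl⟩ := List.nodup_cons.1 hl
      refine ih hl ?_
      obtain ⟨c, hci, hc⟩ := kosz_yl x u T hT i l hil
      have hy : yl T (i :: l) = ExteriorAlgebra.ι A (T i) * yl T l := by simp [yl]
      have hd := congrArg d h
      have hl' : d (yl T (i :: l) ⊗ₜ[A] m) = x i • (yl T l ⊗ₜ[A] m) -
          ∑ j, x j • ((ExteriorAlgebra.ι A (T i) * c j) ⊗ₜ[A] m) := by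
        change (kosz u (yl T (i :: l))) ⊗ₜ[A] m = _
        rw [hy, kosz_mul, hT, hc]
        simp only [TensorProduct.sub_tmul, Finset.mul_sum, mul_smul_comm,
          TensorProduct.sum_tmul, TensorProduct.smul_tmul']
      rw [hl', map_add, hdd, add_zero, map_sum] at hd
      simp only [map_smul] at hd
      have key := indep_tensor (M := M) ((Pi.basisFun A (Fin n)).ExteriorAlgebra) x hind
        (fun j => (Pi.single i (yl T l ⊗ₜ[A] m) : Fin n → E ⊗[A] M) j
          - (ExteriorAlgebra.ι A (T i) * c j) ⊗ₜ[A] m - d (w j)) (by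
          simp only [smul_sub, Finset.sum_sub_distrib]
          rw [← hd, sub_eq_zero]
          congr 1
          rw [Finset.sum_eq_single i]
          · simp
          · intro j _ hj
            simp [Pi.single_eq_of_ne hj]
          · simp) i
      obtain ⟨w', hw'⟩ := (mem_J_iff x _).1 key
      refine ⟨w', w i, ?_⟩
      rw [← hw']
      simp [hci]
  obtain ⟨e, he⟩ := yl_finRange T
  obtain ⟨w, v, h⟩ := step (List.finRange n) (List.nodup_finRange n) (by
    obtain ⟨p, hp⟩ := (mem_J_iff x _).1 hm
    refine ⟨fun j => e ⊗ₜ p j, 0, ?_⟩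
    rw [he, ← TensorProduct.smul_tmul', ← TensorProduct.tmul_smul, hp, map_zero, add_zero]
    simp only [TensorProduct.tmul_sum, TensorProduct.tmul_smul])
  let ε : E ⊗[A] M →ₗ[A] M := TensorProduct.lid A M ∘ₗ
    (ExteriorAlgebra.algebraMapInv (R := A) (M := Fin n → A)).toLinearMap.rTensor M
  have hε : m = ε ((1 : E) ⊗ₜ[A] m) := by simp [ε]
  rw [hε, h, map_add]
  refine add_mem ?_ ?_
  · refine Submodule.smul_mono_left hsub ((mem_J_iff x _).2 ⟨fun j => ε (w j), ?_⟩)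
    simp
  · clear h
    induction v using TensorProduct.induction_on with
    | zero => simp
    | tmul a b =>
      have : ε (d (a ⊗ₜ b)) = ExteriorAlgebra.algebraMapInv (kosz u a) • b := by simp [ε, d]
      rw [this]
      exact Submodule.smul_mem_smul (aug_kosz u a) trivial
    | add a b ha hb =>
      rw [map_add, map_add]
      exact add_mem ha hb

end

/-- If `x` is `M`-independent and the ideal generated by `x` is contained in the ideal
generated by `u` (sequences of the same length `n`), then `u` is `M`-independent. -/
theorem independent_of_le
    {A : Type} [CommRing A] {M : Type} [AddCommGroup M] [Module A M]
    {n : ℕ} (x u : Fin n → A)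
    (hsub : Ideal.span (Set.range x) ≤ Ideal.span (Set.range u))
    (hind : ∀ m : Fin n → M, (∑ i, x i • m i) = 0 →
      ∀ i, m i ∈ Ideal.span (Set.range x) • (⊤ : Submodule A M)) :
    ∀ m : Fin n → M, (∑ i, u i • m i) = 0 →
      ∀ i, m i ∈ Ideal.span (Set.range u) • (⊤ : Submodule A M) := by
  intro m hm i
  have hx : ∀ i, ∃ c : Fin n → A, ∑ k, c k * u k = x i := fun i =>
    Ideal.mem_span_range_iff_exists_fun.1 (hsub (Ideal.subset_span ⟨i, rfl⟩))
  choose T hT using hx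
  refine colon_le x u T hT hsub hind (m i) ?_
  have hxT : (Matrix.of T).mulVec u = x := funext hT
  have hadj : ∀ k, ∑ j, (Matrix.of T).adjugate k j * x j = (Matrix.of T).det * u k := by
    intro k
    have : (Matrix.of T).adjugate.mulVec x = (Matrix.of T).det • u := by
      rw [← hxT, Matrix.mulVec_mulVec, Matrix.adjugate_mul, Matrix.smul_mulVec, Matrix.one_mulVec]
    exact congrFun this k
  have h1 := hind (fun j => ∑ k, (Matrix.of T).adjugate k j • m k) (by
    simp only [Finset.smul_sum, smul_smul]
    rw [Finset.sum_comm]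
    simp only [← Finset.sum_smul]
    have : ∀ k, ∑ j, x j * (Matrix.of T).adjugate k j = (Matrix.of T).det * u k := by
      intro k
      rw [← hadj k]
      exact Finset.sum_congr rfl fun _ _ => mul_comm _ _
    simp only [this, mul_smul, ← Finset.smul_sum, hm, smul_zero])
  have h2 : (Matrix.of T).det • m i =
      ∑ j, T j i • ∑ k, (Matrix.of T).adjugate k j • m k := by
    simp only [Finset.smul_sum, smul_smul]
    rw [Finset.sum_comm]
    simp only [← Finset.sum_smul]
    have : ∀ k, ∑ j, T j i * (Matrix.of T).adjugate k j =
        if k = i then (Matrix.of T).det else 0 := by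
      intro k
      have := congrFun (congrFun (Matrix.adjugate_mul (Matrix.of T)) k) i
      rw [Matrix.mul_apply] at this
      simp only [Matrix.smul_apply, Matrix.one_apply, smul_eq_mul, mul_ite, mul_one,
        mul_zero] at this
      rw [← this]
      exact Finset.sum_congr rfl fun _ _ => mul_comm _ _
    simp [this]
  rw [h2]
  exact Submodule.sum_mem _ fun j _ => Submodule.smul_mem _ _ (h1 j)
end

section
/- Let A be a ring, M an A-module, x = (x_1,...,x_n) an M-independent sequence, u = (u_1,...,u_n) a sequence, and W an n×n matrix over A with x = uW (as row vectors). Let Δ = det W, J_x = (x_1,...,x_n), J_u = (u_1,...,u_n). Then the set of m ∈ M with J_u·m ⊆ J_x M equals (J_x + (Δ))M, and the set of m ∈ M with Δm ∈ J_x M and J_x m ⊆ J_x M equals J_u M. -/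
open scoped TensorProduct

namespace LinkAux

section gen
variable {A : Type} [CommRing A] {n : ℕ}

/-- The submodule `J_x P` of `P`. -/
abbrev JJ (x : Fin n → A) (P : Type) [AddCommGroup P] [Module A P] : Submodule A P :=
  Ideal.span (Set.range x) • (⊤ : Submodule A P)

lemma smul_mem_JJ (x : Fin n → A) {P : Type} [AddCommGroup P] [Module A P] (i : Fin n) (p : P) :
    x i • p ∈ JJ x P :=
  Submodule.smul_mem_smul (Ideal.subset_span ⟨i, rfl⟩) trivial

lemma map_mem_JJ (x : Fin n → A) {P Q : Type} [AddCommGroup P] [Module A P]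
    [AddCommGroup Q] [Module A Q] (f : P →ₗ[A] Q) {p : P} (hp : p ∈ JJ x P) : f p ∈ JJ x Q :=
  (Submodule.smul_top_le_comap_smul_top _ f) hp

lemma exists_of_mem_JJ (x : Fin n → A) {P : Type} [AddCommGroup P] [Module A P] {p : P}
    (hp : p ∈ JJ x P) : ∃ t : Fin n → P, p = ∑ i, x i • t i := by
  refine Submodule.smul_induction_on hp ?_ ?_
  · intro r hr q _
    obtain ⟨c, hc⟩ := (Submodule.mem_span_range_iff_exists_fun A).1 hr
    refine ⟨fun i => c i • q, ?_⟩
    rw [← hc, Finset.sum_smul]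
    refine Finset.sum_congr rfl fun i _ => ?_
    rw [smul_smul, smul_eq_mul, mul_comm]
  · rintro a b ⟨s, rfl⟩ ⟨t, rfl⟩
    exact ⟨s + t, by simp [Finset.sum_add_distrib]⟩

/-- Independence passes to `F ⊗ M` with `F` free. -/
lemma ind_tensor (x : Fin n → A) {M F κ : Type} [AddCommGroup M] [Module A M]
    [AddCommGroup F] [Module A F] (b : Module.Basis κ A F)
    (hind : ∀ m : Fin n → M, (∑ i, x i • m i) = 0 → ∀ i, m i ∈ JJ x M)
    (t : Fin n → F ⊗[A] M) (ht : ∑ i, x i • t i = 0) (i : Fin n) : t i ∈ JJ x (F ⊗[A] M) := by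
  classical
  let e := TensorProduct.equivFinsuppOfBasisLeft (N := M) b
  have h1 : ∀ k, ∀ i, e (t i) k ∈ JJ x M := by
    intro k
    apply hind
    have := congrArg (fun z => e z k) ht
    simpa [Finsupp.finsetSum_apply] using this
  rw [← e.symm_apply_apply (t i), ← Finsupp.sum_single (e (t i)), Finsupp.sum, map_sum]
  refine Submodule.sum_mem _ fun k _ => ?_
  exact map_mem_JJ x (e.symm.toLinearMap ∘ₗ Finsupp.lsingle k) (h1 k i)

abbrev E (A : Type) [CommRing A] (n : ℕ) := ExteriorAlgebra A (Fin n → A)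

noncomputable def ctr (d : Module.Dual A (Fin n → A)) : E A n →ₗ[A] E A n :=
  CliffordAlgebra.contractLeft d

lemma ctr_ι_mul (d : Module.Dual A (Fin n → A)) (a : Fin n → A) (b : E A n) :
    ctr d (ExteriorAlgebra.ι A a * b) = d a • b - ExteriorAlgebra.ι A a * ctr d b :=
  CliffordAlgebra.contractLeft_ι_mul d a b

lemma ctr_one (d : Module.Dual A (Fin n → A)) : ctr d (1 : E A n) = 0 :=
  CliffordAlgebra.contractLeft_one _ d

lemma ctr_algebraMap (d : Module.Dual A (Fin n → A)) (r : A) :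
    ctr d (algebraMap A (E A n) r) = 0 :=
  CliffordAlgebra.contractLeft_algebraMap _ d r

lemma ctr_ctr (d : Module.Dual A (Fin n → A)) (y : E A n) : ctr d (ctr d y) = 0 :=
  CliffordAlgebra.contractLeft_contractLeft d y

lemma ctr_map (d : Module.Dual A (Fin n → A)) (f : (Fin n → A) →ₗ[A] (Fin n → A)) (y : E A n) :
    ctr d (ExteriorAlgebra.map f y) = ExteriorAlgebra.map f (ctr (d ∘ₗ f) y) := by
  induction y using CliffordAlgebra.left_induction with
  | algebraMap r =>
    have := ctr_algebraMap (d ∘ₗ f) r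
    have h2 := ctr_algebraMap d r
    have h3 := (ExteriorAlgebra.map f).commutes r
    exact (congrArg (ctr d) h3).trans (h2.trans ((congrArg (ExteriorAlgebra.map f) this).trans
      (map_zero _)).symm)
  | add a b ha hb => simp only [map_add, ha, hb]
  | ι_mul a v h =>
    change ctr d (ExteriorAlgebra.map f (ExteriorAlgebra.ι A v * a)) =
      ExteriorAlgebra.map f (ctr (d ∘ₗ f) (ExteriorAlgebra.ι A v * a))
    rw [ctr_ι_mul, map_mul, ExteriorAlgebra.map_apply_ι, ctr_ι_mul, h, map_sub, map_smul, map_mul,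
      ExteriorAlgebra.map_apply_ι]
    rfl

/-- product of basis vectors along a list -/
noncomputable def eL (L : List (Fin n)) : E A n :=
  (L.map fun i => ExteriorAlgebra.ι A (Pi.single i (1 : A))).prod

lemma eL_nil : (eL [] : E A n) = 1 := by simp [eL]

lemma eL_cons (s : Fin n) (L : List (Fin n)) :
    (eL (s :: L) : E A n) = ExteriorAlgebra.ι A (Pi.single s (1 : A)) * eL L := by simp [eL]

lemma eL_finRange : (eL (List.finRange n) : E A n) =
    ExteriorAlgebra.ιMulti A n (fun i => Pi.single i (1 : A)) := by
  rw [ExteriorAlgebra.ιMulti_apply, eL, List.ofFn_eq_map]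

lemma ctr_proj_eL (s : Fin n) (L : List (Fin n)) (h : s ∉ L) :
    ctr (LinearMap.proj s) (eL L : E A n) = 0 := by
  induction L with
  | nil => rw [eL_nil, ctr_one]
  | cons a L ih =>
    simp only [List.mem_cons, not_or] at h
    rw [eL_cons, ctr_ι_mul, ih h.2]
    simp [h.1]

/-- The functional given by a vector. -/
noncomputable def fn (x : Fin n → A) : Module.Dual A (Fin n → A) := ∑ i, x i • LinearMap.proj i

lemma ctr_fn (x : Fin n → A) (y : E A n) :
    ctr (fn x) y = ∑ i, x i • ctr (LinearMap.proj i) y := by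
  simp [ctr, fn, map_sum]

lemma fn_comp (x u : Fin n → A) (W : Matrix (Fin n) (Fin n) A)
    (hW : ∀ i, x i = ∑ j, u j * W j i) : fn u ∘ₗ W.mulVecLin = fn x := by
  refine LinearMap.pi_ext' fun i => LinearMap.ext_ring ?_
  simp [fn, hW, Pi.single_apply, Matrix.mulVec_single]

lemma alt_mulVec {P : Type} [AddCommGroup P] [Module A P] (W : Matrix (Fin n) (Fin n) A)
    (g : (Fin n → A) [⋀^Fin n]→ₗ[A] P) (v : Fin n → Fin n → A) :
    g (fun i => W.mulVec (v i)) = W.det • g v := by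
  have key : ∀ v : Fin n → Fin n → A,
      g v = (Matrix.of v).det • g (fun i => Pi.single i (1 : A)) := by
    intro v
    let g2 : (Fin n → A) [⋀^Fin n]→ₗ[A] P :=
      (LinearMap.toSpanSingleton A P (g (fun i => Pi.single i (1 : A)))).compAlternatingMap
        Matrix.detRowAlternating
    have : g = g2 := by
      refine Module.Basis.ext_alternating (Pi.basisFun A (Fin n)) fun w hw => ?_
      obtain ⟨σ, rfl⟩ : ∃ σ : Equiv.Perm (Fin n), w = σ :=
        ⟨Equiv.ofBijective w (Finite.injective_iff_bijective.1 hw), rfl⟩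
      have h1 : ∀ h : (Fin n → A) [⋀^Fin n]→ₗ[A] P, h (fun i => (Pi.basisFun A (Fin n)) (σ i)) =
          Equiv.Perm.sign σ • h (fun i => Pi.single i (1 : A)) := by
        intro h
        rw [← AlternatingMap.map_perm]
        simp [Function.comp_def]
      rw [h1, h1]
      congr 1
      have : (Matrix.detRowAlternating (fun i : Fin n => (Pi.single i (1 : A) : Fin n → A))) = 1 := by
        have h := Matrix.det_one (n := Fin n) (R := A)
        rw [← h]
        change Matrix.det _ = _
        congr 1
        ext i j
        simp [Matrix.one_apply, Pi.single_apply, eq_comm]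
      simp [g2, this]
    conv_lhs => rw [this]
    rfl
  rw [key, key v, smul_smul]
  congr 1
  have : (Matrix.of fun i => W.mulVec (v i)) = Matrix.of v * W.transpose := by
    ext i j
    simp [Matrix.mul_apply, Matrix.mulVec, dotProduct, mul_comm]
  rw [this, Matrix.det_mul, Matrix.det_transpose, mul_comm]

lemma map_eL_finRange (W : Matrix (Fin n) (Fin n) A) :
    ExteriorAlgebra.map W.mulVecLin (eL (List.finRange n) : E A n) =
      W.det • eL (List.finRange n) := by
  rw [eL_finRange, ExteriorAlgebra.map_apply_ιMulti]
  exact alt_mulVec W (ExteriorAlgebra.ιMulti A n) _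

/-- Top coefficient. -/
noncomputable def topc : E A n →ₗ[A] A :=
  ExteriorAlgebra.liftAlternating fun i =>
    if h : i = n then (Matrix.detRowAlternating (n := Fin n) (R := A)).domDomCongr (finCongr h.symm)
      else 0

lemma topc_map (W : Matrix (Fin n) (Fin n) A) (y : E A n) :
    topc (ExteriorAlgebra.map W.mulVecLin y) = W.det • topc y := by
  have : topc ∘ₗ (ExteriorAlgebra.map W.mulVecLin).toLinearMap = W.det • (topc : E A n →ₗ[A] A) := by
    refine ExteriorAlgebra.lhom_ext fun i => ?_
    ext v
    simp only [LinearMap.compAlternatingMap_apply, LinearMap.comp_apply, AlgHom.toLinearMap_apply,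
      ExteriorAlgebra.map_apply_ιMulti, LinearMap.smul_apply, topc,
      ExteriorAlgebra.liftAlternating_apply_ιMulti]
    split_ifs with h
    · subst h
      exact alt_mulVec W _ v
    · simp
  exact LinearMap.congr_fun this y

lemma topc_eL : topc (eL (List.finRange n) : E A n) = 1 := by
  rw [eL_finRange, topc, ExteriorAlgebra.liftAlternating_apply_ιMulti, dif_pos rfl]
  have h := Matrix.det_one (n := Fin n) (R := A)
  rw [← h]
  change Matrix.det _ = _
  congr 1
  ext i j
  simp [Matrix.one_apply, Pi.single_apply, eq_comm]

variable {M : Type} [AddCommGroup M] [Module A M]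

lemma ind_E (x : Fin n → A)
    (hind : ∀ m : Fin n → M, (∑ i, x i • m i) = 0 → ∀ i, m i ∈ JJ x M)
    (t : Fin n → E A n ⊗[A] M) (ht : ∑ i, x i • t i = 0) (i : Fin n) :
    t i ∈ JJ x (E A n ⊗[A] M) :=
  ind_tensor x (Module.Basis.ExteriorAlgebra (Pi.basisFun A (Fin n))) hind t ht i

/-- Extension of operators. -/
noncomputable abbrev ex (M : Type) [AddCommGroup M] [Module A M] (f : E A n →ₗ[A] E A n) :
    E A n ⊗[A] M →ₗ[A] E A n ⊗[A] M := f.rTensor M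

lemma ex_ex_congr {f g f' g' : E A n →ₗ[A] E A n} (h : ∀ y, f (g y) = f' (g' y))
    (t : E A n ⊗[A] M) : ex M f (ex M g t) = ex M f' (ex M g' t) := by
  have : f ∘ₗ g = f' ∘ₗ g' := LinearMap.ext h
  rw [ex, ex, ← LinearMap.rTensor_comp_apply, this, LinearMap.rTensor_comp_apply]

lemma ex_ex_zero {f g : E A n →ₗ[A] E A n} (h : ∀ y, f (g y) = 0)
    (t : E A n ⊗[A] M) : ex M f (ex M g t) = 0 := by
  have : f ∘ₗ g = 0 := LinearMap.ext h
  rw [ex, ex, ← LinearMap.rTensor_comp_apply, this, LinearMap.rTensor_zero, LinearMap.zero_apply]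

/-- Left multiplication by a vector. -/
noncomputable def wd (v : Fin n → A) : E A n →ₗ[A] E A n :=
  LinearMap.mulLeft A (ExteriorAlgebra.ι A v)

lemma wd_eq_sum (v : Fin n → A) : wd v = ∑ i, v i • wd (Pi.single i (1 : A)) := by
  have : v = ∑ i, v i • Pi.single i (1 : A) := by
    ext j; simp [Finset.sum_apply, Pi.single_apply]
  refine LinearMap.ext fun y => ?_
  conv_lhs => rw [this]
  simp [wd, map_sum, Finset.sum_mul]

lemma ex_sum_smul (v : Fin n → A) (f : Fin n → E A n →ₗ[A] E A n) (t : E A n ⊗[A] M) :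
    ex M (∑ i, v i • f i) t = ∑ i, v i • ex M (f i) t := by
  change LinearMap.rTensorHom M (∑ i, v i • f i) t = _
  rw [map_sum, LinearMap.sum_apply]
  refine Finset.sum_congr rfl fun i _ => ?_
  rw [map_smul]
  rfl

lemma ex_wd_eq_sum (v : Fin n → A) (t : E A n ⊗[A] M) :
    ex M (wd v) t = ∑ i, v i • ex M (wd (Pi.single i (1 : A))) t := by
  rw [wd_eq_sum, ex_sum_smul]

lemma ex_ctr_fn (v : Fin n → A) (t : E A n ⊗[A] M) :
    ex M (ctr (fn v)) t = ∑ i, v i • ex M (ctr (LinearMap.proj i)) t := by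
  rw [← ex_sum_smul]
  congr 2
  refine LinearMap.ext fun y => ?_
  rw [ctr_fn]
  simp

lemma JJ_le (x u : Fin n → A) (W : Matrix (Fin n) (Fin n) A)
    (hW : ∀ i, x i = ∑ j, u j * W j i) :
    Ideal.span (Set.range x) ≤ Ideal.span (Set.range u) := by
  rw [Ideal.span_le]
  rintro _ ⟨i, rfl⟩
  rw [hW]
  exact Ideal.sum_mem _ fun j _ => Ideal.mul_mem_right _ _ (Ideal.subset_span ⟨j, rfl⟩)

lemma mul_det_mem (x u : Fin n → A) (W : Matrix (Fin n) (Fin n) A)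
    (hW : ∀ i, x i = ∑ j, u j * W j i) (a : A) (ha : a ∈ Ideal.span (Set.range u)) :
    a * W.det ∈ Ideal.span (Set.range x) := by
  have hx : x = Matrix.vecMul u W := by
    ext i; rw [hW]; rfl
  have h : ∀ j, u j * W.det ∈ Ideal.span (Set.range x) := by
    intro j
    have h1 : Matrix.vecMul x W.adjugate = W.det • u := by
      rw [hx, Matrix.vecMul_vecMul, Matrix.mul_adjugate, Matrix.vecMul_smul, Matrix.vecMul_one]
    have h2 := congrFun h1 j
    rw [Pi.smul_apply, smul_eq_mul, mul_comm] at h2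
    rw [← h2]
    change ∑ i, x i * W.adjugate i j ∈ _
    exact Ideal.sum_mem _ fun i _ => Ideal.mul_mem_right _ _ (Ideal.subset_span ⟨i, rfl⟩)
  have : Ideal.span (Set.range u) ≤
      Submodule.comap (LinearMap.mulRight A W.det) (Ideal.span (Set.range x)) := by
    refine Submodule.span_le.2 ?_
    rintro _ ⟨j, rfl⟩
    exact h j
  exact this ha

lemma colon_two (x u : Fin n → A) (W : Matrix (Fin n) (Fin n) A)
    (hW : ∀ i, x i = ∑ j, u j * W j i)
    (hind : ∀ m : Fin n → M, (∑ i, x i • m i) = 0 → ∀ i, m i ∈ JJ x M)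
    (m : M) (hm : W.det • m ∈ JJ x M) : m ∈ JJ u M := by
  set Λ := (ExteriorAlgebra.map W.mulVecLin).toLinearMap with hΛ
  have step : ∀ L : List (Fin n), L.Nodup →
      (∃ ω : E A n ⊗[A] M, Λ (eL L) ⊗ₜ[A] m - ex M (ctr (fn u)) ω ∈ JJ x (E A n ⊗[A] M)) →
      (∃ ω : E A n ⊗[A] M, (1 : E A n) ⊗ₜ[A] m - ex M (ctr (fn u)) ω ∈ JJ x (E A n ⊗[A] M)) := by
    intro L
    induction L with
    | nil =>
      intro _ h
      simpa [eL_nil, hΛ] using h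
    | cons s L ih =>
      rintro hnd ⟨ω, hω⟩
      rw [List.nodup_cons] at hnd
      refine ih hnd.2 ?_
      obtain ⟨θ, hθ⟩ := exists_of_mem_JJ x hω
      refine ⟨θ s, ?_⟩
      have h1 := congrArg (ex M (ctr (fn u))) hθ
      rw [map_sub, ex_ex_zero (ctr_ctr (fn u)), sub_zero, map_sum, LinearMap.rTensor_tmul,
        hΛ, AlgHom.toLinearMap_apply, ctr_map, fn_comp x u W hW, ctr_fn, map_sum,
        TensorProduct.sum_tmul] at h1
      have h2 := ind_E x hind (fun i => Λ (ctr (LinearMap.proj i) (eL (s :: L))) ⊗ₜ[A] m -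
        ex M (ctr (fn u)) (θ i)) (by
          simp only [smul_sub, Finset.sum_sub_distrib]
          rw [sub_eq_zero]
          refine Eq.trans (Finset.sum_congr rfl fun i _ => ?_)
            (h1.trans (Finset.sum_congr rfl fun i _ => ?_))
          · rw [map_smul, TensorProduct.smul_tmul']
            rfl
          · rw [map_smul]) s
      have h3 : ctr (LinearMap.proj s) (eL (s :: L) : E A n) = eL L := by
        rw [eL_cons, ctr_ι_mul, ctr_proj_eL s L hnd.1]
        simp
      simpa only [h3] using h2
  obtain ⟨ω, hω⟩ := step (List.finRange n) (List.nodup_finRange n) ⟨0, by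
    rw [map_zero, sub_zero, hΛ, AlgHom.toLinearMap_apply, map_eL_finRange, TensorProduct.smul_tmul]
    exact map_mem_JJ x (TensorProduct.mk A (E A n) M (eL (List.finRange n))) hm⟩
  have h4 : (1 : E A n) ⊗ₜ[A] m ∈ JJ u (E A n ⊗[A] M) := by
    rw [← sub_add_cancel ((1 : E A n) ⊗ₜ[A] m) (ex M (ctr (fn u)) ω)]
    refine Submodule.add_mem _ (Submodule.smul_mono_left (JJ_le x u W hW) hω) ?_
    rw [ex_ctr_fn]
    exact Submodule.sum_mem _ fun i _ => smul_mem_JJ u i _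
  have h5 := map_mem_JJ u ((TensorProduct.lid A M).toLinearMap ∘ₗ
    (ExteriorAlgebra.algebraMapInv (R := A) (M := Fin n → A)).toLinearMap.rTensor M) h4
  simpa using h5

lemma colon_one (x u : Fin n → A) (W : Matrix (Fin n) (Fin n) A)
    (hW : ∀ i, x i = ∑ j, u j * W j i)
    (hind : ∀ m : Fin n → M, (∑ i, x i • m i) = 0 → ∀ i, m i ∈ JJ x M)
    (m : M) (hm : ∀ j, u j • m ∈ JJ x M) : ∃ m' : M, m - W.det • m' ∈ JJ x M := by
  set Λ := (ExteriorAlgebra.map W.transpose.mulVecLin).toLinearMap with hΛ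
  have hx : W.transpose.mulVecLin u = x := by
    ext i; rw [hW]; simp [Matrix.vecMul, dotProduct]
  have hΛw : ∀ y, Λ (wd u y) = wd x (Λ y) := by
    intro y
    simp [hΛ, wd, ← hx]
  have hww : ∀ y, wd u (wd u y) = 0 := by
    intro y
    simp [wd, ← mul_assoc]
  have step : ∀ L : List (Fin n), ∃ t : E A n ⊗[A] M, ex M (wd u) t ∈ JJ x (E A n ⊗[A] M) ∧
      eL L ⊗ₜ[A] m - ex M Λ t ∈ JJ x (E A n ⊗[A] M) := by
    intro L
    induction L with
    | nil =>
      refine ⟨(1 : E A n) ⊗ₜ[A] m, ?_, ?_⟩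
      · rw [ex_wd_eq_sum]
        refine Submodule.sum_mem _ fun j _ => ?_
        rw [← map_smul, ← TensorProduct.tmul_smul, LinearMap.rTensor_tmul]
        exact map_mem_JJ x (TensorProduct.mk A (E A n) M _) (hm j)
      · simp [eL_nil, hΛ]
    | cons s L ih =>
      obtain ⟨t, ht1, ht2⟩ := ih
      obtain ⟨θ, hθ⟩ := exists_of_mem_JJ x ht1
      refine ⟨θ s, ?_, ?_⟩
      · refine ind_E x hind (fun i => ex M (wd u) (θ i)) ?_ s
        have h1 := congrArg (ex M (wd u)) hθ
        rw [ex_ex_zero hww, map_sum] at h1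
        simpa only [map_smul] using h1.symm
      · have h1 := congrArg (ex M Λ) hθ
        rw [ex_ex_congr hΛw, ex_wd_eq_sum, map_sum] at h1
        have h2 := ind_E x hind (fun i => ex M (wd (Pi.single i (1 : A))) (ex M Λ t) -
          ex M Λ (θ i)) (by
            simp only [smul_sub, Finset.sum_sub_distrib]
            rw [sub_eq_zero, h1]
            simp only [map_smul]) s
        have h3 := map_mem_JJ x (ex M (wd (Pi.single s (1 : A)))) ht2
        have h4 := Submodule.add_mem _ h3 h2
        rw [map_sub, sub_add_sub_cancel, LinearMap.rTensor_tmul] at h4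
        rw [eL_cons]
        exact h4
  obtain ⟨t, -, ht⟩ := step (List.finRange n)
  let τ : E A n ⊗[A] M →ₗ[A] M := (TensorProduct.lid A M).toLinearMap ∘ₗ (topc).rTensor M
  refine ⟨τ t, ?_⟩
  have h1 := map_mem_JJ x τ ht
  have h2 : τ ∘ₗ ex M Λ = W.det • τ := by
    refine TensorProduct.ext' fun y p => ?_
    have h := topc_map W.transpose y
    rw [Matrix.det_transpose] at h
    change topc (ExteriorAlgebra.map W.transpose.mulVecLin y) • p = W.det • topc y • p
    rw [h, smul_assoc]
  have h3 : τ (eL (List.finRange n) ⊗ₜ[A] m) = m := by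
    simp [τ, topc_eL]
  rw [map_sub, h3, ← LinearMap.comp_apply, h2] at h1
  exact h1

end gen
end LinkAux

/-- Linkage for `M`-independent sequences: if `x = uW` with `x` `M`-independent and
`Δ = det W`, then `(JₓM : Jᵤ) = (Jₓ + (Δ))M` and `(JₓM : Jₓ + (Δ)) = JᵤM`. -/
theorem colon_submodules_of_independent
    {A : Type} [CommRing A] {M : Type} [AddCommGroup M] [Module A M]
    {n : ℕ} (x u : Fin n → A) (W : Matrix (Fin n) (Fin n) A)
    (hW : ∀ i, x i = ∑ j, u j * W j i)
    (hind : ∀ m : Fin n → M, (∑ i, x i • m i) = 0 →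
      ∀ i, m i ∈ Ideal.span (Set.range x) • (⊤ : Submodule A M)) :
    ({m : M | ∀ a ∈ Ideal.span (Set.range u), a • m ∈
        Ideal.span (Set.range x) • (⊤ : Submodule A M)} =
      ↑((Ideal.span (Set.range x) ⊔ Ideal.span {W.det}) • (⊤ : Submodule A M))) ∧
    ({m : M | W.det • m ∈ Ideal.span (Set.range x) • (⊤ : Submodule A M) ∧
        ∀ a ∈ Ideal.span (Set.range x), a • m ∈
          Ideal.span (Set.range x) • (⊤ : Submodule A M)} =
      ↑(Ideal.span (Set.range u) • (⊤ : Submodule A M))) := by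
  refine ⟨?_, ?_⟩
  · ext m
    simp only [Set.mem_ofPred_eq, SetLike.mem_coe]
    constructor
    · intro h
      obtain ⟨m', hm'⟩ := LinkAux.colon_one x u W hW hind m
        fun j => h _ (Ideal.subset_span ⟨j, rfl⟩)
      rw [← sub_add_cancel m (W.det • m')]
      refine Submodule.add_mem _ (Submodule.smul_mono_left le_sup_left hm') ?_
      exact Submodule.smul_mem_smul
        ((le_sup_right : Ideal.span {W.det} ≤ _) (Ideal.mem_span_singleton_self _)) trivial
    · intro h a ha
      rw [Submodule.sup_smul] at h
      obtain ⟨p, hp, q, hq, rfl⟩ := Submodule.mem_sup.1 h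
      rw [smul_add]
      refine Submodule.add_mem _ (Submodule.smul_mem _ _ hp) ?_
      refine Submodule.smul_induction_on hq ?_ ?_
      · intro r hr y _
        obtain ⟨c, rfl⟩ := Ideal.mem_span_singleton.1 hr
        rw [smul_smul, ← mul_assoc]
        exact Submodule.smul_mem_smul
          (Ideal.mul_mem_right _ _ (LinkAux.mul_det_mem x u W hW a ha)) trivial
      · intro y z hy hz
        rw [smul_add]
        exact Submodule.add_mem _ hy hz
  · ext m
    simp only [Set.mem_ofPred_eq, SetLike.mem_coe]
    constructor
    · intro h
      exact LinkAux.colon_two x u W hW hind m h.1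
    · intro h
      refine ⟨?_, fun a ha => Submodule.smul_mem_smul ha trivial⟩
      refine Submodule.smul_induction_on h ?_ ?_
      · intro r hr y _
        rw [smul_smul, mul_comm]
        exact Submodule.smul_mem_smul (LinkAux.mul_det_mem x u W hW r hr) trivial
      · intro y z hy hz
        rw [smul_add]
        exact Submodule.add_mem _ hy hz
end

section
/- Let A be a Noetherian local ring and M a nonzero finite A-module. If I ⊆ m_A is an ideal generated by an M-independent sequence of length n with n ≥ edim(A) (the minimal number of generators of m_A), then n = edim(A). -/
open IsLocalRing

/-- The embedding dimension of a local ring: the minimal number of generators of its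
maximal ideal. -/
noncomputable def edim (A : Type) [CommRing A] [IsLocalRing A] : ℕ :=
  sInf {k : ℕ | ∃ y : Fin k → A, Ideal.span (Set.range y) = maximalIdeal A}

/-- A Koszul-type complex on `y` with coefficients in `M`. -/
structure KosData {A : Type} [CommRing A] (M : Type) [AddCommGroup M] [Module A M]
    (d : ℕ) (y : Fin d → A) where
  K : Type
  [grp : AddCommGroup K]
  [mod : Module A K]
  w : (Fin d → A) → K →ₗ[A] K
  del : K →ₗ[A] K
  inc : M →ₗ[A] K
  pr : K →ₗ[A] M
  F : ℕ → Submodule A K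
  del_del : ∀ v, del (del v) = 0
  homotopy : ∀ v k, del (w v k) + w v (del k) = (∑ j, v j * y j) • k
  del_inc : ∀ m, del (inc m) = 0
  pr_inc : ∀ m, pr (inc m) = m
  pr_del : ∀ k, pr (del k) ∈ Ideal.span (Set.range y) • (⊤ : Submodule A M)
  F_zero : F 0 = ⊤
  F_top : ∀ s, d < s → F s = ⊥
  w_F : ∀ s v k, k ∈ F s → w v k ∈ F (s + 1)
  indep : ∀ (n : ℕ) (x : Fin n → A), (∀ m : Fin n → M, (∑ i, x i • m i) = 0 →
      ∀ i, m i ∈ Ideal.span (Set.range x) • (⊤ : Submodule A M)) →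
      ∀ m : Fin n → K, (∑ i, x i • m i) = 0 →
      ∀ i, m i ∈ Ideal.span (Set.range x) • (⊤ : Submodule A K)

attribute [instance] KosData.grp KosData.mod

theorem smul_top_map {A : Type} [CommRing A] {P Q : Type} [AddCommGroup P] [Module A P]
    [AddCommGroup Q] [Module A Q] (f : P →ₗ[A] Q) (I : Ideal A) (p : P)
    (hp : p ∈ I • (⊤ : Submodule A P)) : f p ∈ I • (⊤ : Submodule A Q) := by
  have h := Submodule.mem_map_of_mem (f := f) hp
  rw [Submodule.map_smul''] at h
  exact Submodule.smul_mono le_rfl le_top h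

theorem kosData_exists {A : Type} [CommRing A] (M : Type) [AddCommGroup M] [Module A M]
    (d : ℕ) (y : Fin d → A) : Nonempty (KosData M d y) := by
  induction d with
  | zero =>
    exact ⟨{
      K := M
      w := fun _ => 0
      del := 0
      inc := LinearMap.id
      pr := LinearMap.id
      F := fun s => if s = 0 then ⊤ else ⊥
      del_del := by simp
      homotopy := by simp
      del_inc := by simp
      pr_inc := by simp
      pr_del := by simp
      F_zero := by simp
      F_top := by intro s hs; simp [hs.ne']
      w_F := by simp
      indep := fun _ _ h => h }⟩
  | succ d ih =>
    obtain ⟨D⟩ := ih (fun j => y j.succ)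
    exact ⟨{
      K := D.K × D.K
      w := fun v => LinearMap.prod (D.w (fun j => v j.succ) ∘ₗ LinearMap.fst A D.K D.K)
        (v 0 • LinearMap.fst A D.K D.K - D.w (fun j => v j.succ) ∘ₗ LinearMap.snd A D.K D.K)
      del := LinearMap.prod (D.del ∘ₗ LinearMap.fst A D.K D.K + y 0 • LinearMap.snd A D.K D.K)
        (- (D.del ∘ₗ LinearMap.snd A D.K D.K))
      inc := LinearMap.inl A D.K D.K ∘ₗ D.inc
      pr := D.pr ∘ₗ LinearMap.fst A D.K D.K
      F := fun s => (D.F s).prod (D.F (s - 1))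
      del_del := by
        rintro ⟨p, q⟩
        simp [D.del_del]
      homotopy := by
        rintro v ⟨p, q⟩
        have hp := D.homotopy (fun j => v j.succ) p
        have hq := D.homotopy (fun j => v j.succ) q
        rw [Fin.sum_univ_succ, add_smul]
        ext
        · simp only [LinearMap.prod_apply, Function.prod, LinearMap.add_apply, LinearMap.sub_apply,
            LinearMap.neg_apply, LinearMap.smul_apply, LinearMap.comp_apply, LinearMap.fst_apply,
            LinearMap.snd_apply, map_add, map_smul, map_neg, map_sub, Prod.fst_add, Prod.smul_fst]
          rw [← hp]; module
        · simp only [LinearMap.prod_apply, Function.prod, LinearMap.add_apply, LinearMap.sub_apply,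
            LinearMap.neg_apply, LinearMap.smul_apply, LinearMap.comp_apply, LinearMap.fst_apply,
            LinearMap.snd_apply, map_add, map_smul, map_neg, map_sub, Prod.snd_add, Prod.smul_snd]
          rw [← hq]; module
      del_inc := by intro m; simp [D.del_inc]
      pr_inc := by intro m; simp [D.pr_inc]
      pr_del := by
        rintro ⟨p, q⟩
        simp only [LinearMap.prod_apply, Function.prod, LinearMap.add_apply,
            LinearMap.smul_apply, LinearMap.comp_apply, LinearMap.fst_apply,
            LinearMap.snd_apply, map_add, map_smul]
        refine add_mem ?_ ?_
        · refine Submodule.smul_mono_left (Ideal.span_mono ?_) (D.pr_del p)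
          rintro _ ⟨j, rfl⟩
          exact ⟨j.succ, rfl⟩
        · exact Submodule.smul_mem_smul (Ideal.subset_span ⟨0, rfl⟩) trivial
      F_zero := by simp [D.F_zero]
      F_top := by
        intro s hs
        simp [D.F_top s (by omega), D.F_top (s - 1) (by omega)]
      w_F := by
        rintro s v ⟨p, q⟩ ⟨hp, hq⟩
        refine ⟨D.w_F s _ _ hp, ?_⟩
        change v 0 • p - D.w _ q ∈ D.F s
        refine sub_mem (Submodule.smul_mem _ _ hp) ?_
        rcases s with _ | s
        · rw [D.F_zero]; trivial
        · exact D.w_F s _ _ hq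
      indep := by
        intro n x h m hm i
        have h1 := D.indep n x h (fun i => (m i).1)
          (by simpa [Prod.fst_sum] using congrArg Prod.fst hm) i
        have h2 := D.indep n x h (fun i => (m i).2)
          (by simpa [Prod.snd_sum] using congrArg Prod.snd hm) i
        have e : m i = LinearMap.inl A D.K D.K (m i).1 + LinearMap.inr A D.K D.K (m i).2 := by
          simp
        rw [e]
        exact add_mem (smul_top_map _ _ _ h1) (smul_top_map _ _ _ h2) }⟩

/-- Iterated wedge product. -/
def KosData.wl {A : Type} [CommRing A] {M : Type} [AddCommGroup M] [Module A M]
    {d : ℕ} {y : Fin d → A} (D : KosData M d y) {n : ℕ} (a : Fin n → Fin d → A) (m : M) :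
    List (Fin n) → D.K
  | [] => D.inc m
  | k :: L => D.w (a k) (D.wl a m L)

theorem KosData.wl_F {A : Type} [CommRing A] {M : Type} [AddCommGroup M] [Module A M]
    {d : ℕ} {y : Fin d → A} (D : KosData M d y) {n : ℕ} (a : Fin n → Fin d → A) (m : M)
    (L : List (Fin n)) : D.wl a m L ∈ D.F L.length := by
  induction L with
  | nil => simp [D.F_zero]
  | cons k L ih => exact D.w_F _ _ _ ih

theorem KosData.del_wl {A : Type} [CommRing A] {M : Type} [AddCommGroup M] [Module A M]
    {d : ℕ} {y : Fin d → A} (D : KosData M d y) {n : ℕ} (a : Fin n → Fin d → A) (m : M)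
    (x : Fin n → A) (hx : ∀ i, ∑ j, a i j * y j = x i)
    (L : List (Fin n)) (hL : L.Nodup) : ∃ c : Fin n → D.K, (∀ i, i ∉ L → c i = 0) ∧
      (∀ k L', L = k :: L' → c k = D.wl a m L') ∧
      D.del (D.wl a m L) = ∑ i, x i • c i := by
  induction L with
  | nil => exact ⟨0, by simp, by simp, by simp [KosData.wl, D.del_inc]⟩
  | cons k L ih =>
    obtain ⟨c, hc, -, h⟩ := ih hL.of_cons
    have hk : k ∉ L := (List.nodup_cons.1 hL).1
    refine ⟨fun i => (Pi.single k (D.wl a m L) : Fin n → D.K) i - D.w (a k) (c i), ?_, ?_, ?_⟩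
    · intro i hi
      rw [List.mem_cons, not_or] at hi
      simp [hi.1, hc i hi.2]
    · rintro k' L' e
      obtain ⟨rfl, rfl⟩ := List.cons.inj e
      simp [hc k hk]
    · have := D.homotopy (a k) (D.wl a m L)
      rw [hx, h] at this
      simp only [KosData.wl, smul_sub, Finset.sum_sub_distrib]
      rw [eq_sub_of_add_eq this]
      congr 1
      · rw [Finset.sum_eq_single k]
        · simp
        · intro b _ hb; simp [hb]
        · simp
      · simp

theorem mem_span_range_smul {A : Type} [CommRing A] {K : Type} [AddCommGroup K] [Module A K]
    {n : ℕ} (x : Fin n → A) (k : K)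
    (hk : k ∈ Ideal.span (Set.range x) • (⊤ : Submodule A K)) :
    ∃ c : Fin n → K, k = ∑ i, x i • c i := by
  refine Submodule.smul_induction_on hk ?_ ?_
  · intro r hr t _
    obtain ⟨c, rfl⟩ := (Ideal.mem_span_range_iff_exists_fun).1 hr
    exact ⟨fun i => c i • t, by simp [Finset.sum_smul, smul_smul, mul_comm]⟩
  · rintro _ _ ⟨c, rfl⟩ ⟨c', rfl⟩
    exact ⟨c + c', by simp [Finset.sum_add_distrib]⟩

theorem KosData.wl_mem {A : Type} [CommRing A] {M : Type} [AddCommGroup M] [Module A M]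
    {d : ℕ} {y : Fin d → A} (D : KosData M d y) {n : ℕ} (a : Fin n → Fin d → A) (m : M)
    (x : Fin n → A) (hx : ∀ i, ∑ j, a i j * y j = x i) (hdn : d < n)
    (hind : ∀ m : Fin n → M, (∑ i, x i • m i) = 0 →
      ∀ i, m i ∈ Ideal.span (Set.range x) • (⊤ : Submodule A M))
    (r : ℕ) : ∀ (L : List (Fin n)), L.Nodup → L.length + r = n →
      D.wl a m L ∈ Ideal.span (Set.range x) • (⊤ : Submodule A D.K) ⊔ LinearMap.range D.del := by
  induction r with
  | zero =>
    intro L _ hl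
    have := D.wl_F a m L
    rw [D.F_top _ (by omega), Submodule.mem_bot] at this
    rw [this]; exact zero_mem _
  | succ r ih =>
    intro L hL hl
    obtain ⟨k, hk⟩ : ∃ k, k ∉ L := by
      by_contra! h
      have h1 : L.toFinset = Finset.univ := by ext; simp [h]
      have h2 := List.toFinset_card_le L
      rw [h1, Finset.card_univ, Fintype.card_fin] at h2
      omega
    have hkL : (k :: L).Nodup := List.nodup_cons.2 ⟨hk, hL⟩
    have h1 := ih (k :: L) hkL (by simp; omega)
    obtain ⟨u, hu, _, ⟨v, rfl⟩, huv⟩ := Submodule.mem_sup.1 h1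
    obtain ⟨b, rfl⟩ := mem_span_range_smul x u hu
    obtain ⟨c, -, hc, h⟩ := D.del_wl a m x hx (k :: L) hkL
    rw [← huv, map_add, D.del_del, add_zero, map_sum] at h
    have h3 := D.indep n x hind (fun i => c i - D.del (b i))
      (by simp only [smul_sub, Finset.sum_sub_distrib, ← h, map_smul, sub_self]) k
    simp only [hc k L rfl] at h3
    rw [← sub_add_cancel (D.wl a m L) (D.del (b k))]
    exact Submodule.add_mem_sup h3 ⟨_, rfl⟩

/-- If a nonzero finite module `M` over a Noetherian local ring admits an `M`-independent
sequence of length `n ≥ edim A` inside `𝔪`, then `n = edim A`. -/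
theorem independent_length_eq_edim
    {A : Type} [CommRing A] [IsLocalRing A] [IsNoetherianRing A]
    {M : Type} [AddCommGroup M] [Module A M] [Module.Finite A M] [Nontrivial M]
    {n : ℕ} (x : Fin n → A) (hxm : ∀ i, x i ∈ maximalIdeal A)
    (hind : ∀ m : Fin n → M, (∑ i, x i • m i) = 0 →
      ∀ i, m i ∈ Ideal.span (Set.range x) • (⊤ : Submodule A M))
    (hge : edim A ≤ n) :
    n = edim A := by
  have hne : {k : ℕ | ∃ y : Fin k → A, Ideal.span (Set.range y) = maximalIdeal A}.Nonempty := by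
    obtain ⟨k, y, hy⟩ := Submodule.fg_iff_exists_fin_generating_family.1
      (IsNoetherian.noetherian (maximalIdeal A))
    exact ⟨k, y, hy⟩
  obtain ⟨y, hy⟩ : ∃ y : Fin (edim A) → A, Ideal.span (Set.range y) = maximalIdeal A :=
    Nat.sInf_mem hne
  by_contra hn
  have hlt : edim A < n := by omega
  have hex : ∀ i, ∃ c : Fin (edim A) → A, ∑ j, c j * y j = x i := fun i =>
    Ideal.mem_span_range_iff_exists_fun.1 (hy ▸ hxm i)
  choose a ha using hex
  obtain ⟨D⟩ := kosData_exists M (edim A) y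
  have hI : Ideal.span (Set.range x) ≤ maximalIdeal A := by
    rw [Ideal.span_le]; rintro _ ⟨i, rfl⟩; exact hxm i
  have key : ∀ m : M, m ∈ maximalIdeal A • (⊤ : Submodule A M) := by
    intro m
    have h := D.wl_mem a m x ha hlt hind n [] List.nodup_nil (by simp)
    obtain ⟨u, hu, _, ⟨v, rfl⟩, huv⟩ := Submodule.mem_sup.1 h
    have h2 : D.pr u + D.pr (D.del v) = m := by
      rw [← map_add, huv]; exact D.pr_inc m
    rw [← h2]
    exact add_mem (Submodule.smul_mono_left hI (smul_top_map D.pr _ _ hu)) (hy ▸ D.pr_del v)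
  have hbot : (⊤ : Submodule A M) = ⊥ :=
    Submodule.eq_bot_of_le_smul_of_le_jacobson_bot (maximalIdeal A) ⊤ Module.Finite.fg_top
      (fun m _ => key m) (IsLocalRing.maximalIdeal_le_jacobson _)
  exact top_ne_bot hbot
end

section
/- Let A be a Noetherian local ring and M a nonzero finite A-module. If there exists an M-independent sequence x_1,...,x_n in m_A with n = edim(A), then A/(x_1,...,x_n) is a complete intersection of dimension zero and M/I²M is free over A/I², where I = (x_1,...,x_n). -/
open IsLocalRing

/-- A regular local ring: a Noetherian local ring whose embedding dimension equals its
Krull dimension. -/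
def IsRegularLocal (R : Type) [CommRing R] [IsLocalRing R] : Prop :=
  IsNoetherianRing R ∧ (edim R : WithBot ℕ∞) = ringKrullDim R

/-- A ring is a complete intersection of dimension zero if it is a quotient of a regular
local ring by an ideal generated by a regular sequence whose length equals the Krull
dimension of the regular local ring. -/
def IsCompleteIntersectionDimZero (C : Type) [CommRing C] : Prop :=
  ∃ (R : Type) (_ : CommRing R) (_ : IsLocalRing R),
    IsRegularLocal R ∧
    ∃ f : R →+* C, Function.Surjective f ∧
      ∃ (c : ℕ) (y : Fin c → R),
        (c : WithBot ℕ∞) = ringKrullDim R ∧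
        RingTheory.Sequence.IsRegular R (List.ofFn y) ∧
        RingHom.ker f = Ideal.span (Set.range y)


section MainLemma
variable {A M : Type} [CommRing A] [AddCommGroup M] [Module A M]

/-- An alternating map with values in `I M` is a combination of alternating maps. -/
lemma alt_lift {n i : ℕ} (x : Fin n → A) (E : (Fin n → A) [⋀^Fin i]→ₗ[A] M)
    (hE : ∀ v, E v ∈ Ideal.span (Set.range x) • (⊤ : Submodule A M)) :
    ∃ ψ : Fin n → (Fin n → A) [⋀^Fin i]→ₗ[A] M, ∀ v, E v = ∑ k, x k • ψ k v := by
  classical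
  let S : (Fin n → M) →ₗ[A] M := ∑ k, x k • LinearMap.proj k
  have hS : ∀ f, S f = ∑ k, x k • f k := by intro f; simp [S]
  have hr : LinearMap.range S = Ideal.span (Set.range x) • (⊤ : Submodule A M) := by
    apply le_antisymm
    · rintro _ ⟨f, rfl⟩
      rw [hS]
      exact Submodule.sum_mem _ fun k _ => Submodule.smul_mem_smul
        (Ideal.subset_span ⟨k, rfl⟩) trivial
    · rw [Submodule.smul_le]
      intro r hr m _
      induction hr using Submodule.span_induction with
      | mem y hy =>
        obtain ⟨k, rfl⟩ := hy
        exact ⟨Pi.single k m, by rw [hS]; simp [Pi.single_apply]⟩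
      | zero => simp
      | add a b _ _ ha hb => rw [add_smul]; exact add_mem ha hb
      | smul c a _ ha => rw [smul_assoc]; exact Submodule.smul_mem _ _ ha
  let E' : ⋀[A]^i (Fin n → A) →ₗ[A] M := exteriorPower.alternatingMapLinearEquiv E
  have hE' : ∀ z, E' z ∈ LinearMap.range S := by
    intro z
    have hz : z ∈ Submodule.span A (Set.range (exteriorPower.ιMulti A i (M := Fin n → A))) := by
      rw [exteriorPower.ιMulti_span]; trivial
    induction hz using Submodule.span_induction with
    | mem y hy =>
      obtain ⟨v, rfl⟩ := hy
      simp only [E', exteriorPower.alternatingMapLinearEquiv_apply_ιMulti]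
      rw [hr]; exact hE v
    | zero => simp
    | add a b _ _ ha hb => rw [map_add]; exact add_mem ha hb
    | smul c a _ ha => rw [map_smul]; exact Submodule.smul_mem _ _ ha
  obtain ⟨h, hh⟩ := Module.projective_lifting_property S.rangeRestrict
    (E'.codRestrict _ hE') S.surjective_rangeRestrict
  refine ⟨fun k => exteriorPower.alternatingMapLinearEquiv.symm (LinearMap.proj k ∘ₗ h), ?_⟩
  intro v
  have := congrArg Subtype.val (LinearMap.congr_fun hh (exteriorPower.ιMulti A i v))
  replace this : S (h (exteriorPower.ιMulti A i v)) = E' (exteriorPower.ιMulti A i v) := this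
  rw [hS] at this
  simp only [E', exteriorPower.alternatingMapLinearEquiv_apply_ιMulti] at this
  rw [← this]
  rfl

/-- The minors as alternating maps. -/
noncomputable def minorAlt {n i : ℕ} (U : Matrix (Fin n) (Fin n) A) (ρ : Fin i → Fin n) :
    (Fin n → A) [⋀^Fin i]→ₗ[A] A :=
  (Matrix.detRowAlternating (n := Fin i) (R := A)).compLinearMap
    ((LinearMap.funLeft A A ρ) ∘ₗ U.mulVecLin)

lemma minorAlt_apply {n i : ℕ} (U : Matrix (Fin n) (Fin n) A) (ρ : Fin i → Fin n)
    (v : Fin i → Fin n → A) :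
    minorAlt U ρ v = Matrix.det (Matrix.of fun b a => (U.mulVec (v b)) (ρ a)) := by
  rfl

lemma main_step {n i : ℕ} (hi : i < n) (x u : Fin n → A) (U : Matrix (Fin n) (Fin n) A)
    (hU : U.mulVec u = x)
    (hind : ∀ m : Fin n → M, (∑ i, x i • m i) = 0 →
      ∀ i, m i ∈ Ideal.span (Set.range x) • (⊤ : Submodule A M)) (m : M)
    (h : ∃ θ : (Fin (i+1) → Fin n) → (Fin n → A) [⋀^Fin (i+2)]→ₗ[A] M,
      ∀ ρ : Fin (i+1) → Fin n, Function.Injective ρ → ∀ v : Fin (i+1) → Fin n → A,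
        minorAlt U ρ v • m - θ ρ (Matrix.vecCons u v) ∈
          Ideal.span (Set.range x) • (⊤ : Submodule A M)) :
    ∃ θ : (Fin i → Fin n) → (Fin n → A) [⋀^Fin (i+1)]→ₗ[A] M,
      ∀ ρ : Fin i → Fin n, Function.Injective ρ → ∀ v : Fin i → Fin n → A,
        minorAlt U ρ v • m - θ ρ (Matrix.vecCons u v) ∈
          Ideal.span (Set.range x) • (⊤ : Submodule A M) := by
  classical
  obtain ⟨θ, hθ⟩ := h
  have key : ∀ ρ : Fin i → Fin n, ∃ thetaNew : (Fin n → A) [⋀^Fin (i+1)]→ₗ[A] M,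
      Function.Injective ρ → ∀ v : Fin i → Fin n → A,
        minorAlt U ρ v • m - thetaNew (Matrix.vecCons u v) ∈
          Ideal.span (Set.range x) • (⊤ : Submodule A M) := by
    intro ρ
    by_cases hρ : Function.Injective ρ
    swap
    · exact ⟨0, fun h => absurd h hρ⟩
    obtain ⟨r, hr⟩ : ∃ r, r ∉ Set.range ρ := by
      by_contra hcon
      push Not at hcon
      have : Function.Surjective ρ := hcon
      have := Fintype.card_le_of_surjective ρ this
      simp at this; omega
    let σ : Fin (i+1) → Fin n := Fin.cons r ρ
    have hσ : Function.Injective σ := Fin.cons_injective_iff.2 ⟨hr, hρ⟩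
    let E : (Fin n → A) [⋀^Fin (i+1)]→ₗ[A] M :=
      (LinearMap.toSpanSingleton A M m).compAlternatingMap (minorAlt U σ) - (θ σ).curryLeft u
    have hEv : ∀ v, E v = minorAlt U σ v • m - θ σ (Matrix.vecCons u v) := by
      intro v; simp [E]
    obtain ⟨ψ, hψ⟩ := alt_lift x E (fun v => by rw [hEv]; exact hθ σ hσ v)
    refine ⟨ψ r, fun _ v => ?_⟩
    have h1 := hψ (Matrix.vecCons u v)
    rw [hEv] at h1
    have h2 : θ σ (Matrix.vecCons u (Matrix.vecCons u v)) = 0 :=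
      (θ σ).map_eq_zero_of_eq _ (i := 0) (j := 1) rfl (by simp)
    rw [h2, sub_zero] at h1
    have h3 : minorAlt U σ (Matrix.vecCons u v) =
        ∑ a : Fin (i+1), (-1) ^ (a : ℕ) * x (σ a) * minorAlt U (fun b => σ (a.succAbove b)) v := by
      rw [minorAlt_apply, Matrix.det_succ_row_zero]
      refine Finset.sum_congr rfl fun a _ => ?_
      congr 1
      simp [hU]
    rw [h3, Finset.sum_smul] at h1
    let c : Fin (i+1) → M := fun a =>
      ((-1) ^ (a : ℕ) * minorAlt U (fun b => σ (a.succAbove b)) v) • m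
    have h4 : ∑ k, x k • (ψ k (Matrix.vecCons u v) - ∑ a, if σ a = k then c a else 0) = 0 := by
      simp only [smul_sub, Finset.sum_sub_distrib, ← h1, Finset.smul_sum]
      rw [Finset.sum_comm, sub_eq_zero]
      refine Finset.sum_congr rfl fun a _ => ?_
      simp [smul_ite, c, smul_smul]
      congr 1; ring
    have h5 := hind _ h4 r
    have h6 : ∑ a, (if σ a = r then c a else 0) = minorAlt U ρ v • m := by
      rw [Finset.sum_eq_single 0]
      · simp [σ, c]
      · intro b _ hb
        rw [if_neg]
        intro h; exact hb (hσ (h.trans rfl))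
      · simp
    rw [h6] at h5
    rw [← neg_mem_iff, neg_sub]; exact h5
  choose thetaNew hthetaNew using key
  exact ⟨thetaNew, hthetaNew⟩

/-- If `x = U u` is `M`-independent and `det U • m ∈ I M`, then `m ∈ (u) M`. -/
lemma main_lemma {n : ℕ} (x u : Fin n → A) (U : Matrix (Fin n) (Fin n) A)
    (hU : U.mulVec u = x)
    (hind : ∀ m : Fin n → M, (∑ i, x i • m i) = 0 →
      ∀ i, m i ∈ Ideal.span (Set.range x) • (⊤ : Submodule A M)) (m : M)
    (hm : U.det • m ∈ Ideal.span (Set.range x) • (⊤ : Submodule A M)) :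
    m ∈ Ideal.span (Set.range u) • (⊤ : Submodule A M) := by
  classical
  have hxu : Ideal.span (Set.range x) ≤ Ideal.span (Set.range u) := by
    rw [Ideal.span_le]
    rintro _ ⟨i, rfl⟩
    have hxi : x i = ∑ j, U i j * u j := (congrFun hU i).symm
    rw [hxi]
    exact Ideal.sum_mem _ fun j _ => Ideal.mul_mem_left _ _ (Ideal.subset_span (Set.mem_range_self j))
  have key : ∀ j i, i + j = n → ∃ θ : (Fin i → Fin n) → (Fin n → A) [⋀^Fin (i+1)]→ₗ[A] M,
      ∀ ρ : Fin i → Fin n, Function.Injective ρ → ∀ v : Fin i → Fin n → A,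
        minorAlt U ρ v • m - θ ρ (Matrix.vecCons u v) ∈
          Ideal.span (Set.range x) • (⊤ : Submodule A M) := by
    intro j
    induction j with
    | zero =>
      rintro i rfl
      refine ⟨fun _ => 0, fun ρ hρ v => ?_⟩
      have : minorAlt U ρ v = (Matrix.of v).det * ((U.submatrix ρ id).det) := by
        rw [minorAlt_apply, mul_comm, ← Matrix.det_transpose (U.submatrix ρ id),
          mul_comm, ← Matrix.det_mul]
        congr 1
        ext a b
        simp [Matrix.mul_apply, Matrix.mulVec, dotProduct, mul_comm]
      rw [this]
      have hb : Function.Bijective ρ := Finite.injective_iff_bijective.1 hρ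
      let e : Equiv.Perm (Fin i) := Equiv.ofBijective ρ hb
      have : (U.submatrix ρ id).det = (Equiv.Perm.sign e : A) * U.det := by
        exact Matrix.det_permute e U
      rw [this]
      simp only [AlternatingMap.zero_apply, sub_zero]
      rw [← mul_assoc, mul_smul]
      exact Submodule.smul_mem _ _ hm
    | succ j ih =>
      intro i hi
      exact main_step (by omega) x u U hU hind m (ih (i+1) (by omega))
  obtain ⟨θ, hθ⟩ := key n 0 (by omega)
  have h1 := hθ Fin.elim0 (fun a => a.elim0) Fin.elim0
  have h2 : minorAlt U (Fin.elim0 : Fin 0 → Fin n) Fin.elim0 = 1 := by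
    rw [minorAlt_apply]; simp
  rw [h2, one_smul] at h1
  have h3 : θ Fin.elim0 (Matrix.vecCons u Fin.elim0) ∈
      Ideal.span (Set.range u) • (⊤ : Submodule A M) := by
    let f : (Fin n → A) →ₗ[A] M :=
      { toFun := fun w => θ Fin.elim0 (Matrix.vecCons w Fin.elim0)
        map_add' := fun a b => (θ Fin.elim0).map_vecCons_add _ _ _
        map_smul' := fun a b => (θ Fin.elim0).map_vecCons_smul _ _ _ }
    change f u ∈ _
    have hu : f u = ∑ j, f (u j • fun k => if j = k then 1 else 0) := by
      rw [← map_sum, ← pi_eq_sum_univ u]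
    rw [hu]
    refine Submodule.sum_mem _ fun j _ => ?_
    rw [map_smul]
    exact Submodule.smul_mem_smul (Ideal.subset_span (Set.mem_range_self j)) trivial
  have := add_mem (Submodule.smul_mono_left hxu h1) h3
  simpa using this
end MainLemma

section Exchange
variable {R : Type} [CommRing R]

/-- `w` is a nonzerodivisor modulo `K`. -/
def RegMod (K : Ideal R) (w : R) : Prop := ∀ a, w * a ∈ K → a ∈ K

/-- The socle of `R / J` is at most one-dimensional. -/
def SimpleSoc [IsLocalRing R] (J : Ideal R) : Prop :=
  ∀ a b, a ∉ J → (∀ r ∈ maximalIdeal R, r * a ∈ J) → (∀ r ∈ maximalIdeal R, r * b ∈ J) →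
    ∃ c, b - c * a ∈ J

lemma mem_sup_singleton {K : Ideal R} {w z : R} :
    z ∈ K ⊔ Ideal.span {w} ↔ ∃ d, z - d * w ∈ K := by
  rw [Submodule.mem_sup]
  constructor
  · rintro ⟨k, hk, y, hy, rfl⟩
    obtain ⟨d, rfl⟩ := Ideal.mem_span_singleton'.1 hy
    exact ⟨d, by simpa using hk⟩
  · rintro ⟨d, hd⟩
    exact ⟨_, hd, d * w, Ideal.mem_span_singleton'.2 ⟨d, rfl⟩, by ring⟩

lemma simpleSoc_exchange [IsLocalRing R] {K : Ideal R} {w y : R} (hw : RegMod K w)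
    (hy : RegMod K y) (hwm : w ∈ maximalIdeal R)
    (hS : SimpleSoc (K ⊔ Ideal.span {w})) : SimpleSoc (K ⊔ Ideal.span {y}) := by
  intro a b ha hsa hsb
  have tr : ∀ a, (∀ r ∈ maximalIdeal R, r * a ∈ K ⊔ Ideal.span {y}) → ∃ a', w * a - a' * y ∈ K ∧
      (∀ r ∈ maximalIdeal R, r * a' ∈ K ⊔ Ideal.span {w}) := by
    intro a hsa
    obtain ⟨a', ha'⟩ := mem_sup_singleton.1 (hsa w hwm)
    refine ⟨a', ha', fun r hr => ?_⟩
    obtain ⟨e, he⟩ := mem_sup_singleton.1 (hsa r hr)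
    refine mem_sup_singleton.2 ⟨e, hy _ ?_⟩
    have : y * (r * a' - e * w) = w * (r * a - e * y) - r * (w * a - a' * y) := by ring
    rw [this]
    exact sub_mem (Ideal.mul_mem_left _ _ he) (Ideal.mul_mem_left _ _ ha')
  obtain ⟨a', ha', hsa'⟩ := tr a hsa
  obtain ⟨b', hb', hsb'⟩ := tr b hsb
  have hna : a' ∉ K ⊔ Ideal.span {w} := by
    intro h
    obtain ⟨d, hd⟩ := mem_sup_singleton.1 h
    apply ha
    refine mem_sup_singleton.2 ⟨d, hw _ ?_⟩
    have : w * (a - d * y) = (w * a - a' * y) + y * (a' - d * w) := by ring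
    rw [this]
    exact add_mem ha' (Ideal.mul_mem_left _ _ hd)
  obtain ⟨c, hc⟩ := hS a' b' hna hsa' hsb'
  obtain ⟨d, hd⟩ := mem_sup_singleton.1 hc
  refine ⟨c, mem_sup_singleton.2 ⟨d, hw _ ?_⟩⟩
  have : w * (b - c * a - d * y) = (w * b - b' * y) - c * (w * a - a' * y)
    + y * (b' - c * a' - d * w) := by ring
  rw [this]
  exact add_mem (sub_mem hb' (Ideal.mul_mem_left _ _ ha')) (Ideal.mul_mem_left _ _ hd)

lemma regMod_iff {K : Ideal R} {w : R} :
    RegMod K w ↔ IsSMulRegular (R ⧸ K) w := by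
  rw [isSMulRegular_quotient_iff_mem_of_smul_mem]
  rfl

lemma exists_regMod_perturb [IsLocalRing R] [IsNoetherianRing R] {K : Ideal R} {w : R}
    (hw : RegMod K w) (hwm : w ∈ maximalIdeal R) (x : R) (s : ℕ) :
    ∃ a ≥ s, RegMod K (x + w ^ a) := by
  classical
  by_contra hcon
  push Not at hcon
  have hP : ∀ a : ℕ, ∃ P ∈ associatedPrimes R (R ⧸ K), x + w ^ (s + a) ∈ P := by
    intro a
    have h1 := hcon (s + a) (by omega)
    rw [regMod_iff] at h1
    have h2 : x + w ^ (s + a) ∈ ⋃ p ∈ associatedPrimes R (R ⧸ K), (p : Set R) := by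
      rw [biUnion_associatedPrimes_eq_compl_regular]; exact h1
    simpa using h2
  choose P hP hPm using hP
  have hfin := associatedPrimes.finite R (R ⧸ K)
  have : Finite (associatedPrimes R (R ⧸ K)) := hfin
  obtain ⟨a, b, hab, hPab⟩ := Finite.exists_ne_map_eq_of_infinite
    (fun a => (⟨P a, hP a⟩ : associatedPrimes R (R ⧸ K)))
  have hPab' : P a = P b := congrArg Subtype.val hPab
  have main : ∀ a b, a < b → P a = P b → False := by
    intro a b hab hPab
    have hprime : (P a).IsPrime := (hP a).isPrime
    have h1 : w ^ (s + a) * (1 - w ^ (b - a)) ∈ P a := by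
      have : w ^ (s + a) * (1 - w ^ (b - a)) = (x + w ^ (s + a)) - (x + w ^ (s + b)) := by
        have : w ^ (s + b) = w ^ (s + a) * w ^ (b - a) := by rw [← pow_add]; congr 1; omega
        rw [this]; ring
      rw [this]
      exact sub_mem (hPm a) (hPab ▸ hPm b)
    have hu : IsUnit (1 - w ^ (b - a)) := by
      rcases IsLocalRing.isUnit_or_isUnit_one_sub_self (w ^ (b - a)) with h | h
      · exfalso
        have := (Ideal.pow_mem_of_mem _ hwm (b - a) (by omega))
        exact (IsLocalRing.mem_maximalIdeal _).1 this h
      · exact h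
    have h2 : w ^ (s + a) ∈ P a := (hprime.mem_or_mem h1).resolve_right
      (fun h => hprime.ne_top (Ideal.eq_top_of_isUnit_mem _ h hu))
    have h3 : w ∈ P a := hprime.mem_of_pow_mem _ h2
    have h4 : w ∈ ⋃ p ∈ associatedPrimes R (R ⧸ K), (p : Set R) :=
      Set.mem_biUnion (hP a) h3
    rw [biUnion_associatedPrimes_eq_compl_regular] at h4
    exact h4 (regMod_iff.1 hw)
  rcases lt_or_gt_of_ne hab with h | h
  · exact main _ _ h hPab'
  · exact main _ _ h hPab'.symm

open RingTheory.Sequence in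
lemma isRegular_append_singleton [IsLocalRing R] [IsNoetherianRing R] (L : List R) (w : R) (hL : ∀ r ∈ L, r ∈ maximalIdeal R)
    (hw : w ∈ maximalIdeal R) :
    IsRegular R (L ++ [w]) ↔ IsRegular R L ∧ RegMod (Ideal.ofList L) w := by
  rw [IsLocalRing.isRegular_iff_isWeaklyRegular_of_subset_maximalIdeal,
    IsLocalRing.isRegular_iff_isWeaklyRegular_of_subset_maximalIdeal, isWeaklyRegular_append_iff,
    isWeaklyRegular_singleton_iff, regMod_iff]
  · have : (Ideal.ofList L • ⊤ : Ideal R) = Ideal.ofList L := by simp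
    rw [this]
  · exact hL
  · intro r hr
    simp only [List.mem_append, List.mem_singleton] at hr
    rcases hr with h | rfl
    exacts [hL _ h, hw]

lemma ofList_append_singleton (L : List R) (w : R) :
    Ideal.ofList (L ++ [w]) = Ideal.ofList L ⊔ Ideal.span {w} := by
  rw [Ideal.ofList_append, Ideal.ofList_singleton]

lemma ofList_perm {L L' : List R} (h : L.Perm L') : Ideal.ofList L = Ideal.ofList L' := by
  unfold Ideal.ofList
  congr 1
  ext r
  exact h.mem_iff

open RingTheory.Sequence in
lemma exchange_list [IsLocalRing R] [IsNoetherianRing R] (s : ℕ) (hs : 1 ≤ s)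
    (xs ws : List R) (hlen : xs.length = ws.length) :
    ∀ (D : List R), (∀ r ∈ D, r ∈ maximalIdeal R) → (∀ r ∈ xs, r ∈ maximalIdeal R) →
    (∀ r ∈ ws, r ∈ maximalIdeal R) → IsRegular R (D ++ ws) → SimpleSoc (Ideal.ofList (D ++ ws)) →
    ∃ ys : List R, List.Forall₂ (fun x y => y - x ∈ maximalIdeal R ^ s) xs ys ∧
      IsRegular R (D ++ ys) ∧ SimpleSoc (Ideal.ofList (D ++ ys)) := by
  induction ws generalizing xs with
  | nil =>
    intro D _ _ _ h1 h2
    have : xs = [] := by simpa using hlen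
    subst this
    exact ⟨[], by simp, h1, h2⟩
  | cons w ws ih =>
    intro D hD hxs hws h1 h2
    obtain ⟨x, xs, rfl⟩ : ∃ x xs', xs = x :: xs' := by
      cases xs with
      | nil => simp at hlen
      | cons x xs => exact ⟨x, xs, rfl⟩
    have hwm : w ∈ maximalIdeal R := hws w (by simp)
    have hxm : x ∈ maximalIdeal R := hxs x (by simp)
    have hDws : ∀ r ∈ D ++ ws, r ∈ maximalIdeal R := by
      intro r hr
      rcases List.mem_append.1 hr with h | h
      exacts [hD r h, hws r (by simp [h])]
    have p1 : (D ++ w :: ws).Perm ((D ++ ws) ++ [w]) := by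
      rw [List.append_assoc]
      exact List.Perm.append_left D (List.perm_append_singleton w ws).symm
    have r1 := IsLocalRing.isRegular_of_perm h1 p1
    rw [ofList_perm p1, ofList_append_singleton] at h2
    rw [isRegular_append_singleton _ _ hDws hwm] at r1
    obtain ⟨a, ha, hreg⟩ := exists_regMod_perturb r1.2 hwm x s
    have hws' : w ^ a ∈ maximalIdeal R ^ s :=
      Ideal.pow_le_pow_right ha (Ideal.pow_mem_pow hwm a)
    have hym : x + w ^ a ∈ maximalIdeal R :=
      add_mem hxm (Ideal.pow_le_self (by omega) hws')
    have s2 := simpleSoc_exchange r1.2 hreg hwm h2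
    have r2 := (isRegular_append_singleton _ _ hDws hym).2 ⟨r1.1, hreg⟩
    rw [← ofList_append_singleton] at s2
    have p2 : ((D ++ ws) ++ [x + w ^ a]).Perm ((D ++ [x + w ^ a]) ++ ws) := by
      rw [List.append_assoc, List.append_assoc]
      exact List.Perm.append_left D (List.perm_append_singleton _ ws)
    have r3 := IsLocalRing.isRegular_of_perm r2 p2
    rw [ofList_perm p2] at s2
    obtain ⟨ys, hys, hr, hS⟩ := ih xs (by simpa using hlen) (D ++ [x + w ^ a]) (by
      intro r hr
      rcases List.mem_append.1 hr with h | h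
      · exact hD r h
      · rw [List.mem_singleton.1 h]; exact hym) (fun r hr => hxs r (by simp [hr]))
      (fun r hr => hws r (by simp [hr])) r3 s2
    refine ⟨(x + w ^ a) :: ys, List.Forall₂.cons (by simpa using hws') hys, ?_, ?_⟩
    · simpa using hr
    · simpa using hS

open RingTheory.Sequence in
/-- Perturbing elements in a regular local ring to a regular sequence. -/
lemma exchange [IsLocalRing R] [IsNoetherianRing R] (s : ℕ) (hs : 1 ≤ s) {N : ℕ}
    (x w : Fin N → R) (hx : ∀ i, x i ∈ maximalIdeal R)
    (hw : Ideal.span (Set.range w) = maximalIdeal R) (hreg : IsRegular R (List.ofFn w)) :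
    ∃ y : Fin N → R, (∀ i, y i - x i ∈ maximalIdeal R ^ s) ∧ IsRegular R (List.ofFn y) ∧
      SimpleSoc (Ideal.span (Set.range y)) := by
  have hof : ∀ v : Fin N → R, Ideal.ofList (List.ofFn v) = Ideal.span (Set.range v) := by
    intro v
    unfold Ideal.ofList
    congr 1
    ext r
    simp
  have hsoc : SimpleSoc (Ideal.ofList ([] ++ List.ofFn w)) := by
    rw [List.nil_append, hof, hw]
    intro a b ha _ _
    have hu : IsUnit a := by simpa using ha
    obtain ⟨c, hc⟩ := hu.exists_left_inv
    exact ⟨b * c, by rw [mul_assoc, hc]; simp⟩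
  obtain ⟨ys, hys, hr, hS⟩ := exchange_list s hs (List.ofFn x) (List.ofFn w) (by simp) []
    (by simp) (by simpa [List.mem_ofFn] using hx)
    (by
      intro r hr
      obtain ⟨i, rfl⟩ := List.mem_ofFn.1 hr
      rw [← hw]; exact Ideal.subset_span ⟨i, rfl⟩) (by simpa using hreg) hsoc
  have hl : ys.length = N := by simpa using hys.length_eq.symm
  subst hl
  refine ⟨ys.get, fun i => ?_, ?_, ?_⟩
  · have := (List.forall₂_iff_get.1 hys).2 i (by simp) i.2
    simpa using this
  · rw [List.ofFn_get]; simpa using hr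
  · rw [← hof, List.ofFn_get]; simpa using hS
end Exchange

section lifting

variable {E V k : Type} [CommRing E] [CommRing V] [Field k]

/-- the subring `{p e + a ^ p}` -/
def pSub (p : ℕ) [Fact p.Prime] : Subring E where
  carrier := {z | ∃ e a : E, z = p * e + a ^ p}
  mul_mem' := by
    rintro _ _ ⟨e, a, rfl⟩ ⟨e', a', rfl⟩
    exact ⟨p * e * e' + e * a' ^ p + e' * a ^ p, a * a', by ring⟩
  one_mem' := ⟨0, 1, by simp⟩
  add_mem' := by
    rintro _ _ ⟨e, a, rfl⟩ ⟨e', a', rfl⟩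
    obtain ⟨r, hr⟩ := exists_add_pow_prime_eq (Fact.out : p.Prime) a a'
    exact ⟨e + e' - a * a' * r, a + a', by rw [hr]; ring⟩
  zero_mem' := ⟨0, 0, by simp [(Fact.out : p.Prime).ne_zero]⟩
  neg_mem' := by
    rintro _ ⟨e, a, rfl⟩
    obtain ⟨r, hr⟩ := exists_add_pow_prime_eq (Fact.out : p.Prime) a (-a)
    refine ⟨-e - a * a * r, -a, ?_⟩
    have h0 : (a + -a) ^ p = 0 := by simp [(Fact.out : p.Prime).ne_zero]
    rw [h0] at hr
    linear_combination hr

/-- the subring generated by `S` and `t` -/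
noncomputable def adjSub (S : Subring E) (t : E) : Subring E := (Polynomial.eval₂RingHom S.subtype t).range

lemma le_adjSub (S : Subring E) (t : E) : S ≤ adjSub S t := fun s hs =>
  ⟨Polynomial.C ⟨s, hs⟩, by simp⟩

lemma mem_adjSub (S : Subring E) (t : E) : t ∈ adjSub S t :=
  ⟨Polynomial.X, by simp⟩

lemma adjSub_monic [Nontrivial E] (S : Subring E) (t : E) (f : Polynomial S) (hf : f.Monic)
    (h : f.eval₂ S.subtype t = 0) {z : E} (hz : z ∈ adjSub S t) :
    ∃ g : Polynomial S, g.degree < f.degree ∧ z = g.eval₂ S.subtype t := by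
  obtain ⟨g, rfl⟩ := hz
  refine ⟨g %ₘ f, Polynomial.degree_modByMonic_lt g hf, ?_⟩
  have := Polynomial.modByMonic_add_div g f
  conv_lhs => rw [← this]
  simp [Polynomial.eval₂_add, Polynomial.eval₂_mul, h]

theorem exists_section (p : ℕ) [Fact p.Prime] (τ : E →+* V) (hτ : Function.Surjective τ)
    (hsq : ∀ a b, τ a = 0 → τ b = 0 → a * b = 0) (hpk : ∀ a, τ a = 0 → (p : E) * a = 0)
    (hp : ∀ v : V, (p : V) * v = 0 → v = 0)
    (ρ : V →+* k) (hρ : Function.Surjective ρ) (hρp : ρ p = 0)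
    (hker : ∀ v, ρ v = 0 → ∃ w, v = p * w) :
    ∃ σ : V →+* E, τ.comp σ = RingHom.id V := by
  have hpp : p.Prime := Fact.out
  have hkp : (p : k) = 0 := by simpa using hρp
  have : Nontrivial E := (ρ.comp τ).domain_nontrivial
  have : CharP k p := (CharP.charP_iff_prime_eq_zero hpp).2 hkp
  have hpE : ∀ e : E, τ (p * e) = 0 → (p : E) * e = 0 := by
    intro e he
    apply hpk
    apply hp
    simpa using he
  let P : Subring E → Prop := fun S => pSub p ≤ S ∧ ∀ e ∈ S, τ e = 0 → e = 0
  have hP1 : P (pSub p) := by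
    refine ⟨le_rfl, ?_⟩
    rintro _ ⟨e, a, rfl⟩ h0
    have h1 : ρ (τ a) = 0 := by
      have := congrArg ρ h0
      simp only [map_add, map_mul, map_natCast, hkp, zero_mul, zero_add, map_pow, map_zero] at this
      exact pow_eq_zero_iff hpp.ne_zero |>.1 this
    obtain ⟨w, hw⟩ := hker _ h1
    obtain ⟨a', rfl⟩ := hτ w
    have hj : τ (a - p * a') = 0 := by simp [hw]
    have h2 := hsq _ _ hj hj
    have h3 := hpk _ hj
    have ha2 : a ^ 2 = p * (p * a' ^ 2) := by
      linear_combination h2 + 2 * a' * h3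
    have hap : a ^ p = p * (p * a' ^ 2 * a ^ (p - 2)) := by
      have : p = 2 + (p - 2) := by have := hpp.two_le; omega
      conv_lhs => rw [this, pow_add, ha2]
      ring
    rw [hap, ← mul_add] at h0 ⊢
    exact hpE _ h0
  obtain ⟨S, hS1, hSmax⟩ := zorn_le_nonempty₀ {S | P S} (by
    intro c hc hchain S0 hS0
    refine ⟨sSup c, ⟨(hc hS0).1.trans (le_sSup hS0), ?_⟩, fun z hz => le_sSup hz⟩
    intro e he
    rw [Subring.mem_sSup_of_directedOn ⟨S0, hS0⟩ hchain.directedOn] at he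
    obtain ⟨T, hT, heT⟩ := he
    exact (hc hT).2 e heT) (pSub p) hP1
  have hSP : P S := hSmax.1
  have hpS : ∀ e : E, (p : E) * e ∈ S := fun e => hSP.1 ⟨e, 0, by simp [hpp.ne_zero]⟩
  have hpowS : ∀ e : E, e ^ p ∈ S := fun e => hSP.1 ⟨0, e, by simp⟩
  let q : E →+* k := ρ.comp τ
  have hq : Function.Surjective q := hρ.comp hτ
  -- the residue subfield
  let F : Subfield k :=
    { S.map q with
      inv_mem' := by
        rintro _ ⟨s, hs, rfl⟩
        by_cases h0 : q s = 0
        · exact ⟨0, S.zero_mem, by simp [h0]⟩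
        obtain ⟨e, he⟩ := hq (q s)⁻¹
        refine ⟨s ^ (p - 1) * e ^ p, S.mul_mem (S.pow_mem hs _) (hpowS e), ?_⟩
        have : e ^ p = e ^ (p - 1) * e := by rw [← pow_succ, Nat.sub_add_cancel hpp.one_le]
        rw [this, map_mul, map_mul, map_pow, map_pow, he, ← mul_assoc, ← mul_pow,
          mul_inv_cancel₀ h0, one_pow, one_mul] }
  let qS : S →+* F := (q.comp S.subtype).codRestrict F (fun s => ⟨s, s.2, rfl⟩)
  have hqS : ∀ s : S, (qS s : k) = q s := fun s => rfl
  have hsurj : ∀ t : E, ∃ s ∈ S, q s = q t := by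
    intro t
    by_contra hcon
    push Not at hcon
    have hadj : P (adjSub S t) := by
      refine ⟨hSP.1.trans (le_adjSub S t), ?_⟩
      intro z hz hz0
      let f : Polynomial S := Polynomial.X ^ p - Polynomial.C ⟨t ^ p, hpowS t⟩
      obtain ⟨g, hg, rfl⟩ := adjSub_monic S t f
        (Polynomial.monic_X_pow_sub_C _ hpp.ne_zero) (by simp [f]) hz
      have hirr : Irreducible (Polynomial.X ^ p - Polynomial.C (qS ⟨t ^ p, hpowS t⟩)) := by
        apply X_pow_sub_C_irreducible_of_prime hpp
        rintro ⟨b, s, hs, rfl⟩ hb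
        have hb' : q s ^ p = q t ^ p := by
          have := congrArg (Subtype.val) hb
          simpa [hqS] using this
        exact hcon s hs (frobenius_inj k p hb')
      have hmin : (Polynomial.X ^ p - Polynomial.C (qS ⟨t ^ p, hpowS t⟩)) = minpoly F (q t) := by
        apply minpoly.eq_of_irreducible_of_monic hirr
        · simp only [map_sub, map_pow, Polynomial.aeval_X, Polynomial.aeval_C]
          change q t ^ p - q (t ^ p) = 0
          simp
        · exact Polynomial.monic_X_pow_sub_C _ hpp.ne_zero
      have hgq : g.map qS = 0 := by
        by_contra hne
        have h1 := minpoly.degree_le_of_ne_zero F (q t) hne (by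
          rw [Polynomial.aeval_def, Polynomial.eval₂_map]
          have : (algebraMap F k).comp qS = q.comp S.subtype := rfl
          rw [this, ← Polynomial.hom_eval₂]
          simp [q, hz0])
        rw [← hmin, Polynomial.degree_X_pow_sub_C hpp.pos] at h1
        have h2 : f.degree ≤ p := by
          simp only [f]
          compute_degree
          exact le_rfl
        exact absurd (h1.trans Polynomial.degree_map_le) (not_le.2 (hg.trans_le h2))
      have hco : ∀ i, ∃ e : E, ((g.coeff i : S) : E) = p * e := by
        intro i
        have h1 : q (g.coeff i) = 0 := by
          have := congrArg (fun g => ((Polynomial.coeff g i : F) : k)) hgq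
          simpa [hqS] using this
        obtain ⟨w, hw⟩ := hker _ h1
        obtain ⟨e, rfl⟩ := hτ w
        refine ⟨e, ?_⟩
        have := hSP.2 (g.coeff i - p * e) (S.sub_mem (g.coeff i).2 (hpS e)) (by simp [hw])
        exact sub_eq_zero.1 this
      choose e he using hco
      have : g.eval₂ S.subtype t = p * ∑ i ∈ g.support, e i * t ^ i := by
        rw [Polynomial.eval₂_eq_sum, Polynomial.sum, Finset.mul_sum]
        refine Finset.sum_congr rfl fun i _ => ?_
        simp [he, mul_assoc]
      rw [this] at hz0 ⊢
      exact hpE _ hz0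
    exact hcon t (hSmax.2 hadj (le_adjSub S t) (mem_adjSub S t)) rfl
  have hbij : Function.Bijective (τ.comp S.subtype) := by
    constructor
    · rw [injective_iff_map_eq_zero]
      intro s hs
      exact Subtype.ext (hSP.2 s s.2 hs)
    · intro v
      obtain ⟨e, rfl⟩ := hτ v
      obtain ⟨s, hs, hse⟩ := hsurj e
      obtain ⟨w, hw⟩ := hker (τ e - τ s) (by
        rw [map_sub, sub_eq_zero]; exact hse.symm)
      obtain ⟨e', rfl⟩ := hτ w
      refine ⟨⟨s + p * e', S.add_mem hs (hpS e')⟩, ?_⟩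
      simp [← hw]
  let eq := RingEquiv.ofBijective _ hbij
  refine ⟨S.subtype.comp eq.symm.toRingHom, ?_⟩
  ext v
  exact eq.apply_symm_apply v

theorem lift_sq_zero {C D : Type} [CommRing C] [CommRing D] (p : ℕ) [Fact p.Prime]
    (π : C →+* D) (hπ : Function.Surjective π)
    (hsq : ∀ a b, π a = 0 → π b = 0 → a * b = 0) (hpk : ∀ a, π a = 0 → (p : C) * a = 0)
    (hp : ∀ v : V, (p : V) * v = 0 → v = 0)
    (ρ : V →+* k) (hρ : Function.Surjective ρ) (hρp : ρ p = 0)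
    (hker : ∀ v, ρ v = 0 → ∃ w, v = p * w) (f : V →+* D) :
    ∃ g : V →+* C, π.comp g = f := by
  let E : Subring (V × C) := (f.comp (RingHom.fst V C)).eqLocus (π.comp (RingHom.snd V C))
  let τ : E →+* V := (RingHom.fst V C).comp E.subtype
  have hE : ∀ e : E, f e.1.1 = π e.1.2 := fun e => e.2
  obtain ⟨σ, hσ⟩ := exists_section (E := E) p τ (fun v => by
      obtain ⟨c, hc⟩ := hπ (f v)
      exact ⟨⟨(v, c), hc.symm⟩, rfl⟩)
    (by
      rintro a b ha hb
      have ha' : a.1.1 = 0 := ha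
      have hb' : b.1.1 = 0 := hb
      apply Subtype.ext
      apply Prod.ext
      · simp [ha']
      · exact hsq _ _ (by rw [← hE, ha', map_zero]) (by rw [← hE, hb', map_zero]))
    (by
      rintro a ha
      have ha' : a.1.1 = 0 := ha
      apply Subtype.ext
      apply Prod.ext
      · simp [ha']
      · exact hpk _ (by rw [← hE, ha', map_zero]))
    hp ρ hρ hρp hker
  refine ⟨(RingHom.snd V C).comp (E.subtype.comp σ), ?_⟩
  ext v
  have h1 : (σ v).1.1 = v := congrArg (fun h => h v) hσ
  have := hE (σ v)
  rw [h1] at this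
  exact this.symm

theorem lift_nilp {C : Type} [CommRing C] (p : ℕ) [Fact p.Prime]
    (π : C →+* k) (hπ : Function.Surjective π) (hn : IsNilpotent (RingHom.ker π))
    (hp : ∀ v : V, (p : V) * v = 0 → v = 0)
    (ρ : V →+* k) (hρ : Function.Surjective ρ) (hρp : ρ p = 0)
    (hker : ∀ v, ρ v = 0 → ∃ w, v = p * w) :
    ∃ g : V →+* C, π.comp g = ρ := by
  obtain ⟨N, hN⟩ := hn
  set m := RingHom.ker π with hm
  have hpm : (p : C) ∈ m := by
    rw [hm, RingHom.mem_ker]; simpa using hρp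
  have key : ∀ i : ℕ, ∃ g : V →+* C ⧸ m ^ (i + 1), ∀ v c, g v = Ideal.Quotient.mk _ c → π c = ρ v := by
    intro i
    induction i with
    | zero =>
      let e := RingHom.quotientKerEquivOfSurjective hπ
      have hle : RingHom.ker π ≤ m ^ (0 + 1) := by simp [hm]
      refine ⟨(Ideal.Quotient.factor hle).comp (e.symm.toRingHom.comp ρ), ?_⟩
      intro v c hc
      obtain ⟨c', hc'⟩ := hπ (ρ v)
      have h1 : e.symm (ρ v) = Ideal.Quotient.mk _ c' := by
        rw [RingEquiv.symm_apply_eq, ← hc']; rfl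
      have h2 : Ideal.Quotient.mk (m ^ (0+1)) c' = Ideal.Quotient.mk _ c := by
        rw [← hc]
        change _ = Ideal.Quotient.factor hle (e.symm (ρ v))
        rw [h1]; rfl
      rw [Ideal.Quotient.eq, zero_add, pow_one, hm, RingHom.mem_ker, map_sub, sub_eq_zero] at h2
      rw [← h2, hc']
    | succ i ih =>
      obtain ⟨g, hg⟩ := ih
      have hle : m ^ (i + 1 + 1) ≤ m ^ (i + 1) := Ideal.pow_le_pow_right (by omega)
      obtain ⟨g', hg'⟩ := lift_sq_zero p (Ideal.Quotient.factor hle)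
        (Ideal.Quotient.factor_surjective hle) (by
          intro a b ha hb
          obtain ⟨a, rfl⟩ := Ideal.Quotient.mk_surjective a
          obtain ⟨b, rfl⟩ := Ideal.Quotient.mk_surjective b
          rw [Ideal.Quotient.factor_mk, Ideal.Quotient.eq_zero_iff_mem] at ha hb
          rw [← map_mul, Ideal.Quotient.eq_zero_iff_mem]
          refine Ideal.pow_le_pow_right (by omega : i + 1 + 1 ≤ (i + 1) + (i + 1)) ?_
          rw [pow_add]
          exact Ideal.mul_mem_mul ha hb) (by
          intro a ha
          obtain ⟨a, rfl⟩ := Ideal.Quotient.mk_surjective a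
          rw [Ideal.Quotient.factor_mk, Ideal.Quotient.eq_zero_iff_mem] at ha
          rw [← map_natCast (Ideal.Quotient.mk (m ^ (i + 1 + 1))), ← map_mul,
            Ideal.Quotient.eq_zero_iff_mem, pow_succ' m (i + 1)]
          exact Ideal.mul_mem_mul hpm ha) hp ρ hρ hρp hker g
      refine ⟨g', fun v c hc => hg v c ?_⟩
      rw [← hg', RingHom.comp_apply, hc, Ideal.Quotient.factor_mk]
  obtain ⟨g, hg⟩ := key N
  have hbot : m ^ (N + 1) = ⊥ := by rw [pow_succ, hN]; simp
  have hbij : Function.Bijective (Ideal.Quotient.mk (m ^ (N + 1))) := by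
    refine ⟨?_, Ideal.Quotient.mk_surjective⟩
    rw [RingHom.injective_iff_ker_eq_bot, Ideal.mk_ker, hbot]
  let e := RingEquiv.ofBijective _ hbij
  refine ⟨e.symm.toRingHom.comp g, ?_⟩
  ext v
  exact hg v _ (e.apply_symm_apply (g v)).symm

end lifting
theorem exists_bigRing (k : Type) [Field k] (p : ℕ) [Fact p.Prime] [CharP k p] :
    ∃ (O : Type) (_ : CommRing O) (_ : IsDomain O) (_ : IsLocalRing O),
      (p : O) ≠ 0 ∧ (p : O) ∈ maximalIdeal O ∧ Nonempty (k →+* ResidueField O) ∧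
      ∀ f : Polynomial O, f.Monic → f.natDegree ≠ 0 → ∃ a, f.IsRoot a := by
  let S := MvPolynomial k ℤ
  let ev : S →+* k := MvPolynomial.eval₂Hom (Int.castRingHom k) id
  have hev : Function.Surjective ev := fun a => ⟨MvPolynomial.X a, MvPolynomial.eval₂_X _ _ _⟩
  let P : Ideal S := RingHom.ker ev
  have hP : P.IsPrime := RingHom.ker_isPrime ev
  let Ω := AlgebraicClosure (FractionRing S)
  let j : S →+* Ω := (algebraMap (FractionRing S) Ω).comp (algebraMap S (FractionRing S))
  have hj : Function.Injective j :=
    (algebraMap (FractionRing S) Ω).injective.comp (IsFractionRing.injective S (FractionRing S))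
  let L := Localization.AtPrime P
  let jL : L →+* Ω := IsLocalization.lift (M := P.primeCompl) (g := j) (by
    rintro ⟨y, hy⟩
    rw [isUnit_iff_ne_zero]
    intro h0
    rw [map_eq_zero_iff j hj] at h0
    have h1 : y = 0 := h0
    exact hy (by rw [h1]; exact P.zero_mem))
  obtain ⟨B, h, hloc⟩ := IsLocalRing.exists_factor_valuationRing jL
  let φL : L →+* B := jL.codRestrict B.toSubring h
  have hφL : IsLocalHom φL := hloc
  let φ : S →+* B := φL.comp (algebraMap S L)
  have hφj : ∀ s, ((φ s : B) : Ω) = j s := fun s => IsLocalization.lift_eq _ _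
  have hφm : ∀ s, ev s = 0 → φ s ∈ maximalIdeal B := by
    intro s hs
    rw [mem_maximalIdeal, mem_nonunits_iff]
    intro hu
    have h1 : IsUnit (algebraMap S L s) := hφL.map_nonunit _ hu
    exact ((IsLocalization.AtPrime.isUnit_to_map_iff L P s).1 h1) hs
  have hpB : ((p : S) : S) ≠ 0 := by
    have : ((p : ℕ) : S) = MvPolynomial.C (p : ℤ) := by simp
    rw [this, Ne, MvPolynomial.C_eq_zero]
    exact_mod_cast (Fact.out : p.Prime).ne_zero
  refine ⟨B, inferInstance, inferInstance, inferInstance, ?_, ?_, ?_, ?_⟩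
  · intro h0
    have h1 : j (p : S) = 0 := by
      rw [← hφj, map_natCast, h0]; rfl
    exact hpB ((map_eq_zero_iff j hj).1 h1)
  · have := hφm (p : S) (by simp)
    simpa using this
  · exact ⟨(Ideal.Quotient.lift P ((residue B).comp φ) (by
      intro a ha
      rw [RingHom.comp_apply, residue_eq_zero_iff]
      exact hφm a ha)).comp (RingHom.quotientKerEquivOfSurjective hev).symm.toRingHom⟩
  · intro f hf hd
    have hd' : (f.map (algebraMap B Ω)).degree ≠ 0 := by
      rw [hf.degree_map, Polynomial.degree_eq_natDegree hf.ne_zero]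
      exact_mod_cast hd
    obtain ⟨a, ha⟩ := IsAlgClosed.exists_root _ hd'
    have hintegral : IsIntegral B a := ⟨f, hf, by
      rwa [Polynomial.IsRoot, Polynomial.eval_map] at ha⟩
    obtain ⟨b, hb⟩ := IsIntegrallyClosed.isIntegral_iff.1 hintegral
    refine ⟨b, ?_⟩
    rw [← hb, Polynomial.IsRoot, Polynomial.eval_map, Polynomial.eval₂_at_apply] at ha
    exact (map_eq_zero_iff _ (IsFractionRing.injective B Ω)).1 ha

section cohen
open Polynomial

variable {O k : Type} [CommRing O] [IsDomain O] [IsLocalRing O] [Field k]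

lemma exists_root_residue (hroot : ∀ f : Polynomial O, f.Monic → f.natDegree ≠ 0 → ∃ a, f.IsRoot a)
    (α : ResidueField O) : ∀ (d : ℕ) (f : Polynomial O), f.natDegree = d → f.Monic →
      f.eval₂ (residue O) α = 0 → ∃ a, residue O a = α ∧ f.IsRoot a := by
  intro d
  induction d with
  | zero =>
    intro f hd hf h0
    rw [hf.natDegree_eq_zero.1 hd] at h0
    simp at h0
  | succ d ih =>
    intro f hd hf h0
    obtain ⟨b, hb⟩ := hroot f hf (by omega)
    by_cases hbα : residue O b = α
    · exact ⟨b, hbα, hb⟩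
    have hdvd := Polynomial.dvd_iff_isRoot.2 hb
    obtain ⟨g, rfl⟩ := hdvd
    have hg : g.Monic := (Polynomial.monic_X_sub_C b).of_mul_monic_left hf
    have hgd : g.natDegree = d := by
      rw [(Polynomial.monic_X_sub_C b).natDegree_mul hg, Polynomial.natDegree_X_sub_C] at hd
      omega
    obtain ⟨a, ha, hga⟩ := ih g hgd hg (by
      rw [Polynomial.eval₂_mul] at h0
      refine (mul_eq_zero.1 h0).resolve_left ?_
      simp only [Polynomial.eval₂_sub, Polynomial.eval₂_X, Polynomial.eval₂_C]
      exact fun h => hbα (sub_eq_zero.1 h).symm)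
    exact ⟨a, ha, by
      rw [Polynomial.IsRoot, Polynomial.eval_mul, hga.eq_zero, mul_zero]⟩

/-- good subrings -/
def GoodSub (p : ℕ) (ι : k →+* ResidueField O) (V : Subring O) : Prop :=
  (∀ v ∈ V, residue O v ∈ ι.range) ∧
  ∀ v ∈ V, v = 0 ∨ ∃ (m : ℕ) (u : O), u ∈ V ∧ u ∉ maximalIdeal O ∧ v = p ^ m * u

/-- fractions -/
def fracSub (V : Subring O) : Subring O where
  carrier := {o | ∃ a ∈ V, ∃ b ∈ V, b ∉ maximalIdeal O ∧ o * b = a}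
  mul_mem' := by
    rintro x y ⟨a, ha, b, hb, hbm, h⟩ ⟨a', ha', b', hb', hbm', h'⟩
    refine ⟨a * a', V.mul_mem ha ha', b * b', V.mul_mem hb hb',
      fun hc => ((Ideal.IsPrime.mem_or_mem inferInstance hc).elim hbm hbm'), ?_⟩
    rw [← h, ← h']; ring
  one_mem' := ⟨1, V.one_mem, 1, V.one_mem, (Ideal.ne_top_iff_one _).1 Ideal.IsPrime.ne_top', by simp⟩
  add_mem' := by
    rintro x y ⟨a, ha, b, hb, hbm, h⟩ ⟨a', ha', b', hb', hbm', h'⟩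
    refine ⟨a * b' + a' * b, V.add_mem (V.mul_mem ha hb') (V.mul_mem ha' hb), b * b', V.mul_mem hb hb',
      fun hc => ((Ideal.IsPrime.mem_or_mem inferInstance hc).elim hbm hbm'), ?_⟩
    rw [← h, ← h']; ring
  zero_mem' := ⟨0, V.zero_mem, 1, V.one_mem, (Ideal.ne_top_iff_one _).1 Ideal.IsPrime.ne_top', by simp⟩
  neg_mem' := by
    rintro x ⟨a, ha, b, hb, hbm, h⟩
    exact ⟨-a, V.neg_mem ha, b, hb, hbm, by rw [← h]; ring⟩

lemma le_fracSub (V : Subring O) : V ≤ fracSub V := fun v hv =>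
  ⟨v, hv, 1, V.one_mem, (Ideal.ne_top_iff_one _).1 Ideal.IsPrime.ne_top', by simp⟩

lemma fracSub_good (p : ℕ) (ι : k →+* ResidueField O) (V : Subring O)
    (hV : GoodSub p ι V) : GoodSub p ι (fracSub V) := by
  constructor
  · rintro v ⟨a, ha, b, hb, hbm, h⟩
    obtain ⟨α, hα⟩ := hV.1 a ha
    obtain ⟨β, hβ⟩ := hV.1 b hb
    have hb0 : residue O b ≠ 0 := by rwa [Ne, residue_eq_zero_iff]
    refine ⟨α * β⁻¹, ?_⟩
    rw [map_mul, map_inv₀, hα, hβ, ← h, map_mul, mul_assoc, mul_inv_cancel₀ hb0, mul_one]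
  · rintro v ⟨a, ha, b, hb, hbm, h⟩
    have hbu : IsUnit b := by simpa using hbm
    rcases hV.2 a ha with h0 | ⟨m, u, hu, hum, hmu⟩
    · left
      rw [h0] at h
      exact (mul_eq_zero.1 h).resolve_right hbu.ne_zero
    · right
      obtain ⟨c, hc⟩ := hbu.exists_right_inv
      refine ⟨m, u * c, ⟨u, hu, b, hb, hbm, by rw [mul_assoc, mul_comm c, hc, mul_one]⟩, ?_, ?_⟩
      · intro hc'
        rcases Ideal.IsPrime.mem_or_mem inferInstance hc' with h1 | h1
        · exact hum h1
        · exact (Ideal.ne_top_iff_one _).1 (Ideal.IsPrime.ne_top' (I := maximalIdeal O))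
            (by rw [← hc]; exact Ideal.mul_mem_left _ _ h1)
      · rw [← mul_assoc, ← hmu, ← h, mul_assoc, hc, mul_one]

lemma factor_poly (p : ℕ) (ι : k →+* ResidueField O) (V : Subring O)
    (hp : (p : O) ∈ maximalIdeal O)
    (hV : GoodSub p ι V) (g : Polynomial V) (hg : g ≠ 0) :
    ∃ (m : ℕ) (h : Polynomial V), g = C (p : V) ^ m * h ∧
      ∃ i, ((h.coeff i : V) : O) ∉ maximalIdeal O := by
  have h1 : ∀ v : V, ∃ (m : ℕ) (u : V), v ≠ 0 → (u : O) ∉ maximalIdeal O ∧ v = p ^ m * u := by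
    intro v
    rcases hV.2 v v.2 with h0 | ⟨m, u, hu, hum, hmu⟩
    · exact ⟨0, 0, fun h => absurd (Subtype.ext h0) h⟩
    · exact ⟨m, ⟨u, hu⟩, fun _ => ⟨hum, Subtype.ext (by simpa using hmu)⟩⟩
  choose m u hmu using h1
  have hne : g.support.Nonempty := Polynomial.support_nonempty.2 hg
  obtain ⟨i, hi, hmin⟩ := g.support.exists_min_image (fun i => m (g.coeff i)) hne
  set e := m (g.coeff i) with he
  refine ⟨e, ∑ j ∈ g.support, monomial j (p ^ (m (g.coeff j) - e) * u (g.coeff j)), ?_, i, ?_⟩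
  · conv_lhs => rw [g.as_sum_support]
    rw [Finset.mul_sum]
    refine Finset.sum_congr rfl fun j hj => ?_
    have hj' := (hmu _ (Polynomial.mem_support_iff.1 hj)).2
    rw [← C_pow, C_mul_monomial, ← mul_assoc, ← pow_add, Nat.add_sub_cancel' (hmin j hj), ← hj']
  · rw [Polynomial.finsetSum_coeff, Finset.sum_eq_single i]
    · simp only [coeff_monomial, if_true, ← he, Nat.sub_self, pow_zero, one_mul]
      exact (hmu _ (Polynomial.mem_support_iff.1 hi)).1
    · intro j _ hji
      simp [coeff_monomial, hji]
    · exact fun h => absurd hi h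

theorem exists_cohen_sub (p : ℕ) [Fact p.Prime] (ι : k →+* ResidueField O)
    (hp0 : (p : O) ≠ 0) (hp : (p : O) ∈ maximalIdeal O)
    (hroot : ∀ f : Polynomial O, f.Monic → f.natDegree ≠ 0 → ∃ a, f.IsRoot a) :
    ∃ V : Subring O, GoodSub p ι V ∧ (∀ v ∈ V, v ∉ maximalIdeal O → ∃ w ∈ V, v * w = 1) ∧
      ∀ a, ∃ v ∈ V, residue O v = ι a := by
  have hpp : p.Prime := Fact.out
  have h0 : GoodSub p ι (⊥ : Subring O) := by
    constructor
    · intro v hv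
      obtain ⟨z, rfl⟩ := Subring.mem_bot.1 hv
      exact ⟨(z : k), by simp⟩
    · intro v hv
      obtain ⟨z, rfl⟩ := Subring.mem_bot.1 hv
      by_cases hz : z = 0
      · left; simp [hz]
      · right
        have hfin : FiniteMultiplicity (p : ℤ) z :=
          Int.finiteMultiplicity_iff.2 ⟨by simpa using hpp.ne_one, hz⟩
        obtain ⟨c, hc, hpc⟩ := hfin.exists_eq_pow_mul_and_not_dvd
        refine ⟨_, (c : O), Subring.mem_bot.2 ⟨c, rfl⟩, ?_, by
          conv_lhs => rw [hc]
          push_cast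
          rfl⟩
        intro hcm
        have hcop : IsCoprime (p : ℤ) c :=
          (Prime.coprime_iff_not_dvd (Nat.prime_iff_prime_int.1 hpp)).2 hpc
        obtain ⟨a, b, hab⟩ := hcop
        have : (a : O) * p + b * c = 1 := by exact_mod_cast congrArg (Int.cast : ℤ → O) hab
        refine (Ideal.ne_top_iff_one _).1 (Ideal.IsPrime.ne_top' (I := maximalIdeal O)) ?_
        rw [← this]
        exact Ideal.add_mem _ (Ideal.mul_mem_left _ _ hp) (Ideal.mul_mem_left _ _ hcm)
  obtain ⟨V, -, hmax⟩ := zorn_le_nonempty₀ {V | GoodSub p ι V} (by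
    intro c hc hchain S0 hS0
    have hmem : ∀ e, e ∈ sSup c ↔ ∃ T ∈ c, e ∈ T := fun e =>
      Subring.mem_sSup_of_directedOn ⟨S0, hS0⟩ hchain.directedOn
    refine ⟨sSup c, ⟨fun v hv => ?_, fun v hv => ?_⟩, fun z hz => le_sSup hz⟩
    · obtain ⟨T, hT, hvT⟩ := (hmem v).1 hv
      exact (hc hT).1 v hvT
    · obtain ⟨T, hT, hvT⟩ := (hmem v).1 hv
      rcases (hc hT).2 v hvT with h | ⟨m, u, hu, hum, h⟩
      · exact Or.inl h
      · exact Or.inr ⟨m, u, (hmem u).2 ⟨T, hT, hu⟩, hum, h⟩) ⊥ h0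
  have hV : GoodSub p ι V := hmax.1
  have hinv : ∀ v ∈ V, v ∉ maximalIdeal O → ∃ w ∈ V, v * w = 1 := by
    intro v hv hvm
    have hvu : IsUnit v := by simpa using hvm
    obtain ⟨w, hw⟩ := hvu.exists_right_inv
    refine ⟨w, hmax.2 (fracSub_good p ι V hV) (le_fracSub V) ?_, hw⟩
    exact ⟨1, V.one_mem, v, hv, hvm, by rw [mul_comm, hw]⟩
  refine ⟨V, hV, hinv, ?_⟩
  by_contra hcon
  push Not at hcon
  obtain ⟨α, hα⟩ := hcon
  let F : Subfield (ResidueField O) :=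
    { V.map (residue O) with
      inv_mem' := by
        rintro _ ⟨s, hs, rfl⟩
        by_cases h0 : residue O s = 0
        · exact ⟨0, V.zero_mem, by simp [h0]⟩
        obtain ⟨w, hw, hsw⟩ := hinv s hs (by rwa [← residue_eq_zero_iff])
        refine ⟨w, hw, ?_⟩
        exact eq_inv_of_mul_eq_one_left (by rw [← map_mul, mul_comm, hsw, map_one]) }
  let q : V →+* F := ((residue O).comp V.subtype).codRestrict F (fun s => ⟨s, s.2, rfl⟩)
  have hq : Function.Surjective q := by
    rintro ⟨_, s, hs, rfl⟩
    exact ⟨⟨s, hs⟩, rfl⟩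
  have hqr : (algebraMap F (ResidueField O)).comp q = (residue O).comp V.subtype := rfl
  -- the choice of the generator
  have hgen : ∃ a : O, residue O a = ι α ∧ ∀ z ∈ adjSub V a, ∃ g : Polynomial V,
      z = g.eval₂ V.subtype a ∧ ∀ h : Polynomial V, h.natDegree ≤ g.natDegree → h.map q ≠ 0 →
        Polynomial.aeval (ι α) (h.map q) ≠ 0 := by
    by_cases halg : IsIntegral F (ι α)
    · obtain ⟨f, hfm, hfd, hfmon⟩ := Polynomial.lifts_and_degree_eq_and_monic
        (f := q) (p := minpoly F (ι α))
        ((Polynomial.lifts_iff_coeff_lifts _).2 fun n => hq _) (minpoly.monic halg)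
      obtain ⟨a, ha, hfa⟩ := exists_root_residue hroot (ι α) _ (f.map V.subtype) rfl
        (hfmon.map _) (by
          rw [Polynomial.eval₂_map, ← hqr, ← Polynomial.eval₂_map, hfm]
          exact minpoly.aeval F (ι α))
      refine ⟨a, ha, fun z hz => ?_⟩
      obtain ⟨g, hg, hzg⟩ := adjSub_monic V a f hfmon (by
        rwa [Polynomial.IsRoot, Polynomial.eval_map] at hfa) hz
      refine ⟨g, hzg, fun h hh hne h0 => ?_⟩
      have h1 := Polynomial.natDegree_le_natDegree (minpoly.degree_le_of_ne_zero F (ι α) hne h0)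
      have h2 : (h.map q).natDegree ≤ h.natDegree := Polynomial.natDegree_map_le
      have h3 : f.natDegree = (minpoly F (ι α)).natDegree := Polynomial.natDegree_eq_of_degree_eq hfd
      have h4 : g.natDegree < f.natDegree := by
        by_cases hg0 : g = 0
        · rw [hg0, Polynomial.natDegree_zero, h3]
          exact minpoly.natDegree_pos halg
        · exact Polynomial.natDegree_lt_natDegree hg0 hg
      omega
    · obtain ⟨a, ha⟩ := residue_surjective (ι α)
      refine ⟨a, ha, fun z hz => ?_⟩
      obtain ⟨g, rfl⟩ := hz
      refine ⟨g, rfl, fun h _ hne h0 => halg ?_⟩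
      rw [← isAlgebraic_iff_isIntegral]
      exact ⟨_, hne, h0⟩
  obtain ⟨a, ha, hgen⟩ := hgen
  have hgood : GoodSub p ι (adjSub V a) := by
    constructor
    · rintro _ ⟨g, rfl⟩
      rw [Polynomial.coe_eval₂RingHom, Polynomial.hom_eval₂, ha, Polynomial.eval₂_eq_sum,
        Polynomial.sum]
      refine Subring.sum_mem ι.range fun i _ => Subring.mul_mem ι.range ?_
        (Subring.pow_mem ι.range ⟨α, rfl⟩ _)
      exact hV.1 _ (g.coeff i).2
    · intro z hz
      obtain ⟨g, rfl, hg⟩ := hgen z hz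
      by_cases hg0 : g = 0
      · left; simp [hg0]
      right
      obtain ⟨m, h, hgh, i, hi⟩ := factor_poly p ι V hp hV g hg0
      refine ⟨m, h.eval₂ V.subtype a, ⟨h, rfl⟩, ?_, ?_⟩
      · have hpV : ((p : V) ^ m) ≠ 0 := by
          apply pow_ne_zero
          intro h
          apply hp0
          simpa using congrArg (Subtype.val) h
        have hdeg : h.natDegree ≤ g.natDegree := by
          rw [hgh, ← C_pow, Polynomial.natDegree_C_mul hpV]
        have hne : h.map q ≠ 0 := by
          intro h0
          apply hi
          have := congrArg (fun g => ((Polynomial.coeff g i : F) : ResidueField O)) h0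
          simp only [Polynomial.coeff_map, Polynomial.coeff_zero] at this
          rw [← residue_eq_zero_iff]
          exact this
        have := hg h hdeg hne
        rw [Polynomial.aeval_def, Polynomial.eval₂_map, hqr, ← ha, ← Polynomial.hom_eval₂] at this
        rwa [Ne, residue_eq_zero_iff] at this
      · conv_lhs => rw [hgh]
        simp [Polynomial.eval₂_mul, Polynomial.eval₂_pow]
  exact hα a (hmax.2 hgood (le_adjSub V a) (mem_adjSub V a)) ha

end cohen

theorem exists_cohen (k : Type) [Field k] (p : ℕ) [Fact p.Prime] [CharP k p] :
    ∃ (V : Type) (_ : CommRing V) (_ : IsDomain V) (_ : IsNoetherianRing V) (ρ : V →+* k),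
      Function.Surjective ρ ∧ (p : V) ≠ 0 ∧ ρ p = 0 ∧ ∀ v, ρ v = 0 → ∃ w, v = p * w := by
  have hpp : p.Prime := Fact.out
  obtain ⟨O, _, _, _, hp0, hp, ⟨ι⟩, hroot⟩ := exists_bigRing k p
  obtain ⟨V, hV, hinv, hsurj⟩ := exists_cohen_sub p ι hp0 hp hroot
  let r : V →+* ι.range := ((residue O).comp V.subtype).codRestrict ι.range (fun s => hV.1 s s.2)
  let e : k ≃+* ι.range := RingEquiv.ofBijective ι.rangeRestrict
    ⟨fun a b h => ι.injective (congrArg Subtype.val h), ι.rangeRestrict_surjective⟩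
  let ρ : V →+* k := e.symm.toRingHom.comp r
  have hρ : ∀ v, ρ v = 0 ↔ (v : O) ∈ maximalIdeal O := by
    intro v
    change e.symm (r v) = 0 ↔ _
    rw [EmbeddingLike.map_eq_zero_iff, ← residue_eq_zero_iff]
    exact Subtype.ext_iff
  have hpV : (p : V) ≠ 0 := by
    intro h
    apply hp0
    simpa using congrArg (Subtype.val) h
  have hker : ∀ v, ρ v = 0 → ∃ w, v = p * w := by
    intro v hv
    rw [hρ] at hv
    rcases hV.2 v v.2 with h0 | ⟨m, u, hu, hum, h⟩
    · exact ⟨0, Subtype.ext (by simpa using h0)⟩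
    · cases m with
      | zero => rw [pow_zero, one_mul] at h; exact absurd (h ▸ hv) hum
      | succ m =>
        refine ⟨p ^ m * ⟨u, hu⟩, Subtype.ext ?_⟩
        rw [h]; push_cast; ring
  have hu : ∀ v : V, (v : O) ∉ maximalIdeal O → IsUnit v := by
    intro v hv
    obtain ⟨w, hw, h⟩ := hinv v v.2 hv
    exact IsUnit.of_mul_eq_one ⟨w, hw⟩ (Subtype.ext h)
  have hpr : Prime (p : V) := by
    refine ⟨hpV, fun h => ?_, fun a b hab => ?_⟩
    · have h1 : IsUnit ((p : V) : O) := h.map V.subtype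
      have h2 : ((p : V) : O) = p := by simp
      rw [h2] at h1
      exact (mem_nonunits_iff.1 ((mem_maximalIdeal _).1 hp)) h1
    · have hρp : ρ p = 0 := by rw [hρ]; simpa using hp
      have : ρ a * ρ b = 0 := by
        obtain ⟨c, hc⟩ := hab
        rw [← map_mul, hc, map_mul, hρp, zero_mul]
      rcases mul_eq_zero.1 this with h | h
      · exact Or.inl (hker a h)
      · exact Or.inr (hker b h)
  have hdvr : IsDiscreteValuationRing V :=
    IsDiscreteValuationRing.ofHasUnitMulPowIrreducibleFactorization ⟨p, hpr.irreducible, by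
      intro v hv
      rcases hV.2 v v.2 with h0 | ⟨m, u, huV, hum, h⟩
      · exact absurd (Subtype.ext h0) hv
      · refine ⟨m, (hu ⟨u, huV⟩ hum).unit, Subtype.ext ?_⟩
        rw [h]; simp⟩
  refine ⟨V, inferInstance, inferInstance, inferInstance, ρ, ?_, hpV, ?_, hker⟩
  · intro a
    obtain ⟨v, hv, hva⟩ := hsurj a
    refine ⟨⟨v, hv⟩, ?_⟩
    change e.symm _ = a
    rw [RingEquiv.symm_apply_eq]
    exact Subtype.ext hva
  · rw [hρ]; simpa using hp
theorem lift_char_zero {C : Type} [CommRing C] {k : Type} [Field k] [CharZero k]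
    (π : C →+* k) (hπ : Function.Surjective π) (hn : IsNilpotent (RingHom.ker π)) :
    ∃ g : k →+* C, π.comp g = RingHom.id k := by
  have hu : ∀ c : C, π c ≠ 0 → IsUnit c := by
    intro c hc
    obtain ⟨d, hd⟩ := hπ (π c)⁻¹
    have h1 : c * d - 1 ∈ RingHom.ker π := by
      rw [RingHom.mem_ker, map_sub, map_mul, hd, map_one, mul_inv_cancel₀ hc, sub_self]
    obtain ⟨N, hN⟩ := hn
    have h2 : IsNilpotent (c * d - 1) := ⟨N, by
      have := Ideal.pow_mem_pow h1 N
      rw [hN] at this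
      simpa using this⟩
    have h3 : IsUnit (c * d) := by
      have := h2.isUnit_add_one
      simpa using this
    exact isUnit_of_mul_isUnit_left h3
  let γ : ℚ →+* C := IsLocalization.lift (M := nonZeroDivisors ℤ) (g := Int.castRingHom C) (by
    rintro ⟨z, hz⟩
    apply hu
    simpa using nonZeroDivisors.ne_zero hz)
  letI : Algebra ℚ C := γ.toAlgebra
  obtain ⟨s, hs⟩ := exists_isTranscendenceBasis ℚ k
  have halg := hs.isAlgebraic_field
  have : Algebra.FormallySmooth ℚ k :=
    Algebra.FormallySmooth.of_algebraicIndependent_of_isSeparable hs.1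
  have hcomm : π.comp (algebraMap ℚ C) = algebraMap ℚ k := Subsingleton.elim _ _
  let πa : C →ₐ[ℚ] k := { π with commutes' := fun r => congrArg (fun h => h r) hcomm }
  refine ⟨(Algebra.FormallySmooth.liftOfSurjective (AlgHom.id ℚ k) πa hπ hn).toRingHom, ?_⟩
  ext v
  exact Algebra.FormallySmooth.liftOfSurjective_apply (AlgHom.id ℚ k) πa hπ hn v

theorem exists_coeffRing {C : Type} [CommRing C] [IsLocalRing C]
    (hn : IsNilpotent (maximalIdeal C)) :
    ∃ (V : Type) (_ : CommRing V) (_ : IsDomain V) (_ : IsNoetherianRing V) (ϖ : V)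
      (ρ : V →+* ResidueField C) (g : V →+* C),
      Function.Surjective ρ ∧ ϖ ≠ 0 ∧ ρ ϖ = 0 ∧ (∀ v, ρ v = 0 → ∃ w, v = ϖ * w) ∧
      (residue C).comp g = ρ := by
  have hn' : IsNilpotent (RingHom.ker (residue C)) := by rwa [ker_residue]
  obtain ⟨p, hp⟩ := CharP.exists (ResidueField C)
  rcases CharP.char_is_prime_or_zero (ResidueField C) p with hpp | rfl
  · have : Fact p.Prime := ⟨hpp⟩
    obtain ⟨V, _, _, _, ρ, hρ, hp0, hρp, hker⟩ := exists_cohen (ResidueField C) p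
    obtain ⟨g, hg⟩ := lift_nilp p (residue C) residue_surjective hn'
      (fun v hv => (mul_eq_zero.1 hv).resolve_left hp0) ρ hρ hρp hker
    exact ⟨V, inferInstance, inferInstance, inferInstance, p, ρ, g, hρ, hp0, hρp, hker, hg⟩
  · have : CharZero (ResidueField C) := CharP.charP_to_charZero _
    obtain ⟨g, hg⟩ := lift_char_zero (residue C) residue_surjective hn'
    refine ⟨PowerSeries (ResidueField C), inferInstance, inferInstance, inferInstance,
      PowerSeries.X, PowerSeries.constantCoeff, g.comp PowerSeries.constantCoeff, ?_,
      PowerSeries.X_ne_zero, by simp, ?_, ?_⟩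
    · intro a; exact ⟨PowerSeries.C a, by simp⟩
    · intro v hv
      obtain ⟨w, hw⟩ := PowerSeries.X_dvd_iff.2 hv
      exact ⟨w, hw⟩
    · rw [← RingHom.comp_assoc, hg, RingHom.id_comp]

section polyreg
open RingTheory.Sequence MvPolynomial

variable {V k : Type} [CommRing V] [IsDomain V] [Field k] {n : ℕ}

/-- kill the variables in `l` -/
noncomputable def killVars (l : List (Fin n)) : MvPolynomial (Fin n) V →+* MvPolynomial (Fin n) V :=
  eval₂Hom C (fun j => if j ∈ l then 0 else X j)

lemma sub_killVars_mem (l : List (Fin n)) (a : MvPolynomial (Fin n) V) :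
    a - killVars l a ∈ Ideal.ofList (l.map (X : Fin n → MvPolynomial (Fin n) V)) := by
  rw [← Ideal.Quotient.eq]
  change (Ideal.Quotient.mk _) a = ((Ideal.Quotient.mk _).comp (killVars l)) a
  congr 1
  apply MvPolynomial.ringHom_ext
  · intro r; simp [killVars]
  · intro j
    simp only [killVars, RingHom.comp_apply, eval₂Hom_X']
    split_ifs with h
    · rw [map_zero, Ideal.Quotient.eq_zero_iff_mem]
      exact Ideal.subset_span (List.mem_map_of_mem h)
    · rfl

lemma ker_killVars (ϖ : V) (ρ : V →+* k) (hρϖ : ρ ϖ = 0) (hker : ∀ v, ρ v = 0 → ∃ w, v = ϖ * w)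
    (l : List (Fin n)) (a : MvPolynomial (Fin n) V) :
    a ∈ Ideal.ofList (C ϖ :: l.map (X : Fin n → MvPolynomial (Fin n) V)) ↔
      MvPolynomial.map ρ (killVars l a) = 0 := by
  constructor
  · intro h
    have : Ideal.ofList (C ϖ :: l.map (X : Fin n → MvPolynomial (Fin n) V)) ≤
        RingHom.ker ((MvPolynomial.map ρ).comp (killVars l)) := by
      rw [Ideal.ofList, Ideal.span_le]
      intro z hz
      rw [SetLike.mem_coe, RingHom.mem_ker]
      simp only [List.mem_cons, List.mem_map, Set.mem_ofPred_eq] at hz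
      rcases hz with rfl | ⟨j, hj, rfl⟩
      · simp [killVars, hρϖ]
      · simp [killVars, hj]
    exact this h
  · intro h
    rw [← sub_add_cancel a (killVars l a), Ideal.ofList_cons]
    refine Ideal.add_mem _ (Ideal.mem_sup_right (sub_killVars_mem l a)) (Ideal.mem_sup_left ?_)
    rw [Ideal.mem_span_singleton, MvPolynomial.C_dvd_iff_dvd_coeff]
    intro i
    have := congrArg (MvPolynomial.coeff i) h
    rw [MvPolynomial.coeff_map, MvPolynomial.coeff_zero] at this
    obtain ⟨w, hw⟩ := hker _ this
    exact ⟨w, hw⟩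

lemma weaklyReg_vars (ϖ : V) (h0 : ϖ ≠ 0) (ρ : V →+* k) (hρϖ : ρ ϖ = 0)
    (hker : ∀ v, ρ v = 0 → ∃ w, v = ϖ * w) (l : List (Fin n)) (hl : l.Nodup) :
    IsWeaklyRegular (MvPolynomial (Fin n) V)
      (C ϖ :: l.map (X : Fin n → MvPolynomial (Fin n) V)) := by
  induction l using List.reverseRecOn with
  | nil =>
    rw [List.map_nil, isWeaklyRegular_singleton_iff]
    intro a b hab
    exact mul_left_cancel₀ (by simpa using h0 : (C ϖ : MvPolynomial (Fin n) V) ≠ 0) hab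
  | append_singleton l j ih =>
    rw [List.map_append, ← List.cons_append, isWeaklyRegular_append_iff]
    have hj : j ∉ l := by
      rw [List.nodup_append] at hl
      intro hj
      exact hl.2.2 j hj j (by simp) rfl
    refine ⟨ih (hl.sublist (List.sublist_append_left _ _)), ?_⟩
    rw [List.map_singleton, isWeaklyRegular_singleton_iff]
    have : (Ideal.ofList (C ϖ :: l.map (X : Fin n → MvPolynomial (Fin n) V)) • ⊤ :
      Ideal (MvPolynomial (Fin n) V)) = Ideal.ofList (C ϖ :: l.map X) := by simp
    rw [this, ← regMod_iff]
    intro a ha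
    rw [ker_killVars ϖ ρ hρϖ hker] at ha ⊢
    have hX : MvPolynomial.map ρ (killVars l (X j)) = (X j : MvPolynomial (Fin n) k) := by
      simp [killVars, hj]
    rw [map_mul, map_mul, hX] at ha
    exact (mul_eq_zero.1 ha).resolve_left (MvPolynomial.X_ne_zero j)

end polyreg

open RingTheory.Sequence in
theorem exists_regular_cover {C : Type} [CommRing C] [IsLocalRing C]
    (hn : IsNilpotent (maximalIdeal C)) {n : ℕ} (u : Fin n → C)
    (hu : Ideal.span (Set.range u) = maximalIdeal C) :
    ∃ (Q : Type) (_ : CommRing Q) (_ : IsLocalRing Q) (_ : IsNoetherianRing Q)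
      (f : Q →+* C) (w : Fin (n + 1) → Q), Function.Surjective f ∧
      Ideal.span (Set.range w) = maximalIdeal Q ∧ IsRegular Q (List.ofFn w) ∧
      ∀ i : Fin n, f (w i.succ) = u i := by
  obtain ⟨V, _, _, _, ϖ, ρ, g, hρ, hϖ, hρϖ, hker, hg⟩ := exists_coeffRing hn
  let P := MvPolynomial (Fin n) V
  let f0 : P →+* C := MvPolynomial.eval₂Hom g u
  have hum : ∀ i, u i ∈ maximalIdeal C := fun i => hu ▸ Ideal.subset_span ⟨i, rfl⟩
  have hres : (residue C).comp f0 = ρ.comp MvPolynomial.constantCoeff := by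
    apply MvPolynomial.ringHom_ext
    · intro r; simp [f0, ← hg]
    · intro i; simp [f0, hum i]
  let 𝔭 : Ideal P := (maximalIdeal C).comap f0
  have h𝔭 : 𝔭.IsPrime := Ideal.comap_isPrime f0 _
  let Q := Localization.AtPrime 𝔭
  let f : Q →+* C := IsLocalization.lift (M := 𝔭.primeCompl) (g := f0) (by
    rintro ⟨y, hy⟩
    by_contra hc
    exact hy ((mem_maximalIdeal _).2 hc))
  have hf : ∀ a : P, f (algebraMap P Q a) = f0 a := fun a => IsLocalization.lift_eq _ _
  let w0 : Fin (n + 1) → P := Fin.cons (MvPolynomial.C ϖ) MvPolynomial.X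
  have hl0 : List.ofFn w0 = MvPolynomial.C ϖ :: (List.finRange n).map MvPolynomial.X := by
    rw [List.ofFn_succ, List.ofFn_eq_map]
    simp [w0]
  have h𝔭w : 𝔭 = Ideal.ofList (List.ofFn w0) := by
    ext a
    rw [hl0, ker_killVars ϖ ρ hρϖ hker]
    have h1 : (MvPolynomial.map ρ).comp (killVars (List.finRange n)) =
        (MvPolynomial.C (σ := Fin n)).comp (ρ.comp (MvPolynomial.constantCoeff (σ := Fin n))) := by
      apply MvPolynomial.ringHom_ext
      · intro r; simp [killVars]
      · intro i; simp [killVars]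
    have h2 : MvPolynomial.map ρ (killVars (List.finRange n) a) =
        MvPolynomial.C (ρ (MvPolynomial.constantCoeff a)) := congrArg (fun h => h a) h1
    rw [h2, MvPolynomial.C_eq_zero]
    have h3 : residue C (f0 a) = ρ (MvPolynomial.constantCoeff a) := congrArg (fun h => h a) hres
    rw [← h3, residue_eq_zero_iff]
    rfl
  let w : Fin (n + 1) → Q := fun i => algebraMap P Q (w0 i)
  have hlw : List.ofFn w = (List.ofFn w0).map (algebraMap P Q) := by
    rw [List.map_ofFn]; rfl
  have hspan : Ideal.span (Set.range w) = maximalIdeal Q := by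
    have e1 : 𝔭.map (algebraMap P Q) = (Ideal.ofList (List.ofFn w0)).map (algebraMap P Q) :=
      congrArg (Ideal.map (algebraMap P Q)) h𝔭w
    rw [← IsLocalization.AtPrime.map_eq_maximalIdeal 𝔭 Q, e1, Ideal.map_ofList, ← hlw]
    unfold Ideal.ofList
    congr 1
    ext r
    exact List.mem_ofFn.symm
  have hwreg : IsRegular Q (List.ofFn w) := by
    rw [hlw]
    refine IsWeaklyRegular.isRegular_of_isLocalization_of_mem Q 𝔭 ?_ ?_
    · rw [hl0]
      exact weaklyReg_vars ϖ hϖ ρ hρϖ hker _ (List.nodup_finRange n)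
    · intro r hr
      rw [h𝔭w]
      exact Ideal.subset_span hr
  have hfw : ∀ i : Fin n, f (w i.succ) = u i := by
    intro i
    rw [hf]
    exact MvPolynomial.eval₂_X _ _ _
  refine ⟨Q, inferInstance, inferInstance, inferInstance, f, w, ?_, hspan, hwreg, hfw⟩
  letI : Algebra Q C := f.toAlgebra
  have hsm : ∀ (a : Q) (c : C), a • c = f a * c := fun a c => rfl
  let N : Submodule Q C := LinearMap.range (Algebra.linearMap Q C)
  have h1 : (⊤ : Submodule Q C) ≤ N ⊔ maximalIdeal Q • ⊤ := by
    intro c _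
    obtain ⟨v, hv⟩ := hρ (residue C c)
    have h2 : c - g v ∈ maximalIdeal C := by
      rw [← residue_eq_zero_iff, map_sub, ← hv, ← hg]
      simp
    rw [← hu] at h2
    obtain ⟨d, hd⟩ := (Ideal.mem_span_range_iff_exists_fun).1 h2
    have h3 : c = f (algebraMap P Q (MvPolynomial.C v)) + ∑ i, w i.succ • d i := by
      simp only [hsm, hfw]
      have e2 : f0 (MvPolynomial.C v) = g v := MvPolynomial.eval₂_C _ _ _
      rw [hf, e2]
      rw [← sub_eq_iff_eq_add', ← hd]
      exact Finset.sum_congr rfl fun i _ => mul_comm _ _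
    rw [h3]
    refine Submodule.add_mem _ (Submodule.mem_sup_left ⟨_, rfl⟩) (Submodule.mem_sup_right ?_)
    refine Submodule.sum_mem _ fun i _ => Submodule.smul_mem_smul ?_ trivial
    rw [← hspan]
    exact Ideal.subset_span ⟨_, rfl⟩
  have h2 : ∀ i : ℕ, (⊤ : Submodule Q C) ≤ N ⊔ maximalIdeal Q ^ i • ⊤ := by
    intro i
    induction i with
    | zero =>
      rw [pow_zero, Ideal.one_eq_top, Submodule.top_smul]
      exact le_sup_right
    | succ i ih =>
      refine ih.trans (sup_le le_sup_left ?_)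
      refine (Submodule.smul_mono le_rfl h1).trans ?_
      rw [Submodule.smul_sup, ← Submodule.mul_smul, ← pow_succ]
      exact sup_le_sup Submodule.smul_le_right le_rfl
  have hmap : (maximalIdeal Q).map f ≤ maximalIdeal C := by
    rw [← hspan, Ideal.map_span, Ideal.span_le]
    rintro _ ⟨_, ⟨i, rfl⟩, rfl⟩
    have : w0 i ∈ 𝔭 := by
      rw [h𝔭w]; exact Ideal.subset_span (List.mem_ofFn.2 ⟨i, rfl⟩)
    rw [hf]
    exact this
  obtain ⟨L, hL⟩ := hn
  have h3 : maximalIdeal Q ^ L • (⊤ : Submodule Q C) = ⊥ := by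
    rw [eq_bot_iff, Submodule.smul_le]
    intro r hr c _
    have : f r ∈ maximalIdeal C ^ L := by
      refine Ideal.pow_right_mono hmap L ?_
      rw [← Ideal.map_pow]
      exact Ideal.mem_map_of_mem f hr
    rw [hL] at this
    have h0 : f r = 0 := by simpa using this
    rw [hsm, h0, zero_mul]
    exact Submodule.zero_mem _
  intro c
  have := h2 L (Submodule.mem_top (x := c))
  rw [h3, sup_bot_eq] at this
  exact this
open RingTheory.Sequence in
lemma regularLocal_of_gens {Q : Type} [CommRing Q] [IsLocalRing Q] [IsNoetherianRing Q] {N : ℕ}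
    (w : Fin N → Q) (hw : Ideal.span (Set.range w) = maximalIdeal Q)
    (hreg : IsRegular Q (List.ofFn w)) : ringKrullDim Q = N ∧ IsRegularLocal Q := by
  have hof : Ideal.ofList (List.ofFn w) = maximalIdeal Q := by
    rw [← hw]
    unfold Ideal.ofList
    congr 1
    ext r
    exact List.mem_ofFn
  have hdim : ringKrullDim Q = N := by
    rw [← ringKrullDim_add_length_eq_ringKrullDim_of_isRegular _ hreg, hof, List.length_ofFn]
    have : ringKrullDim (Q ⧸ maximalIdeal Q) = 0 := ringKrullDim_eq_zero_of_field (ResidueField Q)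
    rw [this, zero_add]
  refine ⟨hdim, inferInstance, ?_⟩
  have h1 : edim Q ≤ N := Nat.sInf_le ⟨w, hw⟩
  have h2 : ∃ y : Fin (edim Q) → Q, Ideal.span (Set.range y) = maximalIdeal Q :=
    Nat.sInf_mem (s := {k : ℕ | ∃ y : Fin k → Q, Ideal.span (Set.range y) = maximalIdeal Q})
      ⟨N, w, hw⟩
  obtain ⟨y, hy⟩ := h2
  have h3 : (maximalIdeal Q).spanFinrank ≤ edim Q := by
    rw [← hy]
    refine (Submodule.spanFinrank_span_le_ncard_of_finite (Set.finite_range y)).trans ?_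
    rw [← Set.image_univ]
    refine (Set.ncard_image_le Set.finite_univ).trans ?_
    rw [Set.ncard_univ, Nat.card_eq_fintype_card, Fintype.card_fin]
  have h4 := ringKrullDim_le_spanFinrank_maximalIdeal Q
  rw [hdim] at h4 ⊢
  have h5 : N ≤ (maximalIdeal Q).spanFinrank := by exact_mod_cast h4
  have : edim Q = N := le_antisymm h1 (h5.trans h3)
  rw [this]

open RingTheory.Sequence in
lemma pow_le_of_regular {Q : Type} [CommRing Q] [IsLocalRing Q] [IsNoetherianRing Q] {N : ℕ}
    (hdim : ringKrullDim Q = N) (y : Fin N → Q) (hreg : IsRegular Q (List.ofFn y)) :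
    ∃ L, maximalIdeal Q ^ L ≤ Ideal.span (Set.range y) := by
  have hof : Ideal.ofList (List.ofFn y) = Ideal.span (Set.range y) := by
    unfold Ideal.ofList
    congr 1
    ext r
    exact List.mem_ofFn
  set J := Ideal.span (Set.range y) with hJ
  have h1 := ringKrullDim_add_length_eq_ringKrullDim_of_isRegular _ hreg
  rw [hof, hdim, List.length_ofFn] at h1
  have h2 : ringKrullDim (Q ⧸ J) ≤ 0 := by
    by_contra hcon
    push Not at hcon
    have h3 : (1 : WithBot ℕ∞) ≤ ringKrullDim (Q ⧸ J) := by
      revert hcon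
      generalize ringKrullDim (Q ⧸ J) = z
      intro hcon
      induction z with
      | bot => exact absurd hcon (by simp)
      | coe z =>
        have h5 : (0 : ℕ∞) < z := by exact_mod_cast hcon
        have h6 : (1 : ℕ∞) ≤ z := Order.one_le_iff_pos.2 h5
        exact_mod_cast h6
    have h4 : (1 : WithBot ℕ∞) + N ≤ N := by
      calc (1 : WithBot ℕ∞) + N ≤ ringKrullDim (Q ⧸ J) + N := by gcongr
        _ = N := h1
    have : (1 + N : ℕ) ≤ N := by exact_mod_cast h4
    omega
  have h3 : Ring.KrullDimLE 0 (Q ⧸ J) := by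
    rw [Ring.krullDimLE_iff]; exact_mod_cast h2
  have h4 : IsArtinianRing (Q ⧸ J) := isArtinianRing_iff_isNoetherianRing_krullDimLE_zero.2 ⟨inferInstance, h3⟩
  obtain ⟨L, hL⟩ := IsArtinianRing.isNilpotent_jacobson_bot (R := Q ⧸ J)
  refine ⟨L, ?_⟩
  have h5 : (maximalIdeal Q).map (Ideal.Quotient.mk J) ≤ Ideal.jacobson ⊥ := by
    rw [Ideal.map_le_iff_le_comap]
    intro r hr
    rw [Ideal.mem_comap, Ideal.mem_jacobson_bot]
    intro z
    obtain ⟨z, rfl⟩ := Ideal.Quotient.mk_surjective z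
    have h7 := Ideal.mem_jacobson_bot.1 (IsLocalRing.maximalIdeal_le_jacobson ⊥ hr) z
    simpa using h7.map (Ideal.Quotient.mk J)
  have h6 : (maximalIdeal Q ^ L).map (Ideal.Quotient.mk J) ≤ ⊥ := by
    rw [Ideal.map_pow]
    exact (Ideal.pow_right_mono h5 L).trans hL.le
  rw [Ideal.map_le_iff_le_comap, ← RingHom.ker_eq_comap_bot, Ideal.mk_ker] at h6
  exact h6

lemma exists_soc {R M : Type} [CommRing R] [AddCommGroup M] [Module R M] (m : Ideal R)
    (N : Submodule R M) (v : M) (hv : v ∉ N) (L : ℕ) (hL : m ^ L • (⊤ : Submodule R M) ≤ N) :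
    ∃ c : R, c • v ∉ N ∧ ∀ r ∈ m, r • c • v ∈ N := by
  classical
  have hex : ∃ i, ∀ c ∈ m ^ i, c • v ∈ N :=
    ⟨L, fun c hc => hL (Submodule.smul_mem_smul hc trivial)⟩
  have hspec := Nat.find_spec hex
  rcases hi : Nat.find hex with _ | i
  · rw [hi] at hspec
    exact absurd (by simpa using hspec 1 (by simp)) hv
  · have hmin := Nat.find_min hex (m := i) (by omega)
    push Not at hmin
    obtain ⟨c, hc, hcv⟩ := hmin
    refine ⟨c, hcv, fun r hr => ?_⟩
    rw [hi] at hspec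
    rw [← mul_smul]
    refine hspec _ ?_
    rw [pow_succ']
    exact Ideal.mul_mem_mul hr hc

theorem core {A : Type} [CommRing A] [IsLocalRing A] [IsNoetherianRing A] {n : ℕ}
    (x u : Fin n → A) (U : Matrix (Fin n) (Fin n) A) (hU : U.mulVec u = x)
    (hu : Ideal.span (Set.range u) = maximalIdeal A)
    (hΔ : U.det ∉ Ideal.span (Set.range x)) :
    IsCompleteIntersectionDimZero (A ⧸ Ideal.span (Set.range x)) ∧
    (∃ L, maximalIdeal A ^ L ≤ Ideal.span (Set.range x)) ∧
    ∀ a, (∀ r ∈ maximalIdeal A, r * a ∈ Ideal.span (Set.range x)) →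
      ∃ c, a - c * U.det ∈ Ideal.span (Set.range x) := by
  set I := Ideal.span (Set.range x) with hI
  set m := maximalIdeal A with hm
  -- Krull
  obtain ⟨s, hs⟩ : ∃ s, U.det ∉ I ⊔ m ^ s := by
    by_contra hcon
    push Not at hcon
    have hItop : I ≠ ⊤ := fun h => hΔ (h ▸ trivial)
    have : Nontrivial (A ⧸ I) := Ideal.Quotient.nontrivial_iff.2 hItop
    have : IsLocalRing (A ⧸ I) := .of_surjective' (Ideal.Quotient.mk I) Ideal.Quotient.mk_surjective
    have hne : m.map (Ideal.Quotient.mk I) ≠ ⊤ := by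
      intro h
      have h1 := congrArg (Ideal.comap (Ideal.Quotient.mk I)) h
      rw [Ideal.comap_map_of_surjective' _ Ideal.Quotient.mk_surjective, Ideal.mk_ker,
        sup_eq_left.2 (le_maximalIdeal hItop), Ideal.comap_top] at h1
      exact Ideal.IsPrime.ne_top' h1
    have hinf := Ideal.iInf_pow_eq_bot_of_isLocalRing _ hne
    have h0 : Ideal.Quotient.mk I U.det = 0 := by
      rw [← Ideal.mem_bot, ← hinf, Ideal.mem_iInf]
      intro i
      rw [← Ideal.map_pow]
      obtain ⟨a, ha, b, hb, hab⟩ := Submodule.mem_sup.1 (hcon i)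
      rw [← hab, map_add, Ideal.Quotient.eq_zero_iff_mem.2 ha, zero_add]
      exact Ideal.mem_map_of_mem _ hb
    exact hΔ (Ideal.Quotient.eq_zero_iff_mem.1 h0)
  -- the Artinian quotient
  let C := A ⧸ m ^ (s + 1)
  let π : A →+* C := Ideal.Quotient.mk (m ^ (s + 1))
  have hπ : Function.Surjective π := Ideal.Quotient.mk_surjective
  have hmtop : m ^ (s + 1) ≠ ⊤ := fun h =>
    Ideal.IsPrime.ne_top' (I := m) (top_le_iff.1 (h ▸ Ideal.pow_le_self (by omega)))
  have : Nontrivial C := Ideal.Quotient.nontrivial_iff.2 hmtop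
  have : IsLocalRing C := .of_surjective' π hπ
  have hπloc : IsLocalHom π := .of_surjective π hπ
  have hmap_max : ∀ {R S : Type} [CommRing R] [CommRing S] [IsLocalRing R] [IsLocalRing S]
      (f : R →+* S), Function.Surjective f → (maximalIdeal R).map f = maximalIdeal S := by
    intro R S _ _ _ _ f hf
    have hloc : IsLocalHom f := .of_surjective f hf
    apply le_antisymm
    · rw [Ideal.map_le_iff_le_comap]
      intro r hr
      exact fun h => hr (hloc.map_nonunit r h)
    · intro z hz
      obtain ⟨r, rfl⟩ := hf z
      exact Ideal.mem_map_of_mem f (fun h => hz (h.map f))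
  have hmC : m.map π = maximalIdeal C := hmap_max π hπ
  have hmC0 : maximalIdeal C ^ (s + 1) = ⊥ := by
    rw [← hmC, ← Ideal.map_pow]
    exact Ideal.map_quotient_self _
  have huC : Ideal.span (Set.range (fun i => π (u i))) = maximalIdeal C := by
    have e : m.map π = (Ideal.span (Set.range u)).map π := congrArg (Ideal.map π) hu.symm
    rw [← hmC, e, Ideal.map_span, ← Set.range_comp]
    rfl
  obtain ⟨Q, _, _, _, f, w, hf, hw, hwreg, hfw⟩ :=
    exists_regular_cover ⟨s + 1, hmC0⟩ (fun i => π (u i)) huC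
  have hfmax := hmap_max f hf
  have hwm : ∀ i, w i ∈ maximalIdeal Q := fun i => hw ▸ Ideal.subset_span ⟨i, rfl⟩
  obtain ⟨hQdim, hQreg⟩ := regularLocal_of_gens w hw hwreg
  have hlift : ∀ a : A, ∃ q, f q = π a := fun a => hf _
  choose lf hlf using hlift
  have hw0 : f (w 0) ∈ Ideal.span (Set.range (fun i => π (u i))) := by
    rw [huC, ← hfmax]
    exact Ideal.mem_map_of_mem f (hwm 0)
  obtain ⟨c0, hc0⟩ := Ideal.mem_span_range_iff_exists_fun.1 hw0
  choose d hd using fun i => hf (c0 i)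
  let B : Matrix (Fin (n + 1)) (Fin (n + 1)) Q :=
    Fin.cons (Fin.cons 1 (fun j => - d j)) (fun i => Fin.cons 0 (fun j => lf (U i j)))
  let x' := B.mulVec w
  have hx'0 : f (x' 0) = 0 := by
    simp only [x', Matrix.mulVec, dotProduct, Fin.sum_univ_succ, B, Fin.cons_zero, Fin.cons_succ,
      map_add, map_sum, map_mul, map_neg, hd, hfw, map_one, one_mul]
    rw [← hc0]
    rw [← Finset.sum_add_distrib]
    refine Finset.sum_eq_zero fun j _ => ?_
    ring
  have hx's : ∀ i : Fin n, f (x' i.succ) = π (x i) := by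
    intro i
    simp only [x', Matrix.mulVec, dotProduct, Fin.sum_univ_succ, B, Fin.cons_zero, Fin.cons_succ,
      map_add, map_sum, map_mul, map_zero, zero_mul, zero_add, hlf, hfw]
    rw [← hU]
    simp only [Matrix.mulVec, dotProduct, map_sum, map_mul]
  obtain ⟨y, hyx, hyreg, hsoc⟩ := exchange (s + 1) (by omega) x' w (by
    intro i
    simp only [x', Matrix.mulVec, dotProduct]
    exact Ideal.sum_mem _ fun j _ => Ideal.mul_mem_left _ _ (hwm j)) hw hwreg
  set J := Ideal.span (Set.range y) with hJ
  have hfy : ∀ i, f (y i) = f (x' i) := by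
    intro i
    rw [← sub_eq_zero, ← map_sub, ← Ideal.mem_bot, ← hmC0, ← hfmax, ← Ideal.map_pow]
    exact Ideal.mem_map_of_mem f (hyx i)
  have hE : ∀ i, ∃ e : Fin (n + 1) → Q, (∀ j, e j ∈ maximalIdeal Q ^ s) ∧
      ∑ j, e j * w j = y i - x' i := by
    intro i
    have h1 := hyx i
    rw [pow_succ, ← hw] at h1
    have h2 : y i - x' i ∈ (maximalIdeal Q ^ s) • Submodule.span Q (Set.range w) := by
      rw [hw] at h1
      rw [show Submodule.span Q (Set.range w) = maximalIdeal Q from hw]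
      exact h1
    rw [Submodule.mem_ideal_smul_span_iff_exists_sum] at h2
    obtain ⟨a, ha, hsum⟩ := h2
    refine ⟨a, ha, ?_⟩
    rw [← hsum, Finsupp.sum_fintype]
    · rfl
    · simp
  choose E hEm hEy using hE
  let B' : Matrix (Fin (n + 1)) (Fin (n + 1)) Q := B + Matrix.of E
  have hB'y : B'.mulVec w = y := by
    funext i
    rw [Matrix.add_mulVec, Pi.add_apply]
    have : (Matrix.of E).mulVec w i = y i - x' i := hEy i
    rw [this]
    simp [x']
  have hΔJ : ∀ r ∈ maximalIdeal Q, r * B'.det ∈ J := by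
    intro r hr
    have h1 : ∀ j, B'.det * w j ∈ J := by
      intro j
      have h2 : B'.adjugate.mulVec y = B'.det • w := by
        rw [← hB'y, Matrix.mulVec_mulVec, Matrix.adjugate_mul, Matrix.smul_mulVec,
          Matrix.one_mulVec]
      have h3 := congrFun h2 j
      rw [Pi.smul_apply, smul_eq_mul] at h3
      rw [← h3]
      simp only [Matrix.mulVec, dotProduct]
      exact Ideal.sum_mem _ fun i _ => Ideal.mul_mem_left _ _ (Ideal.subset_span ⟨i, rfl⟩)
    rw [← hw] at hr
    obtain ⟨e, rfl⟩ := Ideal.mem_span_range_iff_exists_fun.1 hr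
    rw [Finset.sum_mul]
    refine Ideal.sum_mem _ fun j _ => ?_
    rw [mul_assoc, mul_comm (w j)]
    exact Ideal.mul_mem_left _ _ (h1 j)
  -- the map to `A/(I + m^s)`
  set I' := I ⊔ m ^ s with hI'
  have hle : m ^ (s + 1) ≤ I' := (Ideal.pow_le_pow_right (by omega)).trans le_sup_right
  let h : Q →+* A ⧸ I' := (Ideal.Quotient.factor hle).comp f
  have hh : Function.Surjective h := (Ideal.Quotient.factor_surjective hle).comp hf
  have hI'top : I' ≠ ⊤ := fun e => hs (e ▸ trivial)
  have : Nontrivial (A ⧸ I') := Ideal.Quotient.nontrivial_iff.2 hI'top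
  have : IsLocalRing (A ⧸ I') := .of_surjective' (Ideal.Quotient.mk I') Ideal.Quotient.mk_surjective
  have hhmax := hmap_max h hh
  have hmkmax := hmap_max (Ideal.Quotient.mk I') Ideal.Quotient.mk_surjective
  have hhf : ∀ q a, f q = π a → h q = Ideal.Quotient.mk I' a := by
    intro q a hqa
    change Ideal.Quotient.factor hle (f q) = _
    rw [hqa]
    rfl
  have hmax0 : maximalIdeal (A ⧸ I') ^ s = ⊥ := by
    rw [← hmkmax, ← Ideal.map_pow, eq_bot_iff, Ideal.map_le_iff_le_comap]
    intro a ha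
    rw [Ideal.mem_comap, Ideal.mem_bot, Ideal.Quotient.eq_zero_iff_mem]
    exact Ideal.mem_sup_right ha
  have hhs : ∀ q ∈ maximalIdeal Q ^ s, h q = 0 := by
    intro q hq
    rw [← Ideal.mem_bot, ← hmax0, ← hhmax, ← Ideal.map_pow]
    exact Ideal.mem_map_of_mem h hq
  have hhΔ : h B'.det = Ideal.Quotient.mk I' U.det := by
    have e1 : h.mapMatrix B' = h.mapMatrix B := by
      ext i j
      simp [B', hhs _ (hEm i j)]
    have e2 : B.det = (Matrix.of fun i j => lf (U i j)).det := by
      rw [Matrix.det_succ_column_zero, Fin.sum_univ_succ]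
      have e3 : ∀ i : Fin n, B i.succ 0 = 0 := fun i => rfl
      have e4 : B 0 0 = 1 := rfl
      simp only [e3, e4, mul_zero, zero_mul, Finset.sum_const_zero, add_zero]
      simp only [Fin.val_zero, pow_zero, one_mul]
      congr 1
    rw [RingHom.map_det, e1, ← RingHom.map_det, e2, RingHom.map_det, RingHom.map_det]
    congr 1
    ext i j
    exact hhf _ _ (hlf _)
  have hhΔ0 : h B'.det ≠ 0 := by
    rw [hhΔ, Ne, Ideal.Quotient.eq_zero_iff_mem]
    exact hs
  have hfJ : J.map f ≤ I.map π := by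
    rw [hJ, Ideal.map_span, Ideal.span_le]
    rintro _ ⟨_, ⟨i, rfl⟩, rfl⟩
    rw [hfy]
    refine Fin.cases ?_ (fun i => ?_) i
    · rw [hx'0]; exact Ideal.zero_mem _
    · rw [hx's]; exact Ideal.mem_map_of_mem π (Ideal.subset_span ⟨i, rfl⟩)
  have hJK : ∀ q ∈ J, h q = 0 := by
    intro q hq
    have h1 := hfJ (Ideal.mem_map_of_mem f hq)
    obtain ⟨a, ha, haq⟩ := (Ideal.mem_map_iff_of_surjective π hπ).1 h1
    rw [hhf q a haq.symm, Ideal.Quotient.eq_zero_iff_mem]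
    exact Ideal.mem_sup_left ha
  obtain ⟨L, hL⟩ := pow_le_of_regular hQdim y hyreg
  have hKJ : ∀ q, h q = 0 → q ∈ J := by
    intro q hq
    by_contra hqJ
    obtain ⟨c, hc, hcm⟩ := exists_soc (maximalIdeal Q) J q hqJ L (by simpa using hL)
    obtain ⟨e, he⟩ := hsoc (c • q) B'.det hc hcm hΔJ
    apply hhΔ0
    have := hJK _ he
    rwa [map_sub, map_mul, smul_eq_mul, map_mul, hq, mul_zero, mul_zero, sub_zero] at this
  -- `m ^ s ≤ I`
  have hms : m ^ s ≤ I := by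
    have h1 : m ^ s ≤ I ⊔ m • m ^ s := by
      intro a ha
      have h2 : π a ∈ (maximalIdeal Q ^ s).map f := by
        rw [Ideal.map_pow, hfmax, ← hmC, ← Ideal.map_pow]
        exact Ideal.mem_map_of_mem π ha
      have h3 : (maximalIdeal Q ^ s).map f ≤ I.map π :=
        (Ideal.map_mono (fun q hq => hKJ q (hhs q hq))).trans hfJ
      have h4 : a ∈ (I.map π).comap π := h3 h2
      rw [Ideal.comap_map_of_surjective' _ hπ, Ideal.mk_ker, pow_succ'] at h4
      exact h4
    exact Submodule.le_of_le_smul_of_le_jacobson_bot (IsNoetherian.noetherian _)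
      (IsLocalRing.maximalIdeal_le_jacobson _) h1
  have hI'I : I' = I := sup_eq_left.2 hms
  have hker : ∀ a, Ideal.Quotient.mk I' a = 0 ↔ a ∈ I := by
    intro a
    rw [Ideal.Quotient.eq_zero_iff_mem, hI'I]
  refine ⟨⟨Q, inferInstance, inferInstance, hQreg,
    (Ideal.quotEquivOfEq hI'I).toRingHom.comp h, ?_, n + 1, y, hQdim.symm, hyreg, ?_⟩, ⟨s, hms⟩, ?_⟩
  · exact (Ideal.quotEquivOfEq hI'I).surjective.comp hh
  · ext q
    rw [RingHom.mem_ker]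
    change Ideal.quotEquivOfEq hI'I (h q) = 0 ↔ _
    rw [EmbeddingLike.map_eq_zero_iff]
    exact ⟨hKJ q, hJK q⟩
  · intro a ha
    obtain ⟨q, hq⟩ := hh (Ideal.Quotient.mk I' a)
    obtain ⟨c, hc⟩ := hsoc B'.det q (fun hc => hhΔ0 (hJK _ hc)) hΔJ (by
      intro r hr
      apply hKJ
      obtain ⟨r', hr', hrr⟩ := (Ideal.mem_map_iff_of_surjective (Ideal.Quotient.mk I')
        Ideal.Quotient.mk_surjective).1 (hmkmax.symm ▸ hhmax ▸ Ideal.mem_map_of_mem h hr :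
          h r ∈ m.map (Ideal.Quotient.mk I'))
      rw [map_mul, hq, ← hrr, ← map_mul, hker]
      exact ha r' hr')
    obtain ⟨c', hc'⟩ := Ideal.Quotient.mk_surjective (h c)
    refine ⟨c', ?_⟩
    rw [← hker, map_sub, map_mul, hc', ← hq, ← hhΔ, ← map_mul, ← map_sub]
    exact hJK _ hc

lemma free_aux {A : Type} [CommRing A] [IsLocalRing A] [IsNoetherianRing A]
    {M : Type} [AddCommGroup M] [Module A M]
    {n : ℕ} (x u : Fin n → A) (U : Matrix (Fin n) (Fin n) A) (hU : U.mulVec u = x)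
    (hu : Ideal.span (Set.range u) = maximalIdeal A)
    (hind : ∀ m : Fin n → M, (∑ i, x i • m i) = 0 →
      ∀ i, m i ∈ Ideal.span (Set.range x) • (⊤ : Submodule A M))
    (L : ℕ) (hL : maximalIdeal A ^ L ≤ Ideal.span (Set.range x))
    (hsoc : ∀ a, (∀ r ∈ maximalIdeal A, r * a ∈ Ideal.span (Set.range x)) →
      ∃ c, a - c * U.det ∈ Ideal.span (Set.range x))
    {ι : Type} [Fintype ι] (e : ι → M) (hspan : Submodule.span A (Set.range e) = ⊤)
    (hmin : ∀ b : ι → A, ∑ j, b j • e j ∈ maximalIdeal A • (⊤ : Submodule A M) →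
      ∀ j, b j ∈ maximalIdeal A) :
    Module.Free (A ⧸ (Ideal.span (Set.range x) ^ 2))
      (M ⧸ ((Ideal.span (Set.range x) ^ 2) • ⊤ : Submodule A M)) := by
  classical
  set I := Ideal.span (Set.range x) with hI
  have hxI : ∀ i, x i ∈ I := fun i => Ideal.subset_span ⟨i, rfl⟩
  have hΔm : ∀ r ∈ maximalIdeal A, r * U.det ∈ I := by
    intro r hr
    rw [← hu] at hr
    obtain ⟨c, rfl⟩ := Ideal.mem_span_range_iff_exists_fun.1 hr
    rw [Finset.sum_mul]
    refine Ideal.sum_mem _ fun j _ => ?_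
    rw [mul_assoc]
    refine Ideal.mul_mem_left _ _ ?_
    have h2 : U.adjugate.mulVec x = U.det • u := by
      rw [← hU, Matrix.mulVec_mulVec, Matrix.adjugate_mul, Matrix.smul_mulVec,
        Matrix.one_mulVec]
    have h3 := congrFun h2 j
    rw [Pi.smul_apply, smul_eq_mul] at h3
    rw [mul_comm, ← h3]
    simp only [Matrix.mulVec, dotProduct]
    exact Ideal.sum_mem _ fun i _ => Ideal.mul_mem_left _ _ (hxI i)
  have hsum : ∀ a : ι → A, (∀ j, a j ∈ I) → ∑ j, a j • e j ∈ I • (⊤ : Submodule A M) :=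
    fun a ha => Submodule.sum_mem _ fun j _ => Submodule.smul_mem_smul (ha j) trivial
  have step1 : ∀ a : ι → A, ∑ j, a j • e j ∈ I • (⊤ : Submodule A M) → ∀ j, a j ∈ I := by
    intro a ha
    by_contra hcon
    let N : Submodule A (ι → A) := Submodule.pi Set.univ (fun _ => I)
    have hN : ∀ v : ι → A, v ∈ N ↔ ∀ j, v j ∈ I := fun v => by
      simp [N, Submodule.mem_pi]
    obtain ⟨c, hc, hcm⟩ := exists_soc (maximalIdeal A) N a (fun h => hcon ((hN a).1 h)) L (by
      rw [Submodule.smul_le]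
      intro r hr v _
      rw [hN]
      intro j
      exact Ideal.mul_mem_right _ _ (hL hr))
    have hcm' : ∀ j, ∀ r ∈ maximalIdeal A, r * (c * a j) ∈ I := fun j r hr =>
      (hN _).1 (hcm r hr) j
    choose b hb using fun j => hsoc (c * a j) (hcm' j)
    have hbm : ∀ j, b j ∈ maximalIdeal A := by
      apply hmin
      rw [← hu]
      refine main_lemma x u U hU hind _ ?_
      have e1 : U.det • ∑ j, b j • e j = c • ∑ j, a j • e j -
          ∑ j, (c * a j - b j * U.det) • e j := by
        simp only [Finset.smul_sum, ← Finset.sum_sub_distrib]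
        refine Finset.sum_congr rfl fun j _ => ?_
        module
      rw [e1]
      exact Submodule.sub_mem _ (Submodule.smul_mem _ _ ha) (hsum _ hb)
    apply hc
    rw [hN]
    intro j
    have := I.add_mem (hb j) (hΔm _ (hbm j))
    simpa using this
  have step2 : ∀ a : ι → A, ∑ j, a j • e j ∈ (I ^ 2) • (⊤ : Submodule A M) →
      ∀ j, a j ∈ I ^ 2 := by
    intro a ha
    have ha1 : ∀ j, a j ∈ I := step1 a (Submodule.smul_mono_left (Ideal.pow_le_self two_ne_zero) ha)
    choose c hc using fun j => Ideal.mem_span_range_iff_exists_fun.1 (ha1 j)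
    have hy : ∃ y : Fin n → M, (∀ i, y i ∈ I • (⊤ : Submodule A M)) ∧
        ∑ i, x i • y i = ∑ j, a j • e j := by
      have key : ∀ z ∈ (I ^ 2) • (⊤ : Submodule A M), ∃ y : Fin n → M,
          (∀ i, y i ∈ I • (⊤ : Submodule A M)) ∧ ∑ i, x i • y i = z := by
        intro z hz
        rw [pow_two, mul_smul] at hz
        refine Submodule.smul_induction_on hz ?_ ?_
        · intro r hr w hw
          obtain ⟨d, rfl⟩ := Ideal.mem_span_range_iff_exists_fun.1 hr
          refine ⟨fun i => d i • w, fun i => Submodule.smul_mem _ _ hw, ?_⟩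
          rw [Finset.sum_smul]
          refine Finset.sum_congr rfl fun i _ => ?_
          module
        · rintro _ _ ⟨y, hy, rfl⟩ ⟨y', hy', rfl⟩
          refine ⟨fun i => y i + y' i, fun i => Submodule.add_mem _ (hy i) (hy' i), ?_⟩
          simp only [smul_add, Finset.sum_add_distrib]
      exact key _ ha
    obtain ⟨y, hyI, hys⟩ := hy
    have h1 : ∀ i, (∑ j, c j i • e j) - y i ∈ I • (⊤ : Submodule A M) := by
      apply hind
      simp only [smul_sub, Finset.sum_sub_distrib]
      rw [hys, sub_eq_zero]
      simp only [Finset.smul_sum]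
      rw [Finset.sum_comm]
      refine Finset.sum_congr rfl fun j _ => ?_
      rw [← hc j, Finset.sum_smul]
      refine Finset.sum_congr rfl fun i _ => ?_
      module
    intro j
    rw [← hc j, pow_two]
    refine Ideal.sum_mem _ fun i _ => Ideal.mul_mem_mul ?_ (hxI i)
    refine step1 (fun j => c j i) ?_ j
    have := Submodule.add_mem _ (h1 i) (hyI i)
    simpa using this
  let e' : ι → M ⧸ ((I ^ 2) • ⊤ : Submodule A M) := fun j => Submodule.Quotient.mk (e j)
  have hli : LinearIndependent (A ⧸ (I ^ 2)) e' := by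
    rw [Fintype.linearIndependent_iff]
    intro g hg j
    choose a ha using fun j => Ideal.Quotient.mk_surjective (g j)
    rw [← ha j, Ideal.Quotient.eq_zero_iff_mem]
    apply step2 a
    rw [← Submodule.Quotient.mk_eq_zero, ← hg, ← Submodule.mkQ_apply, map_sum]
    refine Finset.sum_congr rfl fun j _ => ?_
    rw [← ha j]
    rfl
  have hsp : ⊤ ≤ Submodule.span (A ⧸ (I ^ 2)) (Set.range e') := by
    intro z _
    obtain ⟨z, rfl⟩ := Submodule.Quotient.mk_surjective _ z
    have hz : z ∈ Submodule.span A (Set.range e) := hspan ▸ trivial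
    obtain ⟨a, rfl⟩ := (Submodule.mem_span_range_iff_exists_fun A).1 hz
    rw [← Submodule.mkQ_apply, map_sum]
    refine Submodule.sum_mem _ fun j _ => ?_
    exact Submodule.smul_mem _ (Ideal.Quotient.mk (I ^ 2) (a j))
      (Submodule.subset_span (Set.mem_range_self (f := e') j))
  exact Module.Free.of_basis (Module.Basis.mk hli hsp)

lemma exists_min_gens (A : Type) [CommRing A] [IsLocalRing A]
    (M : Type) [AddCommGroup M] [Module A M] [Module.Finite A M] :
    ∃ (r : ℕ) (e : Fin r → M), Submodule.span A (Set.range e) = ⊤ ∧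
      ∀ b : Fin r → A, ∑ j, b j • e j ∈ maximalIdeal A • (⊤ : Submodule A M) →
        ∀ j, b j ∈ maximalIdeal A := by
  classical
  let P := M ⧸ (maximalIdeal A • ⊤ : Submodule A M)
  letI : Field (A ⧸ maximalIdeal A) := Ideal.Quotient.field _
  have : Module.Finite A P := inferInstance
  have : Module.Finite (A ⧸ maximalIdeal A) P := Module.Finite.of_restrictScalars_finite A _ _
  let bs := Module.finBasis (A ⧸ maximalIdeal A) P
  choose e he using fun j => Submodule.Quotient.mk_surjective _ (bs j)
  refine ⟨_, e, ?_, ?_⟩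
  · apply top_le_iff.1
    refine Submodule.le_of_le_smul_of_le_jacobson_bot (I := maximalIdeal A)
      Module.Finite.fg_top (IsLocalRing.maximalIdeal_le_jacobson _) ?_
    intro z _
    let zq : P := Submodule.Quotient.mk z
    choose a ha using fun j => Ideal.Quotient.mk_surjective (bs.repr zq j)
    have h1 : z - ∑ j, a j • e j ∈ (maximalIdeal A • ⊤ : Submodule A M) := by
      rw [← Submodule.Quotient.mk_eq_zero, Submodule.Quotient.mk_sub, sub_eq_zero]
      change zq = _
      rw [← bs.sum_repr zq, ← Submodule.mkQ_apply, map_sum]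
      refine Finset.sum_congr rfl fun j _ => ?_
      rw [← ha j, ← he j]
      rfl
    rw [Submodule.mem_sup]
    refine ⟨∑ j, a j • e j, ?_, _, h1, by abel⟩
    exact Submodule.sum_mem _ fun j _ => Submodule.smul_mem _ _ (Submodule.subset_span ⟨j, rfl⟩)
  · intro b hb j
    have hli := Fintype.linearIndependent_iff.1 bs.linearIndependent
      (fun j => Ideal.Quotient.mk _ (b j)) (by
        rw [← Submodule.Quotient.mk_eq_zero, ← Submodule.mkQ_apply, map_sum] at hb
        rw [← hb]
        refine Finset.sum_congr rfl fun j _ => ?_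
        rw [← he j]
        rfl) j
    exact Ideal.Quotient.eq_zero_iff_mem.1 hli

/-- If there exists an `M`-independent sequence of length `edim A` in `𝔪`, then `A/I` is a
complete intersection of dimension zero and `M/I²M` is free over `A/I²`, where
`I = (x₁,…,xₙ)`. -/
theorem complete_intersection_of_independent
    {A : Type} [CommRing A] [IsLocalRing A] [IsNoetherianRing A]
    {M : Type} [AddCommGroup M] [Module A M] [Module.Finite A M] [Nontrivial M]
    {n : ℕ} (x : Fin n → A) (hxm : ∀ i, x i ∈ maximalIdeal A)
    (hn : n = edim A)
    (hind : ∀ m : Fin n → M, (∑ i, x i • m i) = 0 →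
      ∀ i, m i ∈ Ideal.span (Set.range x) • (⊤ : Submodule A M)) :
    IsCompleteIntersectionDimZero (A ⧸ Ideal.span (Set.range x)) ∧
    Module.Free (A ⧸ (Ideal.span (Set.range x) ^ 2))
      (M ⧸ ((Ideal.span (Set.range x) ^ 2) • ⊤ : Submodule A M)) := by
  obtain ⟨u, hu⟩ : ∃ u : Fin n → A, Ideal.span (Set.range u) = maximalIdeal A := by
    rw [hn]
    refine Nat.sInf_mem (s := {k : ℕ | ∃ y : Fin k → A,
      Ideal.span (Set.range y) = maximalIdeal A}) ?_
    obtain ⟨k, y, hy⟩ := Submodule.fg_iff_exists_fin_generating_family.1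
      (IsNoetherian.noetherian (maximalIdeal A))
    exact ⟨k, y, hy⟩
  choose U hU using fun i => Ideal.mem_span_range_iff_exists_fun.1 (hu ▸ hxm i)
  have hU' : (Matrix.of U).mulVec u = x := funext hU
  obtain ⟨v, hv⟩ : ∃ v : M, v ∉ maximalIdeal A • (⊤ : Submodule A M) := by
    by_contra hcon
    push Not at hcon
    have : (⊤ : Submodule A M) = ⊥ :=
      Submodule.eq_bot_of_le_smul_of_le_jacobson_bot (maximalIdeal A) ⊤ Module.Finite.fg_top
        (fun z _ => hcon z) (IsLocalRing.maximalIdeal_le_jacobson _)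
    exact top_ne_bot this
  have hΔ : (Matrix.of U).det ∉ Ideal.span (Set.range x) := by
    intro h
    apply hv
    rw [← hu]
    exact main_lemma x u _ hU' hind v (Submodule.smul_mem_smul h trivial)
  obtain ⟨h1, ⟨L, hL⟩, h3⟩ := core x u _ hU' hu hΔ
  obtain ⟨r, e, hspan, hmin⟩ := exists_min_gens A M
  exact ⟨h1, free_aux x u _ hU' hu hind L hL h3 e hspan hmin⟩
end

section
/- Let φ : A → B be a flat local morphism of Noetherian local rings with edim(A) ≥ edim(B), and M a finite B-module that is free as an A-module. Then M is free over B and edim(A) = edim(B). -/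
open IsLocalRing

open TensorProduct

/-- Weak torsion-freeness: a relation among the `X k` has coefficients in the ideal
generated by the `X k`. -/
def WeaklyTorsionFree {n : ℕ} {B : Type} [CommRing B] (X : Fin n → B) (T : Type) [AddCommGroup T] [Module B T] :
    Prop :=
  ∀ u : Fin n → T, ∑ k, X k • u k = 0 → ∀ l, ∃ v : Fin n → T, u l = ∑ k, X k • v k

lemma koszul_aux {n : ℕ} {B T : Type} [CommRing B] [AddCommGroup T] [Module B T] (X : Fin n → B)
    (d : T →ₗ[B] T) (e : Fin n → Module.End B T)
    (hde : ∀ i t, d (e i t) = X i • t - e i (d t)) (w : T) (hw : d w = 0) (l : List (Fin n)) :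
    ∃ g : Fin n → T, (∀ k, k ∉ l → g k = 0) ∧ d ((l.map e).prod w) = ∑ k, X k • g k := by
  induction l with
  | nil => exact ⟨0, by simp, by simp [hw]⟩
  | cons i l ih =>
    obtain ⟨g, hg, h⟩ := ih
    refine ⟨fun k => (if k = i then (l.map e).prod w else 0) - e i (g k), ?_, ?_⟩
    · intro k hk
      simp only [List.mem_cons, not_or] at hk
      simp [hk.1, hg k hk.2]
    · simp [hde, h, smul_sub, Finset.sum_sub_distrib, map_sum]

lemma koszul_step {n : ℕ} {B T : Type} [CommRing B] [AddCommGroup T] [Module B T] (X : Fin n → B)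
    (hT : WeaklyTorsionFree X T)
    (d : T →ₗ[B] T) (hdd : ∀ t, d (d t) = 0) (e : Fin n → Module.End B T)
    (hde : ∀ i t, d (e i t) = X i • t - e i (d t)) (w : T) (hw : d w = 0) (l : List (Fin n))
    (hl : l.Nodup) (h : ∃ (t : T) (v : Fin n → T), (l.map e).prod w = d t + ∑ k, X k • v k) :
    ∃ (t : T) (v : Fin n → T), w = d t + ∑ k, X k • v k := by
  induction l with
  | nil => simpa using h
  | cons i l ih =>
    rw [List.nodup_cons] at hl
    apply ih hl.2
    obtain ⟨t, v, h⟩ := h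
    obtain ⟨g, hg, hg'⟩ := koszul_aux X d e hde w hw l
    have h2 := congrArg d h
    simp only [List.map_cons, List.prod_cons, Module.End.mul_apply, hde, hg', map_add, hdd,
      map_sum, map_smul, zero_add] at h2
    obtain ⟨v', hv'⟩ := hT (fun k => (if k = i then (l.map e).prod w else 0) - e i (g k) - d (v k))
      (by simp [smul_sub, Finset.sum_sub_distrib, h2]) i
    simp only [if_true, hg i hl.1, map_zero, sub_zero] at hv'
    exact ⟨v i, v', by rw [← hv']; abel⟩

lemma edim_le {A : Type} [CommRing A] [IsLocalRing A] {k : ℕ} (y : Fin k → A)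
    (hy : Ideal.span (Set.range y) = maximalIdeal A) : edim A ≤ k :=
  Nat.sInf_le ⟨y, hy⟩

lemma exists_edim (A : Type) [CommRing A] [IsLocalRing A] [IsNoetherianRing A] :
    ∃ y : Fin (edim A) → A, Ideal.span (Set.range y) = maximalIdeal A := by
  apply Nat.sInf_mem (s := {k : ℕ | ∃ y : Fin k → A, Ideal.span (Set.range y) = maximalIdeal A})
  obtain ⟨n, y, hy⟩ := Submodule.fg_iff_exists_fin_generating_family.1
    (IsNoetherian.noetherian (maximalIdeal A))
  exact ⟨n, y, hy⟩

lemma rel_mem {A : Type} [CommRing A] [IsLocalRing A] {n : ℕ} (hn : n = edim A) (x : Fin n → A)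
    (hx : Ideal.span (Set.range x) = maximalIdeal A) (a : Fin n → A) (h : ∑ l, x l * a l = 0)
    (l : Fin n) : a l ∈ maximalIdeal A := by
  by_contra hal
  rw [mem_maximalIdeal, mem_nonunits_iff, not_not] at hal
  obtain _ | n := n
  · exact l.elim0
  have : edim A ≤ n := by
    refine edim_le (x ∘ l.succAbove) ?_
    rw [← hx]
    apply le_antisymm
    · exact Ideal.span_mono (Set.range_comp_subset_range _ _)
    · rw [Ideal.span_le]
      rintro _ ⟨k, rfl⟩
      rcases Fin.eq_self_or_eq_succAbove l k with rfl | ⟨j, rfl⟩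
      · rw [Fin.sum_univ_succAbove _ k] at h
        obtain ⟨u, hu⟩ := hal
        have : x k = - (↑u⁻¹ * ∑ i, x (k.succAbove i) * a (k.succAbove i)) := by
          rw [← neg_eq_of_add_eq_zero_right h, ← hu, mul_neg, neg_neg, mul_comm (x k),
            Units.inv_mul_cancel_left]
        rw [this]
        refine neg_mem (Ideal.mul_mem_left _ _ (Ideal.sum_mem _ fun i _ => ?_))
        exact Ideal.mul_mem_right _ _ (Ideal.subset_span ⟨i, rfl⟩)
      · exact Ideal.subset_span ⟨j, rfl⟩
  omega

lemma mem_span_range {A : Type} [CommRing A] {n : ℕ} (x : Fin n → A) (a : A)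
    (h : a ∈ Ideal.span (Set.range x)) : ∃ b : Fin n → A, a = ∑ k, x k * b k := by
  obtain ⟨c, hc⟩ := Ideal.mem_span_range_iff_exists_fun.1 h
  exact ⟨c, by rw [← hc]; exact Finset.sum_congr rfl fun _ _ => mul_comm _ _⟩

lemma flat_rel {A M : Type} [CommRing A] [IsLocalRing A] [AddCommGroup M] [Module A M]
    [Module.Flat A M] {n : ℕ} (hn : n = edim A) (x : Fin n → A)
    (hx : Ideal.span (Set.range x) = maximalIdeal A) (u : Fin n → M)
    (h : ∑ l, x l • u l = 0) :
    ∃ (s : ℕ) (b : Fin n → Fin n → Fin s → A) (z : Fin s → M),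
      (∀ l, u l = ∑ j, (∑ k, x k * b k l j) • z j) ∧
      ∀ j, ∑ l, x l * (∑ k, x k * b k l j) = 0 := by
  obtain ⟨s, a, z, h1, h2⟩ := Module.Flat.isTrivialRelation_of_sum_smul_eq_zero h
  have : ∀ l j, ∃ b : Fin n → A, a l j = ∑ k, x k * b k := fun l j =>
    mem_span_range x _ (hx ▸ rel_mem hn x hx (fun l => a l j) (h2 j) l)
  choose b hb using this
  refine ⟨s, fun k l j => b l j k, z, fun l => ?_, fun j => ?_⟩
  · rw [h1 l]; simp only [hb]
  · rw [← h2 j]; simp only [hb]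

lemma wtf_flat {A B M : Type} [CommRing A] [IsLocalRing A] [CommRing B] [Algebra A B]
    [AddCommGroup M] [Module A M] [Module B M] [IsScalarTower A B M]
    [Module.Flat A M] {n : ℕ} (hn : n = edim A) (x : Fin n → A)
    (hx : Ideal.span (Set.range x) = maximalIdeal A) :
    WeaklyTorsionFree (fun k => algebraMap A B (x k)) M := by
  intro u hu l
  simp only [algebraMap_smul] at hu ⊢
  obtain ⟨s, b, z, h1, -⟩ := flat_rel hn x hx u hu
  refine ⟨fun k => ∑ j, b k l j • z j, ?_⟩
  rw [h1 l]
  simp only [Finset.sum_smul, Finset.smul_sum, mul_smul]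
  exact Finset.sum_comm

lemma WeaklyTorsionFree.tensor {n : ℕ} {B : Type} [CommRing B] {X : Fin n → B} {M E : Type} [AddCommGroup M]
    [Module B M] (hM : WeaklyTorsionFree X M) [AddCommGroup E] [Module B E] {ι : Type} [Finite ι]
    [DecidableEq ι]
    (b : Module.Basis ι B E) : WeaklyTorsionFree X (E ⊗[B] M) := by
  have := Fintype.ofFinite ι
  intro u hu l
  let φ : E ⊗[B] M ≃ₗ[B] (ι → M) :=
    (TensorProduct.equivFinsuppOfBasisLeft b).trans (Finsupp.linearEquivFunOnFinite B M ι)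
  have h1 : ∀ i, ∃ v : Fin n → M, φ (u l) i = ∑ k, X k • v k := by
    intro i
    refine hM (fun k => φ (u k) i) ?_ l
    have := congrFun (congrArg φ hu) i
    simpa only [map_sum, map_smul, Finset.sum_apply, Pi.smul_apply, map_zero, Pi.zero_apply]
      using this
  choose v hv using h1
  refine ⟨fun k => φ.symm (fun i => v i k), φ.injective ?_⟩
  ext i
  simp [hv]

section ext
variable {B : Type} [CommRing B] {m : ℕ}

abbrev EA (B : Type) [CommRing B] (m : ℕ) := ExteriorAlgebra B (Fin m → B)

/-- Koszul differential -/
noncomputable def kd (y : Module.Dual B (Fin m → B)) : EA B m →ₗ[B] EA B m :=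
  CliffordAlgebra.contractLeft (Q := (0 : QuadraticForm B (Fin m → B))) y

/-- degree one part -/
noncomputable def kp : EA B m →ₗ[B] (Fin m → B) :=
  (TrivSqZeroExt.sndHom B (Fin m → B)).comp (ExteriorAlgebra.toTrivSqZeroExt).toLinearMap

/-- degree zero part -/
noncomputable def ka : EA B m →ₗ[B] B :=
  (TrivSqZeroExt.fstHom B B (Fin m → B)).toLinearMap.comp
    (ExteriorAlgebra.toTrivSqZeroExt).toLinearMap

lemma kd_ι_mul (y : Module.Dual B (Fin m → B)) (v : Fin m → B) (a : EA B m) :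
    kd y (ExteriorAlgebra.ι B v * a) = y v • a - ExteriorAlgebra.ι B v * kd y a :=
  CliffordAlgebra.contractLeft_ι_mul _ _ _

lemma kd_kd (y : Module.Dual B (Fin m → B)) (a : EA B m) : kd y (kd y a) = 0 :=
  CliffordAlgebra.contractLeft_contractLeft _ _

lemma kd_ι (y : Module.Dual B (Fin m → B)) (v : Fin m → B) :
    kd y (ExteriorAlgebra.ι B v) = algebraMap B _ (y v) :=
  CliffordAlgebra.contractLeft_ι _ _ _

lemma kd_algebraMap (y : Module.Dual B (Fin m → B)) (r : B) :
    kd y (algebraMap B _ r) = 0 :=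
  CliffordAlgebra.contractLeft_algebraMap _ _ _

lemma kp_ι (v : Fin m → B) : kp (ExteriorAlgebra.ι B v) = v := by
  simp [kp]

lemma ka_one : ka (1 : EA B m) = 1 := by
  simp [ka]

lemma ka_kd (y : Module.Dual B (Fin m → B)) (a : EA B m) : ka (kd y a) = y (kp a) := by
  induction a using CliffordAlgebra.left_induction with
  | algebraMap r =>
    have := kd_algebraMap y r
    erw [this]
    have h2 : kp (algebraMap B (EA B m) r) = 0 := by
      simp [kp, TrivSqZeroExt.algebraMap_eq_inl]
    erw [h2]
    simp
  | add a b ha hb => rw [map_add, map_add, ha, hb, map_add, map_add]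
  | ι_mul a v ha =>
    have h1 := kd_ι_mul y v a
    have h2 : kp (ExteriorAlgebra.ι B v * a) = ka a • v := by
      simp [kp, ka]
    have h3 : ka (ExteriorAlgebra.ι B v * kd y a) = 0 := by
      simp [ka]
    erw [h1, h2, map_sub, h3]
    simp [mul_comm]

lemma prod_ι_eq_zero (l : List (Fin m → B)) (hl : m < l.length) :
    (l.map (ExteriorAlgebra.ι B)).prod = 0 := by
  have h0 : ExteriorAlgebra.ιMulti B l.length (M := Fin m → B) = 0 := by
    refine Module.Basis.ext_alternating (Pi.basisFun B (Fin m)) fun v hv => ?_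
    have := Fintype.card_le_of_injective v hv
    simp at this
    omega
  have h1 := congrArg (fun f => f l.get) h0
  simp only [ExteriorAlgebra.ιMulti_apply, AlternatingMap.zero_apply] at h1
  rw [← h1]
  congr 1
  conv_lhs => rw [← List.ofFn_get l]
  rw [List.map_ofFn]
  rfl

variable {M : Type} [AddCommGroup M] [Module B M]

lemma koszul_main {n : ℕ} (X : Fin n → B) (hM : WeaklyTorsionFree X M) (y : Module.Dual B (Fin m → B))
    (f : Fin n → (Fin m → B)) (hf : ∀ i, y (f i) = X i) (w : EA B m ⊗[B] M)
    (hw : (kd y).rTensor M w = 0)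
    (h : (LinearMap.mulLeft B (((List.finRange n).map f).map (ExteriorAlgebra.ι B)).prod).rTensor M
      w = 0) :
    ∃ (t : EA B m ⊗[B] M) (v : Fin n → EA B m ⊗[B] M),
      w = (kd y).rTensor M t + ∑ k, X k • v k := by
  let e : Fin n → Module.End B (EA B m ⊗[B] M) := fun i =>
    (LinearMap.mulLeft B (ExteriorAlgebra.ι B (f i))).rTensor M
  have hprod : ∀ l : List (Fin n), (l.map e).prod =
      (LinearMap.mulLeft B ((l.map f).map (ExteriorAlgebra.ι B)).prod).rTensor M := by
    intro l
    induction l with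
    | nil =>
      simp only [List.map_nil, List.prod_nil, LinearMap.mulLeft_one, LinearMap.rTensor_id]
      rfl
    | cons i l ih =>
      simp only [List.map_cons, List.prod_cons, LinearMap.mulLeft_mul, LinearMap.rTensor_comp] at ih ⊢
      rw [ih]
      rfl
  refine koszul_step X (hM.tensor (Pi.basisFun B (Fin m)).ExteriorAlgebra)
    ((kd y).rTensor M) ?_ e ?_ w hw (List.finRange n) (List.nodup_finRange n) ⟨0, 0, ?_⟩
  · intro t
    rw [← LinearMap.comp_apply, ← LinearMap.rTensor_comp]
    have : (kd y).comp (kd y) = 0 := LinearMap.ext (kd_kd y)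
    rw [this]; simp
  · intro i t
    induction t with
    | zero => simp
    | add a b ha hb => simp only [map_add, ha, hb, smul_add]; abel
    | tmul a z =>
      simp [e, kd_ι_mul, hf, TensorProduct.sub_tmul, TensorProduct.smul_tmul']
  · rw [hprod, h]; simp
end ext

section final
variable {A B M : Type} [CommRing A] [IsLocalRing A]
    [CommRing B] [Algebra A B]
    [AddCommGroup M] [Module B M] [Module A M] [IsScalarTower A B M] [Module.Flat A M]

/-- A map `B^m → B` and the induced map `B^m ⊗ M → M`. -/
noncomputable def yM {m : ℕ} (y : Module.Dual B (Fin m → B)) (M : Type) [AddCommGroup M]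
    [Module B M] : (Fin m → B) ⊗[B] M →ₗ[B] M :=
  (TensorProduct.lid B M).toLinearMap.comp (LinearMap.rTensor M y)

lemma yM_tmul {m : ℕ} (y : Module.Dual B (Fin m → B)) (r : Fin m → B) (z : M) :
    yM y M (r ⊗ₜ z) = y r • z := by
  simp [yM]

lemma tmul_mem {m : ℕ} (y : Module.Dual B (Fin m → B)) (r : Fin m → B) (hr : y r = 0) (z : M) :
    r ⊗ₜ[B] z ∈ LinearMap.range ((LinearMap.ker y).subtype.rTensor M) :=
  ⟨(⟨r, hr⟩ : LinearMap.ker y) ⊗ₜ z, by simp⟩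

lemma key {m n : ℕ} (hn : n = edim A) (hmn : m ≤ n) (x : Fin n → A)
    (hx : Ideal.span (Set.range x) = maximalIdeal A) (y : Module.Dual B (Fin m → B))
    (f : Fin n → (Fin m → B)) (hf : ∀ i, y (f i) = algebraMap A B (x i))
    (w : (Fin m → B) ⊗[B] M) (hw : yM y M w = 0) :
    ∃ v : Fin n → (Fin m → B) ⊗[B] M, (∀ l, yM y M (v l) = 0) ∧
      w - ∑ l, algebraMap A B (x l) • v l ∈
        LinearMap.range ((LinearMap.ker y).subtype.rTensor M) := by
  have hM : WeaklyTorsionFree (fun k => algebraMap A B (x k)) M := wtf_flat hn x hx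
  obtain ⟨t, v, htv⟩ := koszul_main (fun k => algebraMap A B (x k)) hM y f hf
    ((ExteriorAlgebra.ι B).rTensor M w) (by
      have : (kd y).comp (ExteriorAlgebra.ι B) = (Algebra.linearMap B (EA B m)).comp y :=
        LinearMap.ext fun v => kd_ι y v
      rw [← LinearMap.comp_apply, ← LinearMap.rTensor_comp, this, LinearMap.rTensor_comp,
        LinearMap.comp_apply]
      have : LinearMap.rTensor M y w = 0 := by
        apply (TensorProduct.lid B M).injective
        simpa [yM] using hw
      rw [this, map_zero]) (by
      rw [← LinearMap.comp_apply, ← LinearMap.rTensor_comp]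
      convert LinearMap.zero_apply w
      convert LinearMap.rTensor_zero M
      refine LinearMap.ext fun r => ?_
      have := prod_ι_eq_zero (((List.finRange n).map f) ++ [r]) (by simp; omega)
      simpa using this)
  have hS : ∀ t : EA B m ⊗[B] M, kp.rTensor M ((kd y).rTensor M t) ∈
      LinearMap.range ((LinearMap.ker y).subtype.rTensor M) := by
    intro t
    induction t with
    | zero => simp
    | add a b ha hb => rw [map_add, map_add]; exact add_mem ha hb
    | tmul a z =>
      rw [LinearMap.rTensor_tmul, LinearMap.rTensor_tmul]
      apply tmul_mem
      rw [← ka_kd, kd_kd, map_zero]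
  have hSy : ∀ t ∈ LinearMap.range ((LinearMap.ker y).subtype.rTensor M), yM y M t = 0 := by
    rintro _ ⟨t, rfl⟩
    induction t with
    | zero => simp
    | add a b ha hb => rw [map_add, map_add, ha, hb, add_zero]
    | tmul a z => rw [LinearMap.rTensor_tmul, yM_tmul]; simp
  have h1 : w = kp.rTensor M ((kd y).rTensor M t) +
      ∑ k, algebraMap A B (x k) • kp.rTensor M (v k) := by
    have h2 := congrArg (kp.rTensor M) htv
    rw [← LinearMap.comp_apply, ← LinearMap.rTensor_comp] at h2
    have : kp.comp (ExteriorAlgebra.ι B) = (LinearMap.id : (Fin m → B) →ₗ[B] _) :=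
      LinearMap.ext kp_ι
    rw [this, LinearMap.rTensor_id, LinearMap.id_apply, map_add, map_sum] at h2
    simpa only [map_smul] using h2
  have h3 : ∑ k, x k • yM y M (kp.rTensor M (v k)) = 0 := by
    have h2 := congrArg (yM y M) h1
    rw [hw, map_add, hSy _ (hS t), zero_add, map_sum] at h2
    rw [h2]
    refine Finset.sum_congr rfl fun k _ => ?_
    rw [map_smul, algebraMap_smul]
  obtain ⟨s, b, z, hb1, hb2⟩ := flat_rel hn x hx _ h3
  let q : Fin s → Fin n → (Fin m → B) := fun j l => ∑ k, algebraMap A B (b k l j) • f k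
  have hq : ∀ j l, y (q j l) = algebraMap A B (∑ k, x k * b k l j) := by
    intro j l
    simp only [q, map_sum, map_smul, hf, smul_eq_mul, map_mul, mul_comm]
  refine ⟨fun l => kp.rTensor M (v l) - ∑ j, q j l ⊗ₜ z j, fun l => ?_, ?_⟩
  · rw [map_sub, hb1 l, map_sum, sub_eq_zero]
    refine Finset.sum_congr rfl fun j _ => ?_
    rw [yM_tmul, hq, algebraMap_smul]
  · have h4 : w - ∑ l, algebraMap A B (x l) • (kp.rTensor M (v l) - ∑ j, q j l ⊗ₜ z j) =
        kp.rTensor M ((kd y).rTensor M t) +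
          ∑ j, (∑ l, algebraMap A B (x l) • q j l) ⊗ₜ[B] z j := by
      have h5 : ∑ j, (∑ l, algebraMap A B (x l) • q j l) ⊗ₜ[B] z j =
          ∑ l, algebraMap A B (x l) • ∑ j, q j l ⊗ₜ[B] z j := by
        simp only [TensorProduct.sum_tmul, Finset.smul_sum, TensorProduct.smul_tmul']
        exact Finset.sum_comm
      rw [h5]
      conv_lhs => rw [h1]
      simp only [smul_sub, Finset.sum_sub_distrib]
      abel
    rw [h4]
    refine add_mem (hS t) (Submodule.sum_mem _ fun j _ => tmul_mem _ _ ?_ _)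
    rw [map_sum]
    simp only [map_smul, hq, smul_eq_mul, ← map_mul]
    rw [← map_sum, hb2, map_zero]

lemma key0 {m n : ℕ} (hn : n = edim A) (hmn : m < n) (x : Fin n → A)
    (hx : Ideal.span (Set.range x) = maximalIdeal A) (y : Module.Dual B (Fin m → B))
    (f : Fin n → (Fin m → B)) (hf : ∀ i, y (f i) = algebraMap A B (x i))
    (J : Ideal B) (hxJ : ∀ i, algebraMap A B (x i) ∈ J) (hyJ : ∀ r, y r ∈ J)
    (z : M) : z ∈ J • (⊤ : Submodule B M) := by
  have hM : WeaklyTorsionFree (fun k => algebraMap A B (x k)) M := wtf_flat hn x hx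
  obtain ⟨t, v, htv⟩ := koszul_main (fun k => algebraMap A B (x k)) hM y f hf
    ((1 : EA B m) ⊗ₜ z) (by
      have := kd_algebraMap y (1 : B)
      rw [map_one] at this
      rw [LinearMap.rTensor_tmul, this, TensorProduct.zero_tmul]) (by
      rw [prod_ι_eq_zero _ (by simpa using hmn)]
      simp)
  have h2 := congrArg ((TensorProduct.lid B M).toLinearMap.comp (ka.rTensor M)) htv
  rw [map_add, map_sum] at h2
  have h3 : z = (TensorProduct.lid B M).toLinearMap.comp (ka.rTensor M) ((1 : EA B m) ⊗ₜ z) := by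
    simp [ka_one]
  rw [h2] at h3
  rw [h3]
  refine add_mem ?_ (Submodule.sum_mem _ fun k _ => ?_)
  · clear h2 h3 htv v
    induction t with
    | zero => simp
    | add a b ha hb => rw [map_add, map_add]; exact add_mem ha hb
    | tmul a z =>
      simp only [LinearMap.rTensor_tmul, LinearMap.comp_apply, LinearEquiv.coe_coe,
        TensorProduct.lid_tmul, ka_kd]
      exact Submodule.smul_mem_smul (hyJ _) trivial
  · rw [map_smul]
    exact Submodule.smul_mem_smul (hxJ _) trivial
end final

/-- De Smit's conjecture (flat case): if `A → B` is a flat local morphism of Noetherian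
local rings with `edim A ≥ edim B` and `M` is a finite `B`-module which is free over `A`,
then `M` is free over `B` and `edim A = edim B`. -/
theorem desmit_flat
    {A B M : Type} [CommRing A] [IsLocalRing A] [IsNoetherianRing A]
    [CommRing B] [IsLocalRing B] [IsNoetherianRing B]
    [Algebra A B] [IsLocalHom (algebraMap A B)] [Module.Flat A B]
    [AddCommGroup M] [Module B M] [Module A M] [IsScalarTower A B M]
    [Module.Finite B M] [Module.Free A M]
    (h : edim B ≤ edim A) :
    Module.Free B M ∧ edim A = edim B := by
  obtain ⟨x, hx⟩ := exists_edim A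
  obtain ⟨y₀, hy₀⟩ := exists_edim B
  let y : Module.Dual B (Fin (edim B) → B) := Fintype.linearCombination B y₀
  have hyr : LinearMap.range y = maximalIdeal B := by
    rw [Fintype.range_linearCombination]; exact hy₀
  have hyJ : ∀ r, y r ∈ maximalIdeal B := fun r => hyr ▸ LinearMap.mem_range_self y r
  have hxJ : ∀ i, algebraMap A B (x i) ∈ maximalIdeal B := by
    intro i
    have h1 : x i ∈ maximalIdeal A := hx ▸ Ideal.subset_span ⟨i, rfl⟩
    rw [mem_maximalIdeal, mem_nonunits_iff] at h1 ⊢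
    exact fun h2 => h1 (isUnit_of_map_unit (algebraMap A B) _ h2)
  have hf : ∀ i, ∃ r, y r = algebraMap A B (x i) := by
    intro i
    have := hxJ i
    rw [← hyr] at this
    exact this
  choose f hf using hf
  refine ⟨?_, le_antisymm ?_ h⟩
  · have hfl : Module.Flat A M := inferInstance
    have hN : LinearMap.ker (yM y M) ≤
        LinearMap.range ((LinearMap.ker y).subtype.rTensor M) := by
      refine Submodule.le_of_le_smul_of_le_jacobson_bot (I := maximalIdeal B)
        (IsNoetherian.noetherian _) (maximalIdeal_le_jacobson _) ?_
      intro w hw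
      obtain ⟨v, hv, hwv⟩ := key rfl h x hx y f hf w hw
      rw [← sub_add_cancel w (∑ l, algebraMap A B (x l) • v l)]
      refine Submodule.add_mem_sup hwv (Submodule.sum_mem _ fun l _ => ?_)
      exact Submodule.smul_mem_smul (hxJ l) (hv l)
    have : Module.FinitePresentation B M := Module.finitePresentation_of_finite B M
    apply Module.free_of_maximalIdeal_rTensor_injective
    rw [injective_iff_map_eq_zero]
    intro t ht
    let y' : (Fin (edim B) → B) →ₗ[B] maximalIdeal B := y.codRestrict (maximalIdeal B) hyJ
    have hy' : Function.Surjective y' := by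
      rintro ⟨b, hb⟩
      have hb' := hb
      rw [← hyr] at hb'
      obtain ⟨r, hr⟩ := hb'
      exact ⟨r, Subtype.ext hr⟩
    obtain ⟨w, rfl⟩ := LinearMap.rTensor_surjective M hy' t
    have hw : w ∈ LinearMap.ker (yM y M) := by
      rw [← LinearMap.comp_apply, ← LinearMap.rTensor_comp] at ht
      have : (maximalIdeal B).subtype.comp y' = y := rfl
      erw [this] at ht
      simp [yM, ht]
    obtain ⟨s, rfl⟩ := hN hw
    rw [← LinearMap.comp_apply, ← LinearMap.rTensor_comp]
    have : y'.comp (LinearMap.ker y).subtype = 0 := by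
      ext r
      simp [y']
    rw [this]
    simp
  · by_contra hlt
    have := key0 (M := B) rfl (not_le.1 hlt) x hx y f hf (maximalIdeal B) hxJ hyJ 1
    rw [Ideal.smul_eq_mul, Ideal.mul_top] at this
    exact (maximalIdeal.isMaximal B).ne_top ((Ideal.eq_top_iff_one _).2 this)
end
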